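/- arXiv:2209.09523 — 2 statements merged into one kernel-verified Lean document; each statement's English description precedes it below -/
import Mathlib

section
/- Let H be a complex separable Hilbert space, let ℒ = {0, M, N, H} be a subspace lattice with two atoms on H, and let ℬ be a faithful complex Banach algebra satisfying ℬ² = ℬ. Then every surjective continuous linear map φ : Alg ℒ → ℬ which preserves zero products (xy = 0 implies φ(x)φ(y) = 0) is a weighted homomorphism. -/
open scoped Topology

/-!
If `p` is idempotent, then `x * p * (y - p * y) = 0` and `(x - x * p) * (p * y) = 0`, so a
zero-product preserving `φ` satisfies `φ (x * p) * φ y = φ x * φ (p * y)`. The elements `t` for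
which `φ (x * t) * φ y = φ x * φ (t * y)` holds identically form a closed subalgebra. If it is the
whole algebra, then `φ x * φ y = φ 1 * φ (x * y)`, the element `φ 1` is central, and multiplication
by `φ 1` is the required centralizer. So it suffices that `Alg ℒ` is the closed algebra generated by
its idempotents.

The position of `M` relative to `N` is encoded by the compression `R : M → Nᗮ` of the orthogonal
projection onto `Nᗮ`, which is injective with dense range. Replacing each spectral value of `|R|`
in `(2⁻ᵏ⁻¹, 2⁻ᵏ]` by `2⁻ᵏ` changes `R` by an invertible factor only, so `R` may be taken to be a
diagonal operator `D` with weights `2^{-n i}`, and `M` to consist of the pairs `(U x, D x)`, where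
`‖x‖ ≤ ‖U x‖ + ‖D x‖`. On the coordinates with `n i ≥ 1` one has `‖D x‖ ≤ ‖x‖ / 2`, so `U` is
bounded below there and a change of variables turns this part of `M` into the graph of `D`, with
`N = K × 0`. The coordinates with `n i = 0` are complementary to `N` and split off, contributing a
full operator algebra.

In the graph model an element of the algebra is an intertwining pair `D * E = F * D` plus a block
that vanishes on `M`. If the weights are strictly decreasing, triangular truncation is bounded on
intertwining pairs, since the entries of `E` above and of `F` below the diagonal decay
geometrically. A strictly triangular pair factors through a shift, and a shift is off-diagonal for
the decomposition into even and odd coordinates, hence a combination of differences of idempotents.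
Repeated weights are paired up and exchanged by an involution, so that at most one copy of each
weight is left over.
-/

open scoped lp ENNReal InnerProductSpace

section IdempotentClosure

variable {R A : Type*} [CommRing R] [Ring A] [Algebra R A] [TopologicalSpace A]
  [IsTopologicalRing A] {S : Subalgebra R A}

/-- The closed subalgebra generated by the idempotents of `S`; the closure is taken in the ambient
algebra `A`. -/
def idempotentClosure (S : Subalgebra R A) : Subalgebra R A :=
  (Algebra.adjoin R {e | e ∈ S ∧ IsIdempotentElem e}).topologicalClosure

/-- `S` is topologically generated by its idempotents. -/
def IdempotentGenerated (S : Subalgebra R A) : Prop :=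
  S ≤ idempotentClosure S

theorem isClosed_idempotentClosure (S : Subalgebra R A) :
    IsClosed (idempotentClosure S : Set A) :=
  Subalgebra.isClosed_topologicalClosure _

theorem mem_idempotentClosure_of_isIdempotentElem {e : A} (heS : e ∈ S)
    (he : IsIdempotentElem e) : e ∈ idempotentClosure S :=
  Subalgebra.le_topologicalClosure _ (Algebra.subset_adjoin ⟨heS, he⟩)

theorem offDiagonal_mem_idempotentClosure {q a : A} (hqS : q ∈ S) (hq : IsIdempotentElem q)
    (ha : a ∈ S) : q * a * (1 - q) ∈ idempotentClosure S := by
  have hcorner : q * a * (1 - q) ∈ S := mul_mem (mul_mem hqS ha) (sub_mem (one_mem S) hqS)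
  have hidem : IsIdempotentElem (q + q * a * (1 - q)) := by
    have h₁ : (1 - q) * q = 0 := hq.one_sub_mul_self
    have h₂ : q * (q * a * (1 - q)) = q * a * (1 - q) := by
      rw [mul_assoc q a, ← mul_assoc q q, hq.eq]
    have h₃ : q * a * (1 - q) * q = 0 := by rw [mul_assoc, h₁, mul_zero]
    rw [IsIdempotentElem, add_mul, mul_add, hq.eq, h₂, mul_add, h₃, ← mul_assoc, ← mul_assoc, h₃]
    simp
  have h := sub_mem (mem_idempotentClosure_of_isIdempotentElem (add_mem hqS hcorner) hidem)
    (mem_idempotentClosure_of_isIdempotentElem hqS hq)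
  rwa [add_sub_cancel_left] at h

/-- The largest two-sided ideal of `S` contained in `idempotentClosure S`. -/
def idempotentCore (S : Subalgebra R A) : Submodule R A where
  carrier := {t | t ∈ S ∧ ∀ x ∈ S, ∀ y ∈ S, x * t * y ∈ idempotentClosure S}
  zero_mem' := ⟨zero_mem S, fun x _ y _ => by simp [zero_mem]⟩
  add_mem' := fun ⟨ha, ha'⟩ ⟨hb, hb'⟩ => ⟨add_mem ha hb, fun x hx y hy => by
    rw [mul_add, add_mul]; exact add_mem (ha' x hx y hy) (hb' x hx y hy)⟩
  smul_mem' := fun c _ ⟨ha, ha'⟩ => ⟨S.smul_mem ha c, fun x hx y hy => by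
    rw [mul_smul_comm, smul_mul_assoc]; exact Subalgebra.smul_mem _ (ha' x hx y hy) c⟩

theorem idempotentCore_le_idempotentClosure {t : A} (ht : t ∈ idempotentCore S) :
    t ∈ idempotentClosure S := by
  simpa using ht.2 1 (one_mem S) 1 (one_mem S)

theorem mul_mem_idempotentCore_left {s t : A} (hs : s ∈ S) (ht : t ∈ idempotentCore S) :
    s * t ∈ idempotentCore S :=
  ⟨mul_mem hs ht.1, fun x hx y hy => by
    rw [← mul_assoc]; exact ht.2 _ (mul_mem hx hs) y hy⟩

theorem mul_mem_idempotentCore_right {s t : A} (ht : t ∈ idempotentCore S) (hs : s ∈ S) :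
    t * s ∈ idempotentCore S :=
  ⟨mul_mem ht.1 hs, fun x hx y hy => by
    rw [← mul_assoc, mul_assoc (x * t)]; exact ht.2 x hx _ (mul_mem hs hy)⟩

theorem idempotentGenerated_of_one_mem_idempotentCore (h : 1 ∈ idempotentCore S) :
    IdempotentGenerated S := fun s hs => by
  simpa using h.2 s hs 1 (one_mem S)

theorem offDiagonal_mem_idempotentCore {q a : A} (hqS : q ∈ S) (hq : IsIdempotentElem q)
    (ha : a ∈ S) : q * a * (1 - q) ∈ idempotentCore S := by
  have hpS : 1 - q ∈ S := sub_mem (one_mem S) hqS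
  have off : ∀ b ∈ S, q * b * (1 - q) ∈ idempotentClosure S := fun b =>
    offDiagonal_mem_idempotentClosure hqS hq
  have off' : ∀ b ∈ S, (1 - q) * b * q ∈ idempotentClosure S := fun b hb => by
    simpa using offDiagonal_mem_idempotentClosure hpS hq.one_sub hb
  have qq : ∀ b, q * (q * b) = q * b := fun b => by rw [← mul_assoc, hq.eq]
  have pp : ∀ b, (1 - q) * ((1 - q) * b) = (1 - q) * b := fun b => by
    rw [← mul_assoc, hq.one_sub.eq]
  refine ⟨mul_mem (mul_mem hqS ha) hpS, fun x hx y hy => ?_⟩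
  have hxa : x * q * a ∈ S := mul_mem (mul_mem hx hqS) ha
  have hay : a * (1 - q) * y ∈ S := mul_mem (mul_mem ha hpS) hy
  have hxay : x * q * a * (1 - q) * y ∈ S := mul_mem (mul_mem hxa hpS) hy
  have left : q * x * (q * a * (1 - q)) * y ∈ idempotentClosure S := by
    have split : q * x * (q * a * (1 - q)) * y
        = q * (x * q * a * (1 - q) * y) * (1 - q)
          + q * (x * q * a) * (1 - q) * ((1 - q) * y * q) := by
      simp only [mul_assoc, pp]
      noncomm_ring
    rw [split]
    exact add_mem (off _ hxay) (mul_mem (off _ hxa) (off' _ hy))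
  have right : (1 - q) * x * (q * a * (1 - q)) * y ∈ idempotentClosure S := by
    have split : (1 - q) * x * (q * a * (1 - q)) * y
        = (1 - q) * x * q * (q * (a * (1 - q) * y) * (1 - q))
          + (1 - q) * (x * q * a * (1 - q) * y) * q := by
      simp only [mul_assoc, qq]
      noncomm_ring
    rw [split]
    exact add_mem (mul_mem (off' _ hx) (off _ hay)) (off' _ hxay)
  have := add_mem left right
  rwa [← add_mul, ← add_mul, ← add_mul, add_sub_cancel, one_mul] at this

theorem mem_idempotentCore_of_mul_eq_one_sub_mul {q c : A} (hqS : q ∈ S)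
    (hq : IsIdempotentElem q) (hc : c ∈ S) (h : c * q = (1 - q) * c) : c ∈ idempotentCore S := by
  have h₁ := offDiagonal_mem_idempotentCore hqS hq hc
  have h₂ := offDiagonal_mem_idempotentCore (sub_mem (one_mem S) hqS) hq.one_sub hc
  have hqc : q * c * (1 - q) = q * c := by
    rw [mul_sub, mul_one, mul_assoc, h, ← mul_assoc, hq.mul_one_sub_self, zero_mul, sub_zero]
  have hpc : (1 - q) * c * (1 - (1 - q)) = (1 - q) * c := by
    rw [sub_sub_cancel, mul_assoc, h, ← mul_assoc, hq.one_sub.eq]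
  rw [hqc] at h₁
  rw [hpc] at h₂
  simpa [sub_mul] using add_mem h₁ h₂

theorem idempotentGenerated_of_involution {q s : A} (hqS : q ∈ S) (hq : IsIdempotentElem q)
    (hsS : s ∈ S) (hs : s * s = 1) (hsq : s * q = (1 - q) * s) : IdempotentGenerated S := by
  have hcore := mem_idempotentCore_of_mul_eq_one_sub_mul hqS hq hsS hsq
  exact idempotentGenerated_of_one_mem_idempotentCore (hs ▸ mul_mem_idempotentCore_left hsS hcore)

theorem mem_idempotentClosure_of_corners {q t : A} (hqS : q ∈ S) (hq : IsIdempotentElem q)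
    (ht : t ∈ S) (h₁ : q * t * q ∈ idempotentClosure S)
    (h₂ : (1 - q) * t * (1 - q) ∈ idempotentClosure S) : t ∈ idempotentClosure S := by
  have h₃ := offDiagonal_mem_idempotentClosure hqS hq ht
  have h₄ := offDiagonal_mem_idempotentClosure (sub_mem (one_mem S) hqS) hq.one_sub ht
  rw [sub_sub_cancel] at h₄
  have := add_mem (add_mem h₁ h₃) (add_mem h₄ h₂)
  rwa [← mul_add, ← mul_add, add_sub_cancel, mul_one, mul_one, ← add_mul, add_sub_cancel,
    one_mul] at this

theorem IdempotentGenerated.map_mem_idempotentClosure {A₁ : Type*} [Ring A₁] [Algebra R A₁]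
    [TopologicalSpace A₁] [IsTopologicalRing A₁] {S₁ : Subalgebra R A₁}
    (h₁ : IdempotentGenerated S₁) (f : A₁ →L[R] A) (hfS : ∀ x ∈ S₁, f x ∈ S)
    (hf : ∀ x ∈ S₁, ∀ y ∈ S₁, f (x * y) = f x * f y) {x : A₁} (hx : x ∈ S₁) :
    f x ∈ idempotentClosure S := by
  have idem : ∀ e ∈ S₁, IsIdempotentElem e → f e ∈ idempotentClosure S := fun e he hee =>
    mem_idempotentClosure_of_isIdempotentElem (hfS e he)
      (by rw [IsIdempotentElem, ← hf e he e he, hee.eq])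
  have hle : Algebra.adjoin R {e | e ∈ S₁ ∧ IsIdempotentElem e} ≤ S₁ :=
    Algebra.adjoin_le fun _ he => he.1
  have hadjoin : (Algebra.adjoin R {e | e ∈ S₁ ∧ IsIdempotentElem e} : Set A₁)
      ⊆ f ⁻¹' idempotentClosure S := by
    intro a ha
    induction ha using Algebra.adjoin_induction with
    | mem e he => exact idem e he.1 he.2
    | algebraMap c =>
      rw [Set.mem_preimage, Algebra.algebraMap_eq_smul_one, map_smul]
      exact Subalgebra.smul_mem _ (idem 1 (one_mem S₁) .one) c
    | add a b _ _ ha hb =>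
      rw [Set.mem_preimage, map_add]
      exact add_mem ha hb
    | mul a b hx hy ha hb =>
      rw [Set.mem_preimage, hf a (hle hx) b (hle hy)]
      exact mul_mem ha hb
  exact closure_minimal hadjoin ((isClosed_idempotentClosure S).preimage f.continuous) (h₁ hx)

end IdempotentClosure

section PairAlg

variable {𝕜 E E₁ E₂ : Type*} [NontriviallyNormedField 𝕜]
  [NormedAddCommGroup E] [NormedSpace 𝕜 E] [NormedAddCommGroup E₁] [NormedSpace 𝕜 E₁]
  [NormedAddCommGroup E₂] [NormedSpace 𝕜 E₂]

/-- The algebra `Alg {0, M, N, E}` of bounded operators leaving `M` and `N` invariant. -/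
def pairAlg (M N : Submodule 𝕜 E) : Subalgebra 𝕜 (E →L[𝕜] E) where
  carrier := {T | (∀ x ∈ M, T x ∈ M) ∧ ∀ x ∈ N, T x ∈ N}
  mul_mem' ha hb := ⟨fun x hx => ha.1 _ (hb.1 x hx), fun x hx => ha.2 _ (hb.2 x hx)⟩
  add_mem' ha hb := ⟨fun x hx => M.add_mem (ha.1 x hx) (hb.1 x hx),
    fun x hx => N.add_mem (ha.2 x hx) (hb.2 x hx)⟩
  algebraMap_mem' c := ⟨fun _ hx => M.smul_mem c hx, fun _ hx => N.smul_mem c hx⟩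

/-- The map `X ↦ Φ ∘ X ∘ Ψ`. -/
def sandwich (Φ : E₁ →L[𝕜] E) (Ψ : E →L[𝕜] E₁) : (E₁ →L[𝕜] E₁) →L[𝕜] (E →L[𝕜] E) :=
  (ContinuousLinearMap.precomp E Ψ).comp (ContinuousLinearMap.postcomp E₁ Φ)

variable {M N : Submodule 𝕜 E} {M₁ N₁ : Submodule 𝕜 E₁} {M₂ N₂ : Submodule 𝕜 E₂}

theorem sandwich_apply (Φ : E₁ →L[𝕜] E) (Ψ : E →L[𝕜] E₁) (X : E₁ →L[𝕜] E₁) (x : E) :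
    sandwich Φ Ψ X x = Φ (X (Ψ x)) := rfl

theorem IdempotentGenerated.sandwich_mem (h₁ : IdempotentGenerated (pairAlg M₁ N₁))
    {Φ : E₁ →L[𝕜] E} {Ψ : E →L[𝕜] E₁} (hΨΦ : ∀ x, Ψ (Φ x) = x)
    (hΦM : ∀ x ∈ M₁, Φ x ∈ M) (hΦN : ∀ x ∈ N₁, Φ x ∈ N)
    (hΨM : ∀ x ∈ M, Ψ x ∈ M₁) (hΨN : ∀ x ∈ N, Ψ x ∈ N₁)
    {X : E₁ →L[𝕜] E₁} (hX : X ∈ pairAlg M₁ N₁) :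
    sandwich Φ Ψ X ∈ idempotentClosure (pairAlg M N) :=
  h₁.map_mem_idempotentClosure (S := pairAlg M N) (sandwich Φ Ψ)
    (fun X hX => ⟨fun x hx => hΦM _ (hX.1 _ (hΨM x hx)), fun x hx => hΦN _ (hX.2 _ (hΨN x hx))⟩)
    (fun X _ Y _ => by ext x; simp [sandwich_apply, hΨΦ]) hX

theorem IdempotentGenerated.of_equiv (h₁ : IdempotentGenerated (pairAlg M₁ N₁)) (e : E₁ ≃L[𝕜] E)
    (hM : ∀ x, e x ∈ M ↔ x ∈ M₁) (hN : ∀ x, e x ∈ N ↔ x ∈ N₁) :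
    IdempotentGenerated (pairAlg M N) := by
  have hM' : ∀ x, e.symm x ∈ M₁ ↔ x ∈ M := fun x => by simp [← hM]
  have hN' : ∀ x, e.symm x ∈ N₁ ↔ x ∈ N := fun x => by simp [← hN]
  intro T hT
  have h := h₁.sandwich_mem (M := M) (N := N) (Φ := e) (Ψ := e.symm) (by simp)
    (fun x => (hM x).2) (fun x => (hN x).2) (fun x => (hM' x).2) (fun x => (hN' x).2)
    (X := sandwich (e.symm : E →L[𝕜] E₁) (e : E₁ →L[𝕜] E) T)
    ⟨fun x hx => (hM' _).2 (hT.1 _ ((hM x).2 hx)), fun x hx => (hN' _).2 (hT.2 _ ((hN x).2 hx))⟩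
  convert h
  ext x
  simp [sandwich_apply]

theorem IdempotentGenerated.prod (h₁ : IdempotentGenerated (pairAlg M₁ N₁))
    (h₂ : IdempotentGenerated (pairAlg M₂ N₂)) :
    IdempotentGenerated (pairAlg (M₁.prod M₂) (N₁.prod N₂)) := by
  intro T hT
  let q : E₁ × E₂ →L[𝕜] E₁ × E₂ := .inl 𝕜 E₁ E₂ ∘L .fst 𝕜 E₁ E₂
  have hq : IsIdempotentElem q := rfl
  have hqS : q ∈ pairAlg (M₁.prod M₂) (N₁.prod N₂) :=
    ⟨fun x hx => ⟨hx.1, M₂.zero_mem⟩, fun x hx => ⟨hx.1, N₂.zero_mem⟩⟩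
  have hleft := h₁.sandwich_mem (Φ := .inl 𝕜 E₁ E₂) (Ψ := .fst 𝕜 E₁ E₂) (M := M₁.prod M₂)
    (N := N₁.prod N₂) (fun _ => rfl) (fun x hx => ⟨hx, M₂.zero_mem⟩)
    (fun x hx => ⟨hx, N₂.zero_mem⟩) (fun x hx => hx.1) (fun x hx => hx.1)
    (X := sandwich (.fst 𝕜 E₁ E₂) (.inl 𝕜 E₁ E₂) T)
    ⟨fun x hx => (hT.1 (x, 0) ⟨hx, M₂.zero_mem⟩).1, fun x hx => (hT.2 (x, 0) ⟨hx, N₂.zero_mem⟩).1⟩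
  have hright := h₂.sandwich_mem (Φ := .inr 𝕜 E₁ E₂) (Ψ := .snd 𝕜 E₁ E₂) (M := M₁.prod M₂)
    (N := N₁.prod N₂) (fun _ => rfl) (fun x hx => ⟨M₁.zero_mem, hx⟩)
    (fun x hx => ⟨N₁.zero_mem, hx⟩) (fun x hx => hx.2) (fun x hx => hx.2)
    (X := sandwich (.snd 𝕜 E₁ E₂) (.inr 𝕜 E₁ E₂) T)
    ⟨fun x hx => (hT.1 (0, x) ⟨M₁.zero_mem, hx⟩).2, fun x hx => (hT.2 (0, x) ⟨N₁.zero_mem, hx⟩).2⟩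
  refine mem_idempotentClosure_of_corners hqS hq hT hleft ?_
  have hcompl : 1 - q = .inr 𝕜 E₁ E₂ ∘L .snd 𝕜 E₁ E₂ := by
    ext x <;> simp [q]
  rw [hcompl]
  exact hright

theorem idempotentGenerated_pairAlg_prod_self (M N : Submodule 𝕜 E) :
    IdempotentGenerated (pairAlg (M.prod M) (N.prod N)) := by
  let q : E × E →L[𝕜] E × E := .inl 𝕜 E E ∘L .fst 𝕜 E E
  let s : E × E →L[𝕜] E × E := (ContinuousLinearEquiv.prodComm 𝕜 E E : E × E →L[𝕜] E × E)
  refine idempotentGenerated_of_involution (q := q) (s := s)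
    ⟨fun x hx => ⟨hx.1, M.zero_mem⟩, fun x hx => ⟨hx.1, N.zero_mem⟩⟩ rfl
    ⟨fun x hx => ⟨hx.2, hx.1⟩, fun x hx => ⟨hx.2, hx.1⟩⟩ rfl ?_
  ext x <;> simp [q, s]

end PairAlg

section SequenceSpace

variable {I J J' 𝕜 : Type*} [RCLike 𝕜]

/-- The map sending a bounded family to the corresponding diagonal operator on `ℓ²`. -/
noncomputable def diagL (I 𝕜 : Type*) [RCLike 𝕜] :
    lp (fun _ : I => 𝕜) ∞ →L[𝕜] ℓ²(I, 𝕜) →L[𝕜] ℓ²(I, 𝕜) :=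
  lp.holderL 2 (K := 1) (fun _ => ContinuousLinearMap.mul 𝕜 𝕜) (by simp)

theorem diagL_apply (a : lp (fun _ : I => 𝕜) ∞) (x : ℓ²(I, 𝕜)) (i : I) :
    diagL I 𝕜 a x i = a i * x i := rfl

theorem norm_diagL_le (a : lp (fun _ : I => 𝕜) ∞) : ‖diagL I 𝕜 a‖ ≤ ‖a‖ := by
  simpa using (diagL I 𝕜).le_of_opNorm_le (lp.norm_holderL_le 2 _ _) a

theorem diagL_mul (a b : lp (fun _ : I => 𝕜) ∞) :
    diagL I 𝕜 (a * b) = diagL I 𝕜 a * diagL I 𝕜 b := by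
  ext x i
  exact mul_assoc (a i) (b i) (x i)

theorem diagL_commute (a b : lp (fun _ : I => 𝕜) ∞) : Commute (diagL I 𝕜 a) (diagL I 𝕜 b) := by
  rw [Commute, SemiconjBy, ← diagL_mul, ← diagL_mul, mul_comm]

theorem sum_norm_rpow_comp_le {τ : J → I} (hτ : Function.Injective τ) (x : ℓ²(I, 𝕜))
    (s : Finset J) :
    ∑ j ∈ s, ‖x (τ j)‖ ^ (2 : ℝ≥0∞).toReal ≤ ‖x‖ ^ (2 : ℝ≥0∞).toReal := by
  simpa using lp.sum_rpow_le_norm_rpow (by simp) x (s.map ⟨τ, hτ⟩)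

/-- Restriction of a square-summable family along an injection. -/
noncomputable def l2Restrict (𝕜 : Type*) [RCLike 𝕜] (τ : J ↪ I) : ℓ²(I, 𝕜) →L[𝕜] ℓ²(J, 𝕜) :=
  LinearMap.mkContinuous
    { toFun x := ⟨fun j => x (τ j), memℓp_gen' (sum_norm_rpow_comp_le τ.injective x)⟩
      map_add' _ _ := rfl
      map_smul' _ _ := rfl } 1
    fun x => lp.norm_le_of_forall_sum_le (by simp) (by positivity)
      ((one_mul ‖x‖).symm ▸ sum_norm_rpow_comp_le τ.injective x)

/-- Extension by zero of a square-summable family along an injection. -/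
noncomputable def l2Extend (𝕜 : Type*) [RCLike 𝕜] (τ : J ↪ I) : ℓ²(J, 𝕜) →L[𝕜] ℓ²(I, 𝕜) :=
  (l2Restrict 𝕜 τ).adjoint

theorem l2Restrict_apply (τ : J ↪ I) (x : ℓ²(I, 𝕜)) (j : J) : l2Restrict 𝕜 τ x j = x (τ j) := rfl

theorem norm_l2Restrict_le (τ : J ↪ I) : ‖l2Restrict 𝕜 τ‖ ≤ 1 :=
  LinearMap.mkContinuous_norm_le _ zero_le_one _

theorem norm_l2Extend_le (τ : J ↪ I) : ‖l2Extend 𝕜 τ‖ ≤ 1 :=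
  (ContinuousLinearMap.adjoint.norm_map _).trans_le (norm_l2Restrict_le τ)

theorem l2Extend_apply [DecidableEq I] (τ : J ↪ I) (y : ℓ²(J, 𝕜)) (i : I) :
    l2Extend 𝕜 τ y i = inner 𝕜 (l2Restrict 𝕜 τ (lp.single 2 i 1)) y := by
  rw [← ContinuousLinearMap.adjoint_inner_right, lp.inner_single_left]
  simp [l2Extend]

theorem l2Extend_apply_map (τ : J ↪ I) (y : ℓ²(J, 𝕜)) (j : J) :
    l2Extend 𝕜 τ y (τ j) = y j := by
  classical
  have hsingle : l2Restrict 𝕜 τ (lp.single 2 (τ j) 1) = lp.single 2 j 1 := by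
    ext k
    simp [l2Restrict_apply, Pi.single_apply]
  rw [l2Extend_apply, hsingle, lp.inner_single_left]
  simp

theorem l2Extend_apply_of_forall_ne (τ : J ↪ I) (y : ℓ²(J, 𝕜)) {i : I} (hi : ∀ j, τ j ≠ i) :
    l2Extend 𝕜 τ y i = 0 := by
  classical
  have hsingle : l2Restrict 𝕜 τ (lp.single 2 i 1) = 0 := by
    ext k
    simp [l2Restrict_apply, hi k]
  rw [l2Extend_apply, hsingle, inner_zero_left]

/-- The decomposition of `ℓ²` induced by a partition of the index set into two pieces. -/
noncomputable def lpSumEquiv (𝕜 : Type*) [RCLike 𝕜] (e : J ⊕ J' ≃ I) :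
    ℓ²(I, 𝕜) ≃L[𝕜] ℓ²(J, 𝕜) × ℓ²(J', 𝕜) :=
  let inl : J ↪ I := Function.Embedding.inl.trans e.toEmbedding
  let inr : J' ↪ I := Function.Embedding.inr.trans e.toEmbedding
  have apply_inl (y y') (j : J) : (l2Extend 𝕜 inl y + l2Extend 𝕜 inr y') (inl j) = y j := by
    rw [lp.coeFn_add, Pi.add_apply, l2Extend_apply_map,
      l2Extend_apply_of_forall_ne inr y' (by simp [inl, inr]), add_zero]
  have apply_inr (y y') (j : J') : (l2Extend 𝕜 inl y + l2Extend 𝕜 inr y') (inr j) = y' j := by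
    rw [lp.coeFn_add, Pi.add_apply, l2Extend_apply_map,
      l2Extend_apply_of_forall_ne inl y (by simp [inl, inr]), zero_add]
  .equivOfInverse ((l2Restrict 𝕜 inl).prod (l2Restrict 𝕜 inr))
    ((l2Extend 𝕜 inl).coprod (l2Extend 𝕜 inr))
    (fun x => by
      ext i
      obtain ⟨j | j, rfl⟩ := e.surjective i
      · exact apply_inl (l2Restrict 𝕜 inl x) (l2Restrict 𝕜 inr x) j
      · exact apply_inr (l2Restrict 𝕜 inl x) (l2Restrict 𝕜 inr x) j)
    fun y => by
      ext j
      · exact apply_inl y.1 y.2 j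
      · exact apply_inr y.1 y.2 j

end SequenceSpace

section BoundedFamilies

variable {I 𝕜 : Type*} [RCLike 𝕜]

/-- A family bounded by `C`, as an element of `ℓ^∞`. -/
def boundedFamily (a : I → 𝕜) {C : ℝ} (ha : ∀ i, ‖a i‖ ≤ C) : lp (fun _ : I => 𝕜) ∞ :=
  ⟨a, memℓp_infty ⟨C, by rintro _ ⟨i, rfl⟩; exact ha i⟩⟩

theorem boundedFamily_apply (a : I → 𝕜) {C : ℝ} (ha : ∀ i, ‖a i‖ ≤ C) (i : I) :
    boundedFamily a ha i = a i := rfl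

theorem norm_boundedFamily_le (a : I → 𝕜) {C : ℝ} (hC : 0 ≤ C) (ha : ∀ i, ‖a i‖ ≤ C) :
    ‖boundedFamily a ha‖ ≤ C :=
  lp.norm_le_of_forall_le hC ha

open Classical in
/-- The indicator function of `s`, as an element of `ℓ^∞`. -/
noncomputable def boundedIndicator (𝕜 : Type*) [RCLike 𝕜] (s : Set I) : lp (fun _ : I => 𝕜) ∞ :=
  boundedFamily (fun i => if i ∈ s then 1 else 0) (C := 1) fun i => by split_ifs <;> simp

open Classical in
theorem boundedIndicator_apply (s : Set I) (i : I) :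
    boundedIndicator 𝕜 s i = if i ∈ s then 1 else 0 := rfl

theorem isIdempotentElem_boundedIndicator (s : Set I) :
    IsIdempotentElem (boundedIndicator 𝕜 s) := by
  ext i
  simp [lp.infty_coeFn_mul, boundedIndicator_apply]

theorem boundedIndicator_mem_idempotentClosure (s : Set I) :
    boundedIndicator 𝕜 s ∈ idempotentClosure (⊤ : Subalgebra 𝕜 (lp (fun _ : I => 𝕜) ∞)) :=
  mem_idempotentClosure_of_isIdempotentElem trivial (isIdempotentElem_boundedIndicator s)

-- Each step subtracts `± C / 2` according to the sign of `a`, halving the bound on the remainder.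
theorem exists_mem_idempotentClosure_norm_sub_le (k : ℕ) {a : I → ℝ} {C : ℝ}
    (ha : ∀ i, |a i| ≤ C) :
    ∃ b ∈ idempotentClosure (⊤ : Subalgebra 𝕜 (lp (fun _ : I => 𝕜) ∞)),
      ∀ i, ‖(a i : 𝕜) - b i‖ ≤ C / 2 ^ k := by
  induction k generalizing a C with
  | zero => exact ⟨0, zero_mem _, fun i => by simpa using ha i⟩
  | succ k ih =>
    let h : lp (fun _ : I => 𝕜) ∞ := ((C / 2 : ℝ) : 𝕜) •
      (boundedIndicator 𝕜 {i | 0 ≤ a i} - (1 - boundedIndicator 𝕜 {i | 0 ≤ a i}))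
    have hh : ∀ i, h i = ((if 0 ≤ a i then C / 2 else -(C / 2) : ℝ) : 𝕜) := fun i => by
      simp only [h, lp.coeFn_sub, lp.coeFn_smul, Pi.sub_apply, Pi.smul_apply, lp.infty_coeFn_one,
        boundedIndicator_apply, Set.mem_ofPred_eq, Pi.one_apply]
      split_ifs <;> simp
    obtain ⟨b, hb, hab⟩ := ih (a := fun i => a i - if 0 ≤ a i then C / 2 else -(C / 2))
      (C := C / 2) fun i => by
        have := abs_le.1 (ha i)
        rw [abs_le]
        split_ifs <;> constructor <;> linarith
    have hmem := boundedIndicator_mem_idempotentClosure (𝕜 := 𝕜) {i | 0 ≤ a i}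
    refine ⟨h + b, add_mem (Subalgebra.smul_mem _ (sub_mem hmem (sub_mem (one_mem _) hmem)) _) hb,
      fun i => ?_⟩
    rw [lp.coeFn_add, Pi.add_apply, hh, ← sub_sub, ← RCLike.ofReal_sub, pow_succ', ← div_div]
    exact hab i

theorem idempotentGenerated_top_linfty :
    IdempotentGenerated (⊤ : Subalgebra 𝕜 (lp (fun _ : I => 𝕜) ∞)) := by
  intro a _
  refine (isClosed_idempotentClosure _).closure_subset (Metric.mem_closure_iff.2 fun ε hε => ?_)
  obtain ⟨k, hk⟩ := exists_pow_lt_of_lt_one (show 0 < ε / (2 * ‖a‖ + 1) by positivity)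
    (one_half_lt_one (α := ℝ))
  have ha : ∀ i, ‖a i‖ ≤ ‖a‖ := lp.norm_apply_le_norm (by simp) a
  obtain ⟨b, hb, hab⟩ := exists_mem_idempotentClosure_norm_sub_le (𝕜 := 𝕜) k
    (fun i => (RCLike.abs_re_le_norm (a i)).trans (ha i))
  obtain ⟨c, hc, hac⟩ := exists_mem_idempotentClosure_norm_sub_le (𝕜 := 𝕜) k
    (fun i => (RCLike.abs_im_le_norm (a i)).trans (ha i))
  refine ⟨b + (RCLike.I : 𝕜) • c, add_mem hb (Subalgebra.smul_mem _ hc _), ?_⟩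
  have hbound : ‖a - (b + (RCLike.I : 𝕜) • c)‖ ≤ 2 * (‖a‖ / 2 ^ k) := by
    refine lp.norm_le_of_forall_le (by positivity) fun i => ?_
    calc ‖a i - (b i + RCLike.I * c i)‖
        = ‖((RCLike.re (a i) : 𝕜) - b i) + RCLike.I * ((RCLike.im (a i) : 𝕜) - c i)‖ := by
          conv_lhs => rw [← RCLike.re_add_im (a i)]
          congr 1
          ring
      _ ≤ ‖a‖ / 2 ^ k + 1 * (‖a‖ / 2 ^ k) := by
          refine norm_add_le_of_le (hab i) ((norm_mul_le _ _).trans ?_)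
          gcongr
          · rw [RCLike.norm_I]
            split_ifs <;> norm_num
          · exact hac i
      _ = 2 * (‖a‖ / 2 ^ k) := by ring
  have hsmall := (lt_div_iff₀ (by positivity)).1 hk
  rw [dist_eq_norm]
  refine hbound.trans_lt ?_
  have : 2 * (‖a‖ / 2 ^ k) = (1 / 2) ^ k * (2 * ‖a‖) := by
    rw [one_div_pow]; ring
  nlinarith [show (0 : ℝ) < (1 / 2) ^ k by positivity]

end BoundedFamilies

section MatrixEntries

variable {I 𝕜 : Type*} [DecidableEq I] [RCLike 𝕜]

/-- The entry in row `i` and column `j` of the matrix of an operator on `ℓ²`. -/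
noncomputable def entry (T : ℓ²(I, 𝕜) →L[𝕜] ℓ²(I, 𝕜)) (i j : I) : 𝕜 :=
  T (lp.single 2 j 1) i

theorem entry_ext {T U : ℓ²(I, 𝕜) →L[𝕜] ℓ²(I, 𝕜)} (h : ∀ i j, entry T i j = entry U i j) :
    T = U := by
  refine lp.ext_continuousLinearMap (by simp) fun j => ContinuousLinearMap.ext_ring ?_
  ext i
  exact h i j

theorem entry_smul (c : 𝕜) (T : ℓ²(I, 𝕜) →L[𝕜] ℓ²(I, 𝕜)) (i j : I) :
    entry (c • T) i j = c * entry T i j := rfl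

theorem entry_sub (T U : ℓ²(I, 𝕜) →L[𝕜] ℓ²(I, 𝕜)) (i j : I) :
    entry (T - U) i j = entry T i j - entry U i j := rfl

theorem norm_entry_le (T : ℓ²(I, 𝕜) →L[𝕜] ℓ²(I, 𝕜)) (i j : I) : ‖entry T i j‖ ≤ ‖T‖ := by
  refine (lp.norm_apply_le_norm (by simp) _ i).trans ((T.le_opNorm _).trans_eq ?_)
  simp [lp.norm_single]

theorem entry_eq_inner (T : ℓ²(I, 𝕜) →L[𝕜] ℓ²(I, 𝕜)) (i j : I) :
    entry T i j = inner 𝕜 (lp.single 2 i (1 : 𝕜)) (T (lp.single 2 j 1)) := by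
  simp [entry, lp.inner_single_left]

theorem entry_adjoint (T : ℓ²(I, 𝕜) →L[𝕜] ℓ²(I, 𝕜)) (i j : I) :
    entry T.adjoint i j = star (entry T j i) := by
  rw [entry_eq_inner, entry_eq_inner, ContinuousLinearMap.adjoint_inner_right]
  exact (inner_conj_symm _ _).symm

theorem diagL_single (a : lp (fun _ : I => 𝕜) ∞) (j : I) :
    diagL I 𝕜 a (lp.single 2 j 1) = a j • lp.single 2 j (1 : 𝕜) := by
  ext i
  simp only [diagL_apply, lp.coeFn_smul, Pi.smul_apply, lp.single_apply, smul_eq_mul]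
  by_cases h : i = j
  · rw [h]
  · simp [h]

theorem entry_diagL_mul (a : lp (fun _ : I => 𝕜) ∞) (T : ℓ²(I, 𝕜) →L[𝕜] ℓ²(I, 𝕜)) (i j : I) :
    entry (diagL I 𝕜 a * T) i j = a i * entry T i j := rfl

theorem entry_mul_diagL (T : ℓ²(I, 𝕜) →L[𝕜] ℓ²(I, 𝕜)) (a : lp (fun _ : I => 𝕜) ∞) (i j : I) :
    entry (T * diagL I 𝕜 a) i j = entry T i j * a j := by
  simp [entry, diagL_single, mul_comm]

theorem entry_diagL (a : lp (fun _ : I => 𝕜) ∞) (i j : I) :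
    entry (diagL I 𝕜 a) i j = if i = j then a j else 0 := by
  simp [entry, diagL_single, Pi.single_apply]

end MatrixEntries

section DyadicWeights

variable {I 𝕜 : Type*} [RCLike 𝕜]

/-- The weight `i ↦ 2^{-n i}`, as an element of `ℓ^∞`. -/
noncomputable def dyadicWeight (𝕜 : Type*) [RCLike 𝕜] (n : I → ℕ) : lp (fun _ : I => 𝕜) ∞ :=
  boundedFamily (fun i => (1 / 2) ^ n i) (C := 1) fun i => by
    simpa using pow_le_one₀ (n := n i) (by norm_num : (0 : ℝ) ≤ 2⁻¹) (by norm_num)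

/-- The diagonal operator with weights `2^{-n i}`. -/
noncomputable def dyadicOp (𝕜 : Type*) [RCLike 𝕜] (n : I → ℕ) : ℓ²(I, 𝕜) →L[𝕜] ℓ²(I, 𝕜) :=
  diagL I 𝕜 (dyadicWeight 𝕜 n)

theorem dyadicWeight_apply (n : I → ℕ) (i : I) : dyadicWeight 𝕜 n i = (1 / 2) ^ n i := rfl

theorem dyadicWeight_ne_zero (n : I → ℕ) (i : I) : dyadicWeight 𝕜 n i ≠ 0 := by
  simp [dyadicWeight_apply]

theorem dyadicOp_apply (n : I → ℕ) (x : ℓ²(I, 𝕜)) (i : I) :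
    dyadicOp 𝕜 n x i = (1 / 2) ^ n i * x i := rfl

theorem mul_right_cancel_dyadicOp {n : I → ℕ} {A B : ℓ²(I, 𝕜) →L[𝕜] ℓ²(I, 𝕜)}
    (h : A * dyadicOp 𝕜 n = B * dyadicOp 𝕜 n) : A = B := by
  classical
  refine entry_ext fun i j => mul_right_cancel₀ (dyadicWeight_ne_zero n j) ?_
  rw [← entry_mul_diagL, ← entry_mul_diagL]
  exact congrArg (entry · i j) h

theorem mul_left_cancel_dyadicOp {n : I → ℕ} {A B : ℓ²(I, 𝕜) →L[𝕜] ℓ²(I, 𝕜)}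
    (h : dyadicOp 𝕜 n * A = dyadicOp 𝕜 n * B) : A = B := by
  classical
  refine entry_ext fun i j => mul_left_cancel₀ (dyadicWeight_ne_zero n i) ?_
  rw [← entry_diagL_mul, ← entry_diagL_mul]
  exact congrArg (entry · i j) h

theorem adjoint_dyadicOp (n : I → ℕ) : (dyadicOp 𝕜 n).adjoint = dyadicOp 𝕜 n := by
  classical
  refine entry_ext fun i j => ?_
  rw [entry_adjoint, dyadicOp, entry_diagL, entry_diagL]
  by_cases h : i = j
  · simp [h, dyadicWeight_apply]
  · simp [h, Ne.symm h]

theorem norm_dyadicOp_le (n : I → ℕ) : ‖dyadicOp 𝕜 n‖ ≤ 1 :=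
  (norm_diagL_le _).trans (norm_boundedFamily_le _ zero_le_one _)

theorem denseRange_dyadicOp (n : I → ℕ) : DenseRange (dyadicOp 𝕜 n) := by
  classical
  suffices h : (dyadicOp 𝕜 n).rangeᗮ = ⊥ by
    exact Submodule.dense_iff_topologicalClosure_eq_top.2
      ((Submodule.topologicalClosure_eq_top_iff).2 h)
  rw [Submodule.eq_bot_iff]
  intro x hx
  ext i
  have hi : ⟪dyadicOp 𝕜 n (lp.single 2 i 1), x⟫_𝕜 = 0 := hx _ ⟨_, rfl⟩
  rw [← ContinuousLinearMap.adjoint_inner_right, adjoint_dyadicOp, lp.inner_single_left,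
    dyadicOp_apply] at hi
  simpa using hi

end DyadicWeights

section UnilateralShift

variable {𝕜 : Type*} [RCLike 𝕜]

theorem l2Extend_single {I J : Type*} [DecidableEq I] [DecidableEq J] (τ : J ↪ I) (j : J) :
    l2Extend 𝕜 τ (lp.single 2 j 1) = lp.single 2 (τ j) (1 : 𝕜) := by
  ext i
  by_cases hi : ∃ k, τ k = i
  · obtain ⟨k, rfl⟩ := hi
    simp [l2Extend_apply_map, Pi.single_apply]
  · push Not at hi
    rw [l2Extend_apply_of_forall_ne τ _ hi]
    simp [(hi j).symm]

/-- The unilateral (right) shift on `ℓ²(ℕ)`. -/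
noncomputable def rightShift (𝕜 : Type*) [RCLike 𝕜] : ℓ²(ℕ, 𝕜) →L[𝕜] ℓ²(ℕ, 𝕜) :=
  l2Extend 𝕜 ⟨Nat.succ, Nat.succ_injective⟩

/-- The backward shift on `ℓ²(ℕ)`. -/
noncomputable def leftShift (𝕜 : Type*) [RCLike 𝕜] : ℓ²(ℕ, 𝕜) →L[𝕜] ℓ²(ℕ, 𝕜) :=
  l2Restrict 𝕜 ⟨Nat.succ, Nat.succ_injective⟩

theorem rightShift_single (j : ℕ) :
    rightShift 𝕜 (lp.single 2 j 1) = lp.single 2 (j + 1) (1 : 𝕜) :=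
  l2Extend_single _ j

theorem rightShift_pow_single (d j : ℕ) :
    (rightShift 𝕜 ^ d) (lp.single 2 j 1) = lp.single 2 (j + d) (1 : 𝕜) := by
  induction d with
  | zero => rfl
  | succ d ih => rw [pow_succ', mul_apply_eq_comp, ih, rightShift_single, add_assoc]

theorem norm_rightShift_pow_le (d : ℕ) : ‖rightShift 𝕜 ^ d‖ ≤ 1 := by
  induction d with
  | zero => exact ContinuousLinearMap.norm_id_le
  | succ d ih =>
    rw [pow_succ]
    exact (norm_mul_le _ _).trans (mul_le_one₀ ih (norm_nonneg _) (norm_l2Extend_le _))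

theorem entry_mul_rightShift (T : ℓ²(ℕ, 𝕜) →L[𝕜] ℓ²(ℕ, 𝕜)) (i j : ℕ) :
    entry (T * rightShift 𝕜) i j = entry T i (j + 1) :=
  congrArg (fun x => T x i) (rightShift_single j)

theorem entry_leftShift_mul (T : ℓ²(ℕ, 𝕜) →L[𝕜] ℓ²(ℕ, 𝕜)) (i j : ℕ) :
    entry (leftShift 𝕜 * T) i j = entry T (i + 1) j := rfl

theorem entry_rightShift_mul_succ (T : ℓ²(ℕ, 𝕜) →L[𝕜] ℓ²(ℕ, 𝕜)) (i j : ℕ) :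
    entry (rightShift 𝕜 * T) (i + 1) j = entry T i j :=
  l2Extend_apply_map ⟨Nat.succ, Nat.succ_injective⟩ (T (lp.single 2 j 1)) i

theorem entry_rightShift_mul_zero (T : ℓ²(ℕ, 𝕜) →L[𝕜] ℓ²(ℕ, 𝕜)) (j : ℕ) :
    entry (rightShift 𝕜 * T) 0 j = 0 :=
  l2Extend_apply_of_forall_ne ⟨Nat.succ, Nat.succ_injective⟩ (T (lp.single 2 j 1))
    fun k => k.succ_ne_zero

theorem leftShift_single_succ (j : ℕ) :
    leftShift 𝕜 (lp.single 2 (j + 1) 1) = lp.single 2 j (1 : 𝕜) := by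
  ext i
  simp [leftShift, l2Restrict_apply, Pi.single_apply]

theorem leftShift_single_zero : leftShift 𝕜 (lp.single 2 0 (1 : 𝕜)) = 0 := by
  ext i
  simp [leftShift, l2Restrict_apply]

theorem entry_mul_leftShift_succ (T : ℓ²(ℕ, 𝕜) →L[𝕜] ℓ²(ℕ, 𝕜)) (i j : ℕ) :
    entry (T * leftShift 𝕜) i (j + 1) = entry T i j :=
  congrArg (fun x => T x i) (leftShift_single_succ j)

theorem entry_mul_leftShift_zero (T : ℓ²(ℕ, 𝕜) →L[𝕜] ℓ²(ℕ, 𝕜)) (i : ℕ) :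
    entry (T * leftShift 𝕜) i 0 = 0 := by
  rw [entry, mul_apply_eq_comp, leftShift_single_zero, map_zero]
  rfl

end UnilateralShift

section TriangularTruncation

variable {𝕜 : Type*} [RCLike 𝕜] {n : ℕ → ℕ}

theorem hasSum_entry {ι I : Type*} [DecidableEq I] {T : ι → ℓ²(I, 𝕜) →L[𝕜] ℓ²(I, 𝕜)}
    {Y : ℓ²(I, 𝕜) →L[𝕜] ℓ²(I, 𝕜)} (h : HasSum T Y) (i j : I) :
    HasSum (fun d => entry (T d) i j) (entry Y i j) :=
  h.mapL ((lp.evalCLM 𝕜 (fun _ : I => 𝕜) 2 i).comp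
    (ContinuousLinearMap.apply 𝕜 ℓ²(I, 𝕜) (lp.single 2 j 1)))

-- The weight ratio of the entry `(j + d, j)` is at most `2⁻ᵈ`, since `n` increases by at least `d`
-- from `j` to `j + d`. Hence the series over the subdiagonals converges in norm.
theorem exists_lower_companion (hn : StrictMono n) (X : ℓ²(ℕ, 𝕜) →L[𝕜] ℓ²(ℕ, 𝕜)) :
    ∃ Y : ℓ²(ℕ, 𝕜) →L[𝕜] ℓ²(ℕ, 𝕜), ∀ i j, entry (Y * dyadicOp 𝕜 n) i j =
      if j ≤ i then entry (dyadicOp 𝕜 n * X) i j else 0 := by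
  have gap (d j : ℕ) : n j + d ≤ n (j + d) := by
    simpa [add_comm] using hn.add_le_nat d j
  have bound (d j : ℕ) :
      ‖(1 / 2 : 𝕜) ^ (n (j + d) - n j) * entry X (j + d) j‖ ≤ (1 / 2) ^ d * ‖X‖ := by
    rw [norm_mul, norm_pow, norm_div, norm_one, RCLike.norm_two]
    exact mul_le_mul (pow_le_pow_of_le_one (by norm_num) (by norm_num)
      (Nat.le_sub_of_add_le' (gap d j))) (norm_entry_le X _ _) (norm_nonneg _) (by positivity)
  let term (d : ℕ) := rightShift 𝕜 ^ d * diagL ℕ 𝕜 (boundedFamily _ (bound d))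
  have norm_term (d : ℕ) : ‖term d‖ ≤ (1 / 2) ^ d * ‖X‖ := by
    refine (norm_mul_le _ _).trans ((mul_le_of_le_one_left (norm_nonneg _)
      (norm_rightShift_pow_le d)).trans ((norm_diagL_le _).trans ?_))
    exact norm_boundedFamily_le _ (by positivity) (bound d)
  have summable : Summable term :=
    .of_norm_bounded (summable_geometric_two.mul_right ‖X‖) norm_term
  have entry_term (d i j : ℕ) : entry (term d) i j =
      if i = j + d then (1 / 2) ^ (n (j + d) - n j) * entry X (j + d) j else 0 := by
    rw [entry_mul_diagL, entry, rightShift_pow_single]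
    simp [Pi.single_apply, boundedFamily_apply]
  refine ⟨∑' d, term d, fun i j => ?_⟩
  have hY := hasSum_entry summable.hasSum i j
  simp only [entry_term] at hY
  rw [dyadicOp, entry_mul_diagL, entry_diagL_mul, dyadicWeight_apply, dyadicWeight_apply]
  split_ifs with hji
  · obtain ⟨d, rfl⟩ := Nat.exists_eq_add_of_le hji
    rw [hY.unique (hasSum_single d fun d' hd' => if_neg (by omega)), if_pos rfl, mul_right_comm,
      ← pow_add, Nat.sub_add_cancel (le_of_add_le_left (gap d j))]
  · rw [hY.unique (hasSum_zero.congr_fun fun d => if_neg (by omega)), zero_mul]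

theorem exists_upper_companion (hn : StrictMono n) (X : ℓ²(ℕ, 𝕜) →L[𝕜] ℓ²(ℕ, 𝕜)) :
    ∃ Y : ℓ²(ℕ, 𝕜) →L[𝕜] ℓ²(ℕ, 𝕜), ∀ i j, entry (dyadicOp 𝕜 n * Y) i j =
      if i ≤ j then entry (X * dyadicOp 𝕜 n) i j else 0 := by
  obtain ⟨Z, hZ⟩ := exists_lower_companion hn X.adjoint
  have adj (A B : ℓ²(ℕ, 𝕜) →L[𝕜] ℓ²(ℕ, 𝕜)) : (A * B).adjoint = B.adjoint * A.adjoint :=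
    ContinuousLinearMap.adjoint_comp A B
  refine ⟨Z.adjoint, fun i j => ?_⟩
  have h := congrArg star (hZ j i)
  rw [← entry_adjoint, adj, adjoint_dyadicOp, apply_ite star, star_zero, ← entry_adjoint, adj,
    adjoint_dyadicOp, ContinuousLinearMap.adjoint_adjoint] at h
  exact h

end TriangularTruncation

section GraphAlg

variable {𝕜 K : Type*} [NontriviallyNormedField 𝕜] [NormedAddCommGroup K] [NormedSpace 𝕜 K]
  {w : K →L[𝕜] K}

/-- The algebra `Alg {0, M, N, K × K}` where `M` is the graph of `w` and `N = K × 0`. -/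
def graphAlg (w : K →L[𝕜] K) : Subalgebra 𝕜 (K × K →L[𝕜] K × K) :=
  pairAlg (LinearMap.graph (w : K →ₗ[𝕜] K)) (Submodule.prod ⊤ ⊥)

/-- The operators `(k, l) ↦ (Y (l - w k), 0)`, which are those elements of `graphAlg w` that
vanish on the graph of `w` and whose range lies in `K × 0`. -/
def nilBlock (w Y : K →L[𝕜] K) : K × K →L[𝕜] K × K :=
  .inl 𝕜 K K ∘L Y ∘L (.snd 𝕜 K K - w ∘L .fst 𝕜 K K)

theorem nilBlock_apply (w Y : K →L[𝕜] K) (x : K × K) :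
    nilBlock w Y x = (Y (x.2 - w x.1), 0) := rfl

theorem nilBlock_add (Y Z : K →L[𝕜] K) : nilBlock w (Y + Z) = nilBlock w Y + nilBlock w Z := by
  ext x <;> simp [nilBlock_apply]

theorem nilBlock_smul (c : 𝕜) (Y : K →L[𝕜] K) : nilBlock w (c • Y) = c • nilBlock w Y := by
  ext x <;> simp [nilBlock_apply]

theorem prodMap_mul_nilBlock (E D Y : K →L[𝕜] K) :
    E.prodMap D * nilBlock w Y = nilBlock w (E * Y) := by
  ext x <;> simp [nilBlock_apply]

theorem nilBlock_mul_prodMap {E D : K →L[𝕜] K} (h : w * E = D * w) (Y : K →L[𝕜] K) :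
    nilBlock w Y * E.prodMap D = nilBlock w (Y * D) := by
  have h' (x : K) : w (E x) = D (w x) := DFunLike.congr_fun h x
  ext x <;> simp [nilBlock_apply, h']

theorem nilBlock_mul_nilBlock (Y Z : K →L[𝕜] K) :
    nilBlock w Y * nilBlock w Z = -nilBlock w (Y * w * Z) := by
  ext x <;> simp [nilBlock_apply]

theorem prodMap_mul_prodMap (E D E' D' : K →L[𝕜] K) :
    E.prodMap D * E'.prodMap D' = (E * E').prodMap (D * D') := rfl

theorem prodMap_add_prodMap (E D E' D' : K →L[𝕜] K) :
    (E + E').prodMap (D + D') = E.prodMap D + E'.prodMap D' := rfl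

theorem prodMap_mem_graphAlg {E D : K →L[𝕜] K} (h : w * E = D * w) :
    E.prodMap D ∈ graphAlg w := by
  refine ⟨?_, fun x hx => ⟨trivial, ?_⟩⟩
  · rintro ⟨x, y⟩ (rfl : y = w x)
    exact (DFunLike.congr_fun h x).symm
  · exact (congrArg D hx.2).trans (map_zero D)

theorem nilBlock_mem_graphAlg (w Y : K →L[𝕜] K) : nilBlock w Y ∈ graphAlg w := by
  refine ⟨?_, fun x _ => ⟨trivial, rfl⟩⟩
  rintro ⟨x, y⟩ (rfl : y = w x)
  simp [nilBlock_apply]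

theorem exists_eq_prodMap_add_nilBlock {T : K × K →L[𝕜] K × K} (hT : T ∈ graphAlg w) :
    ∃ E D Y : K →L[𝕜] K, w * E = D * w ∧ T = E.prodMap D + nilBlock w Y := by
  let X : K →L[𝕜] K := .fst 𝕜 K K ∘L T ∘L .inr 𝕜 K K
  let D : K →L[𝕜] K := .snd 𝕜 K K ∘L T ∘L .inr 𝕜 K K
  let E : K →L[𝕜] K := .fst 𝕜 K K ∘L T ∘L .inl 𝕜 K K + X * w
  have hN (k : K) : (T (k, 0)).2 = 0 := (hT.2 (k, 0) ⟨trivial, rfl⟩).2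
  have split (k l : K) : T (k, l) = T (k, 0) + T (0, l) := by
    rw [← map_add, Prod.mk_add_mk, add_zero, zero_add]
  have hX (k l : K) : X (l - w k) = X l - X (w k) := map_sub X l (w k)
  refine ⟨E, D, X, ?_, ?_⟩
  · ext k
    have hM : (T (k, w k)).2 = w (T (k, w k)).1 := hT.1 (k, w k) rfl
    rw [split, Prod.snd_add, hN, zero_add] at hM
    exact hM.symm
  · refine ContinuousLinearMap.ext fun x => ?_
    rw [← Prod.mk.eta (p := x), split]
    ext
    · change (T (x.1, 0)).1 + X x.2 = (T (x.1, 0)).1 + X (w x.1) + X (x.2 - w x.1)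
      rw [hX]
      abel
    · simp [D, hN, nilBlock_apply]

theorem nilBlock_mem_idempotentClosure {Y : K →L[𝕜] K} {t : 𝕜} (ht : t ≠ 0)
    (hY : Y * w * Y = t • Y) : nilBlock w Y ∈ idempotentClosure (graphAlg w) := by
  have hidem : IsIdempotentElem (nilBlock w (-t⁻¹ • Y)) := by
    have hscal : -t⁻¹ * -t⁻¹ * t = t⁻¹ := by field_simp
    rw [IsIdempotentElem, nilBlock_mul_nilBlock, smul_mul_assoc, smul_mul_assoc, mul_smul_comm, hY,
      smul_smul, smul_smul, hscal, nilBlock_smul, nilBlock_smul]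
    exact (neg_smul _ _).symm
  have := Subalgebra.smul_mem _
    (mem_idempotentClosure_of_isIdempotentElem (nilBlock_mem_graphAlg w _) hidem) (-t)
  rwa [← nilBlock_smul, smul_smul, neg_mul_neg, mul_inv_cancel₀ ht, one_smul] at this

theorem prodMap_mem_idempotentCore {p E D : K →L[𝕜] K} (hp : IsIdempotentElem p)
    (hpw : w * p = p * w) (h : w * E = D * w) (hE : E * p = (1 - p) * E)
    (hD : D * p = (1 - p) * D) : E.prodMap D ∈ idempotentCore (graphAlg w) := by
  refine mem_idempotentCore_of_mul_eq_one_sub_mul (q := p.prodMap p) (prodMap_mem_graphAlg hpw)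
    ?_ (prodMap_mem_graphAlg h) ?_
  · rw [IsIdempotentElem, prodMap_mul_prodMap, hp.eq]
  · have hsub : 1 - p.prodMap p = (1 - p).prodMap (1 - p) := by
      ext x <;> simp
    rw [hsub, prodMap_mul_prodMap, prodMap_mul_prodMap, hE, hD]

end GraphAlg

section GraphModel

variable {I 𝕜 : Type*} [RCLike 𝕜]

theorem prodMap_diagL_mem_idempotentClosure (a b : lp (fun _ : I => 𝕜) ∞) :
    (diagL I 𝕜 a).prodMap (diagL I 𝕜 a) ∈ idempotentClosure (graphAlg (diagL I 𝕜 b)) :=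
  idempotentGenerated_top_linfty.map_mem_idempotentClosure
    ((ContinuousLinearMap.prodMapL 𝕜 _ _ _ _).comp ((diagL I 𝕜).prod (diagL I 𝕜)))
    (fun c _ => prodMap_mem_graphAlg (diagL_commute b c))
    (fun c _ d _ => by
      change (diagL I 𝕜 (c * d)).prodMap (diagL I 𝕜 (c * d)) = _
      rw [diagL_mul, ← prodMap_mul_prodMap]
      rfl)
    (x := a) trivial

end GraphModel

section MonotoneModel

variable {𝕜 : Type*} [RCLike 𝕜] {n : ℕ → ℕ}

theorem entry_eq_of_intertwine {I : Type*} [DecidableEq I] {m : I → ℕ}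
    {E D : ℓ²(I, 𝕜) →L[𝕜] ℓ²(I, 𝕜)} (h : dyadicOp 𝕜 m * E = D * dyadicOp 𝕜 m) (i j : I) :
    dyadicWeight 𝕜 m i * entry E i j = entry D i j * dyadicWeight 𝕜 m j := by
  rw [← entry_diagL_mul, ← entry_mul_diagL]
  exact congrArg (entry · i j) h

theorem entry_eq_zero_iff_of_intertwine {I : Type*} [DecidableEq I] {m : I → ℕ}
    {E D : ℓ²(I, 𝕜) →L[𝕜] ℓ²(I, 𝕜)} (h : dyadicOp 𝕜 m * E = D * dyadicOp 𝕜 m) {i j : I} :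
    entry E i j = 0 ↔ entry D i j = 0 := by
  rw [← mul_eq_zero_iff_left (dyadicWeight_ne_zero (𝕜 := 𝕜) m i), entry_eq_of_intertwine h,
    mul_eq_zero_iff_right (dyadicWeight_ne_zero m j)]

theorem exists_intertwine_of_lower (hn : StrictMono n) {X : ℓ²(ℕ, 𝕜) →L[𝕜] ℓ²(ℕ, 𝕜)}
    (hX : ∀ i j, i < j → entry X i j = 0) :
    ∃ D, dyadicOp 𝕜 n * X = D * dyadicOp 𝕜 n := by
  obtain ⟨D, hD⟩ := exists_lower_companion hn X
  refine ⟨D, entry_ext fun i j => ?_⟩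
  rw [hD]
  split_ifs with h
  · rfl
  · rw [dyadicOp, entry_diagL_mul, hX i j (not_le.1 h), mul_zero]

theorem exists_intertwine_of_upper (hn : StrictMono n) {X : ℓ²(ℕ, 𝕜) →L[𝕜] ℓ²(ℕ, 𝕜)}
    (hX : ∀ i j, j < i → entry X i j = 0) :
    ∃ E, dyadicOp 𝕜 n * E = X * dyadicOp 𝕜 n := by
  obtain ⟨E, hE⟩ := exists_upper_companion hn X
  refine ⟨E, entry_ext fun i j => ?_⟩
  rw [hE]
  split_ifs with h
  · rfl
  · rw [dyadicOp, entry_mul_diagL, hX i j (not_le.1 h), zero_mul]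

/-- The projection of `ℓ²(ℕ)` onto the even coordinates. -/
noncomputable def evenProj (𝕜 : Type*) [RCLike 𝕜] : ℓ²(ℕ, 𝕜) →L[𝕜] ℓ²(ℕ, 𝕜) :=
  diagL ℕ 𝕜 (boundedIndicator 𝕜 {i | Even i})

theorem isIdempotentElem_evenProj : IsIdempotentElem (evenProj 𝕜) := by
  rw [IsIdempotentElem, evenProj, ← diagL_mul, isIdempotentElem_boundedIndicator]

theorem one_sub_evenProj_mul {T : ℓ²(ℕ, 𝕜) →L[𝕜] ℓ²(ℕ, 𝕜)}
    (hT : ∀ i j, (Even i ↔ Even j) → entry T i j = 0) :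
    T * evenProj 𝕜 = (1 - evenProj 𝕜) * T := by
  refine entry_ext fun i j => ?_
  rw [sub_mul, one_mul, entry_sub, evenProj, entry_mul_diagL, entry_diagL_mul,
    boundedIndicator_apply, boundedIndicator_apply]
  by_cases hi : Even i <;> by_cases hj : Even j <;> simp [hi, hj, hT]

theorem prodMap_mem_idempotentCore_of_odd {E D : ℓ²(ℕ, 𝕜) →L[𝕜] ℓ²(ℕ, 𝕜)}
    (h : dyadicOp 𝕜 n * E = D * dyadicOp 𝕜 n)
    (hE : ∀ i j, (Even i ↔ Even j) → entry E i j = 0) :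
    E.prodMap D ∈ idempotentCore (graphAlg (dyadicOp 𝕜 n)) := by
  refine prodMap_mem_idempotentCore isIdempotentElem_evenProj (diagL_commute _ _) h
    (one_sub_evenProj_mul hE) (one_sub_evenProj_mul fun i j hij => ?_)
  rw [← entry_eq_zero_iff_of_intertwine h, hE i j hij]

theorem entry_rightShift (i j : ℕ) : entry (rightShift 𝕜) i j = if i = j + 1 then 1 else 0 := by
  simp [entry, rightShift_single, Pi.single_apply]

theorem entry_leftShift (i j : ℕ) : entry (leftShift 𝕜) i j = if j = i + 1 then 1 else 0 := by
  simp [entry, leftShift, l2Restrict_apply, Pi.single_apply, eq_comm]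

theorem exists_rightShift_prodMap_mem (hn : StrictMono n) :
    ∃ D, dyadicOp 𝕜 n * rightShift 𝕜 = D * dyadicOp 𝕜 n ∧
      (rightShift 𝕜).prodMap D ∈ idempotentCore (graphAlg (dyadicOp 𝕜 n)) := by
  obtain ⟨D, hD⟩ := exists_intertwine_of_lower hn (X := rightShift 𝕜) fun i j hij => by
    rw [entry_rightShift, if_neg (by omega)]
  refine ⟨D, hD, prodMap_mem_idempotentCore_of_odd hD fun i j hij => ?_⟩
  rw [entry_rightShift,
    if_neg (by rintro rfl; exact iff_not_self (hij.symm.trans Nat.even_add_one))]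

theorem exists_prodMap_leftShift_mem (hn : StrictMono n) :
    ∃ E, dyadicOp 𝕜 n * E = leftShift 𝕜 * dyadicOp 𝕜 n ∧
      E.prodMap (leftShift 𝕜) ∈ idempotentCore (graphAlg (dyadicOp 𝕜 n)) := by
  obtain ⟨E, hE⟩ := exists_intertwine_of_upper hn (X := leftShift 𝕜) fun i j hij => by
    rw [entry_leftShift, if_neg (by omega)]
  refine ⟨E, hE, prodMap_mem_idempotentCore_of_odd hE fun i j hij => ?_⟩
  rw [entry_eq_zero_iff_of_intertwine hE, entry_leftShift,
    if_neg (by rintro rfl; exact iff_not_self (hij.trans Nat.even_add_one))]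

theorem rightShift_mul_leftShift :
    rightShift 𝕜 * leftShift 𝕜 = 1 - diagL ℕ 𝕜 (boundedIndicator 𝕜 {0}) := by
  refine entry_ext fun i j => ?_
  have hone (i j : ℕ) : entry (1 : ℓ²(ℕ, 𝕜) →L[𝕜] ℓ²(ℕ, 𝕜)) i j = if i = j then 1 else 0 := by
    simp [entry, Pi.single_apply]
  rw [entry_sub, entry_diagL, boundedIndicator_apply, hone]
  rcases i with - | i
  · rw [entry_rightShift_mul_zero]
    rcases j with - | j <;> simp
  · rw [entry_rightShift_mul_succ, entry_leftShift]
    rcases j with - | j <;> simp [eq_comm]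

theorem prodMap_mem_idempotentCore_of_strictlyLower (hn : StrictMono n)
    {E D : ℓ²(ℕ, 𝕜) →L[𝕜] ℓ²(ℕ, 𝕜)} (h : dyadicOp 𝕜 n * E = D * dyadicOp 𝕜 n)
    (hE : ∀ i j, i ≤ j → entry E i j = 0) :
    E.prodMap D ∈ idempotentCore (graphAlg (dyadicOp 𝕜 n)) := by
  obtain ⟨R, hR, hcore⟩ := exists_rightShift_prodMap_mem (𝕜 := 𝕜) hn
  obtain ⟨D', hD'⟩ := exists_intertwine_of_lower hn (X := leftShift 𝕜 * E) fun i j hij => by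
    rw [entry_leftShift_mul, hE _ _ hij]
  have factorE : rightShift 𝕜 * (leftShift 𝕜 * E) = E := by
    refine entry_ext fun i j => ?_
    rcases i with - | i
    · rw [entry_rightShift_mul_zero, hE _ _ j.zero_le]
    · rw [entry_rightShift_mul_succ, entry_leftShift_mul]
  have factorD : R * D' = D := mul_right_cancel_dyadicOp (n := n) <| by
    rw [mul_assoc, ← hD', ← mul_assoc, ← hR, mul_assoc, factorE, h]
  rw [← factorE, ← factorD, ← prodMap_mul_prodMap]
  exact mul_mem_idempotentCore_right hcore (prodMap_mem_graphAlg hD')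

theorem prodMap_mem_idempotentCore_of_strictlyUpper (hn : StrictMono n)
    {E D : ℓ²(ℕ, 𝕜) →L[𝕜] ℓ²(ℕ, 𝕜)} (h : dyadicOp 𝕜 n * E = D * dyadicOp 𝕜 n)
    (hD : ∀ i j, j ≤ i → entry D i j = 0) :
    E.prodMap D ∈ idempotentCore (graphAlg (dyadicOp 𝕜 n)) := by
  obtain ⟨L, hL, hcore⟩ := exists_prodMap_leftShift_mem (𝕜 := 𝕜) hn
  obtain ⟨E', hE'⟩ := exists_intertwine_of_upper hn (X := D * rightShift 𝕜) fun i j hij => by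
    rw [entry_mul_rightShift, hD _ _ hij]
  have factorD : D * rightShift 𝕜 * leftShift 𝕜 = D := by
    refine entry_ext fun i j => ?_
    rcases j with - | j
    · rw [entry_mul_leftShift_zero, hD _ _ i.zero_le]
    · rw [entry_mul_leftShift_succ, entry_mul_rightShift]
  have factorE : E' * L = E := mul_left_cancel_dyadicOp (n := n) <| by
    rw [← mul_assoc, hE', mul_assoc, hL, ← mul_assoc, factorD, h]
  rw [← factorE, ← factorD, ← prodMap_mul_prodMap]
  exact mul_mem_idempotentCore_left (prodMap_mem_graphAlg hE') hcore

theorem exists_strictlyLower_part (hn : StrictMono n) {E D : ℓ²(ℕ, 𝕜) →L[𝕜] ℓ²(ℕ, 𝕜)}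
    (h : dyadicOp 𝕜 n * E = D * dyadicOp 𝕜 n) :
    ∃ E' D', dyadicOp 𝕜 n * E' = D' * dyadicOp 𝕜 n ∧
      ∀ i j, entry E' i j = if j < i then entry E i j else 0 := by
  obtain ⟨A, hA⟩ := exists_upper_companion hn D
  have hE' (i j : ℕ) : entry (E - A) i j = if j < i then entry E i j else 0 := by
    have hAij : entry A i j = if i ≤ j then entry E i j else 0 := by
      refine mul_left_cancel₀ (dyadicWeight_ne_zero (𝕜 := 𝕜) n i) ?_
      rw [← entry_diagL_mul, mul_ite, mul_zero, ← entry_diagL_mul]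
      exact (hA i j).trans (by rw [← h]; rfl)
    rw [entry_sub, hAij]
    split_ifs <;> first | omega | simp
  obtain ⟨D', hD'⟩ := exists_intertwine_of_lower hn (X := E - A) fun i j hij => by
    rw [hE', if_neg hij.not_gt]
  exact ⟨E - A, D', hD', hE'⟩

theorem exists_strictlyUpper_part (hn : StrictMono n) {E D : ℓ²(ℕ, 𝕜) →L[𝕜] ℓ²(ℕ, 𝕜)}
    (h : dyadicOp 𝕜 n * E = D * dyadicOp 𝕜 n) :
    ∃ E' D', dyadicOp 𝕜 n * E' = D' * dyadicOp 𝕜 n ∧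
      ∀ i j, entry D' i j = if i < j then entry D i j else 0 := by
  obtain ⟨A, hA⟩ := exists_lower_companion hn E
  have hD' (i j : ℕ) : entry (D - A) i j = if i < j then entry D i j else 0 := by
    have hAij : entry A i j = if j ≤ i then entry D i j else 0 := by
      refine mul_right_cancel₀ (dyadicWeight_ne_zero (𝕜 := 𝕜) n j) ?_
      rw [← entry_mul_diagL, ite_mul, zero_mul, ← entry_mul_diagL]
      exact (hA i j).trans (by rw [h]; rfl)
    rw [entry_sub, hAij]
    split_ifs <;> first | omega | simp
  obtain ⟨E', hE'⟩ := exists_intertwine_of_upper hn (X := D - A) fun i j hij => by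
    rw [hD', if_neg hij.not_gt]
  exact ⟨E', D - A, hE', hD'⟩

theorem prodMap_mem_idempotentClosure_of_diagonal {I : Type*} [DecidableEq I] {m : I → ℕ}
    {E D : ℓ²(I, 𝕜) →L[𝕜] ℓ²(I, 𝕜)} (h : dyadicOp 𝕜 m * E = D * dyadicOp 𝕜 m)
    (hE : ∀ i j, i ≠ j → entry E i j = 0) :
    E.prodMap D ∈ idempotentClosure (graphAlg (dyadicOp 𝕜 m)) := by
  let a := boundedFamily (fun i => entry E i i) fun i => norm_entry_le E i i
  have ha : E = diagL I 𝕜 a := entry_ext fun i j => by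
    rw [entry_diagL]
    split_ifs with hij
    · rw [hij]
      rfl
    · exact hE i j hij
  have hD : D = diagL I 𝕜 a := mul_right_cancel_dyadicOp (n := m) <| by
    rw [← h, ha]
    exact diagL_commute _ _
  rw [ha, hD]
  exact prodMap_diagL_mem_idempotentClosure a _

theorem prodMap_mem_idempotentClosure_of_strictMono (hn : StrictMono n)
    {E D : ℓ²(ℕ, 𝕜) →L[𝕜] ℓ²(ℕ, 𝕜)} (h : dyadicOp 𝕜 n * E = D * dyadicOp 𝕜 n) :
    E.prodMap D ∈ idempotentClosure (graphAlg (dyadicOp 𝕜 n)) := by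
  obtain ⟨E₁, D₁, h₁, hE₁⟩ := exists_strictlyLower_part hn h
  obtain ⟨E₂, D₂, h₂, hD₂⟩ := exists_strictlyUpper_part hn h
  have hlower := prodMap_mem_idempotentCore_of_strictlyLower hn h₁ fun i j hij => by
    rw [hE₁, if_neg hij.not_gt]
  have hupper := prodMap_mem_idempotentCore_of_strictlyUpper hn h₂ fun i j hij => by
    rw [hD₂, if_neg hij.not_gt]
  have hdiag : dyadicOp 𝕜 n * (E - E₁ - E₂) = (D - D₁ - D₂) * dyadicOp 𝕜 n := by
    simp only [mul_sub, sub_mul, h, h₁, h₂]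
  have hclosure := prodMap_mem_idempotentClosure_of_diagonal hdiag fun i j hij => by
    rcases hij.lt_or_gt with hij | hij
    · rw [entry_eq_zero_iff_of_intertwine hdiag, entry_sub, entry_sub, hD₂, if_pos hij,
        sub_right_comm, sub_self, zero_sub, neg_eq_zero, ← entry_eq_zero_iff_of_intertwine h₁,
        hE₁, if_neg hij.not_gt]
    · rw [entry_sub, entry_sub, hE₁, if_pos hij, sub_self, zero_sub, neg_eq_zero,
        entry_eq_zero_iff_of_intertwine h₂, hD₂, if_neg hij.not_gt]
  have hsum : E.prodMap D
      = (E - E₁ - E₂).prodMap (D - D₁ - D₂) + E₁.prodMap D₁ + E₂.prodMap D₂ := by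
    rw [← prodMap_add_prodMap, ← prodMap_add_prodMap, sub_right_comm E, sub_right_comm D]
    simp only [sub_add_cancel]
  rw [hsum]
  exact add_mem (add_mem hclosure
    (idempotentCore_le_idempotentClosure hlower)) (idempotentCore_le_idempotentClosure hupper)

theorem nilBlock_mem_idempotentClosure_of_strictMono (hn : StrictMono n)
    (Y : ℓ²(ℕ, 𝕜) →L[𝕜] ℓ²(ℕ, 𝕜)) :
    nilBlock (dyadicOp 𝕜 n) Y ∈ idempotentClosure (graphAlg (dyadicOp 𝕜 n)) := by
  obtain ⟨R, -, hR⟩ := exists_rightShift_prodMap_mem (𝕜 := 𝕜) hn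
  obtain ⟨L, hL, hU⟩ := exists_prodMap_leftShift_mem (𝕜 := 𝕜) hn
  let P := diagL ℕ 𝕜 (boundedIndicator 𝕜 {0})
  have hP : rightShift 𝕜 * leftShift 𝕜 = 1 - P := rightShift_mul_leftShift
  have hrows := mul_mem_idempotentCore_right hR
    (nilBlock_mem_graphAlg (dyadicOp 𝕜 n) (leftShift 𝕜 * Y))
  have hcols := mul_mem_idempotentCore_left
    (nilBlock_mem_graphAlg (dyadicOp 𝕜 n) (P * Y * rightShift 𝕜)) hU
  rw [prodMap_mul_nilBlock, ← mul_assoc, hP] at hrows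
  rw [nilBlock_mul_prodMap hL, mul_assoc, hP] at hcols
  have hcorner : P * Y * P = entry Y 0 0 • P := by
    refine entry_ext fun i j => ?_
    rw [entry_mul_diagL, entry_diagL_mul, entry_smul, entry_diagL,
      boundedIndicator_apply, boundedIndicator_apply]
    by_cases hi : i = 0 <;> by_cases hj : j = 0 <;> simp [hi, hj]
  have hPnil : nilBlock (dyadicOp 𝕜 n) P ∈ idempotentClosure (graphAlg (dyadicOp 𝕜 n)) := by
    refine nilBlock_mem_idempotentClosure (dyadicWeight_ne_zero n 0) (entry_ext fun i j => ?_)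
    rw [entry_smul, entry_mul_diagL, dyadicOp, entry_mul_diagL, entry_diagL]
    by_cases hi : i = 0 <;> by_cases hj : j = 0 <;> simp [hi, hj, boundedIndicator_apply]
  have hsum : Y = (1 - P) * Y + P * Y * (1 - P) + entry Y 0 0 • P := by
    rw [← hcorner]
    noncomm_ring
  rw [hsum, nilBlock_add, nilBlock_add, nilBlock_smul]
  exact add_mem (add_mem (idempotentCore_le_idempotentClosure hrows)
    (idempotentCore_le_idempotentClosure hcols)) (Subalgebra.smul_mem _ hPnil _)

theorem idempotentGenerated_graphAlg_of_strictMono (hn : StrictMono n) :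
    IdempotentGenerated (graphAlg (dyadicOp 𝕜 n)) := by
  intro T hT
  obtain ⟨E, D, Y, h, rfl⟩ := exists_eq_prodMap_add_nilBlock hT
  exact add_mem (prodMap_mem_idempotentClosure_of_strictMono hn h)
    (nilBlock_mem_idempotentClosure_of_strictMono hn Y)

end MonotoneModel

section GraphAlgDecomposition

variable {𝕜 K K₁ K₂ : Type*} [NontriviallyNormedField 𝕜] [NormedAddCommGroup K] [NormedSpace 𝕜 K]
  [NormedAddCommGroup K₁] [NormedSpace 𝕜 K₁] [NormedAddCommGroup K₂] [NormedSpace 𝕜 K₂]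
  {w : K →L[𝕜] K} {w₁ : K₁ →L[𝕜] K₁} {w₂ : K₂ →L[𝕜] K₂}

theorem idempotentGenerated_graphAlg_of_prodEquiv (f : K ≃L[𝕜] K₁ × K₂)
    (hf : ∀ x, f (w x) = (w₁ (f x).1, w₂ (f x).2))
    (h : IdempotentGenerated (pairAlg
      ((LinearMap.graph (w₁ : K₁ →ₗ[𝕜] K₁)).prod (LinearMap.graph (w₂ : K₂ →ₗ[𝕜] K₂)))
      ((Submodule.prod ⊤ ⊥).prod (Submodule.prod ⊤ ⊥)))) :
    IdempotentGenerated (graphAlg w) := by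
  refine h.of_equiv ((ContinuousLinearEquiv.prodProdProdComm 𝕜 K₁ K₁ K₂ K₂).trans
    (f.symm.prodCongr f.symm)) (fun x => ?_) fun x => ?_
  · change f.symm (x.1.2, x.2.2) = w (f.symm (x.1.1, x.2.1)) ↔
      x.1.2 = w₁ x.1.1 ∧ x.2.2 = w₂ x.2.1
    rw [f.symm_apply_eq, hf, f.apply_symm_apply, Prod.mk.injEq]
  · change True ∧ f.symm (x.1.2, x.2.2) = 0 ↔ (True ∧ x.1.2 = 0) ∧ True ∧ x.2.2 = 0
    rw [f.symm.map_eq_zero_iff, Prod.mk_eq_zero]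
    simp only [true_and]

end GraphAlgDecomposition

section DyadicModel

universe u

variable {I J J' 𝕜 : Type*} [RCLike 𝕜]

theorem lpSumEquiv_dyadicOp (e : J ⊕ J' ≃ I) (n : I → ℕ) (x : ℓ²(I, 𝕜)) :
    lpSumEquiv 𝕜 e (dyadicOp 𝕜 n x) =
      (dyadicOp 𝕜 (fun j => n (e (.inl j))) (lpSumEquiv 𝕜 e x).1,
        dyadicOp 𝕜 (fun j => n (e (.inr j))) (lpSumEquiv 𝕜 e x).2) := rfl

theorem idempotentGenerated_graphAlg_of_sumEquiv {n : I → ℕ} (e : J ⊕ J' ≃ I)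
    (h₁ : IdempotentGenerated (graphAlg (dyadicOp 𝕜 fun j => n (e (.inl j)))))
    (h₂ : IdempotentGenerated (graphAlg (dyadicOp 𝕜 fun j => n (e (.inr j))))) :
    IdempotentGenerated (graphAlg (dyadicOp 𝕜 n)) :=
  idempotentGenerated_graphAlg_of_prodEquiv (lpSumEquiv 𝕜 e) (lpSumEquiv_dyadicOp e n) (h₁.prod h₂)

theorem idempotentGenerated_graphAlg_of_copies {n : I → ℕ} (e : J ⊕ J ≃ I)
    (hn : ∀ j, n (e (.inl j)) = n (e (.inr j))) :
    IdempotentGenerated (graphAlg (dyadicOp 𝕜 n)) := by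
  have hn' : (fun j => n (e (.inr j))) = fun j => n (e (.inl j)) := funext fun j => (hn j).symm
  refine idempotentGenerated_graphAlg_of_prodEquiv (lpSumEquiv 𝕜 e) (fun x => ?_)
    (idempotentGenerated_pairAlg_prod_self _ _) (w₁ := dyadicOp 𝕜 fun j => n (e (.inl j)))
  rw [lpSumEquiv_dyadicOp, hn']

theorem idempotentGenerated_graphAlg_of_subsingleton [Subsingleton I] (n : I → ℕ) :
    IdempotentGenerated (graphAlg (dyadicOp 𝕜 n)) := by
  classical
  intro T hT
  obtain ⟨E, D, Y, h, rfl⟩ := exists_eq_prodMap_add_nilBlock hT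
  refine add_mem (prodMap_mem_idempotentClosure_of_diagonal h fun i j hij =>
    absurd (Subsingleton.elim i j) hij) ?_
  rcases isEmpty_or_nonempty I with hI | ⟨⟨i⟩⟩
  · rw [Subsingleton.elim (nilBlock _ Y) 0]
    exact zero_mem _
  · have scalar (X : ℓ²(I, 𝕜) →L[𝕜] ℓ²(I, 𝕜)) : X = entry X i i • 1 := entry_ext fun k l => by
      rw [Subsingleton.elim k i, Subsingleton.elim l i]
      simp [entry]
    rw [scalar Y, nilBlock_smul]
    refine Subalgebra.smul_mem _ (nilBlock_mem_idempotentClosure (dyadicWeight_ne_zero n i) ?_) _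
    rw [one_mul, mul_one]
    exact (scalar _).trans (by rw [dyadicOp, entry_diagL, if_pos rfl])

theorem idempotentGenerated_graphAlg_of_finite [Finite I] (n : I → ℕ) :
    IdempotentGenerated (graphAlg (dyadicOp 𝕜 n)) := by
  induction I using Finite.induction_empty_option with
  | of_equiv e ih =>
    exact idempotentGenerated_graphAlg_of_sumEquiv ((Equiv.sumEmpty _ Empty).trans e) (ih _)
      (idempotentGenerated_graphAlg_of_subsingleton _)
  | h_empty => exact idempotentGenerated_graphAlg_of_subsingleton n
  | h_option ih =>
    exact idempotentGenerated_graphAlg_of_sumEquiv (Equiv.optionEquivSumPUnit.{0} _).symm (ih _)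
      (idempotentGenerated_graphAlg_of_subsingleton _)

theorem idempotentGenerated_graphAlg_of_injective {n : I → ℕ} (hn : Function.Injective n) :
    IdempotentGenerated (graphAlg (dyadicOp 𝕜 n)) := by
  rcases finite_or_infinite I with _ | _
  · exact idempotentGenerated_graphAlg_of_finite n
  · have : Infinite (Set.range n) := Set.infinite_range_of_injective hn |>.to_subtype
    let e : ℕ ≃ I := (Nat.Subtype.orderIsoOfNat (Set.range n)).toEquiv.trans
      (Equiv.ofInjective n hn).symm
    have hne (k : ℕ) : n (e k) = Nat.Subtype.orderIsoOfNat (Set.range n) k :=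
      Equiv.apply_ofInjective_symm hn _
    refine idempotentGenerated_graphAlg_of_sumEquiv ((Equiv.sumEmpty ℕ Empty).trans e)
      (idempotentGenerated_graphAlg_of_strictMono fun k l hkl => ?_)
      (idempotentGenerated_graphAlg_of_subsingleton _)
    simpa [hne] using hkl

open Cardinal in
theorem exists_equiv_sum_self_sum_subsingleton (F : Type u) :
    ∃ X Z : Type u, Subsingleton Z ∧ Nonempty ((X ⊕ X) ⊕ Z ≃ F) := by
  obtain ⟨c, d, hd, h⟩ : ∃ c d : Cardinal.{u}, d ≤ 1 ∧ c + c + d = #F := by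
    rcases finite_or_infinite F with _ | _
    · refine ⟨(Nat.card F / 2 : ℕ), (Nat.card F % 2 : ℕ), ?_, ?_⟩
      · exact_mod_cast Nat.le_of_lt_succ (Nat.mod_lt _ two_pos)
      · rw [← Nat.cast_card]
        norm_cast
        omega
    · exact ⟨#F, 0, zero_le_one, by rw [add_zero, add_eq_self (aleph0_le_mk F)]⟩
  refine ⟨c.out, d.out, le_one_iff_subsingleton.1 (by rwa [mk_out]), Cardinal.eq.1 ?_⟩
  rw [mk_sum, mk_sum]
  simpa using h

theorem exists_equiv_copies_sum_injective {I : Type u} (n : I → ℕ) :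
    ∃ (X Z : Type u) (e : (X ⊕ X) ⊕ Z ≃ I),
      (∀ x, n (e (.inl (.inl x))) = n (e (.inl (.inr x)))) ∧
        Function.Injective fun z => n (e (.inr z)) := by
  choose X Z hZ e using fun k => exists_equiv_sum_self_sum_subsingleton {i // n i = k}
  let f : ((Σ k, X k) ⊕ Σ k, X k) ⊕ (Σ k, Z k) ≃ I :=
    ((((Equiv.sigmaSumDistrib X X).symm.sumCongr (.refl _)).trans
      (Equiv.sigmaSumDistrib _ Z).symm).trans (Equiv.sigmaCongrRight fun k => (e k).some)).trans
        (Equiv.sigmaFiberEquiv n)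
  have hfX (x : Σ k, X k) : n (f (.inl (.inl x))) = x.1 ∧ n (f (.inl (.inr x))) = x.1 :=
    ⟨((e x.1).some (.inl (.inl x.2))).2, ((e x.1).some (.inl (.inr x.2))).2⟩
  have hfZ (z : Σ k, Z k) : n (f (.inr z)) = z.1 := ((e z.1).some (.inr z.2)).2
  refine ⟨_, _, f, fun x => (hfX x).1.trans (hfX x).2.symm, ?_⟩
  rintro ⟨k, z⟩ ⟨l, z'⟩ hzz'
  obtain rfl : k = l := by simpa only [hfZ] using hzz'
  rw [Subsingleton.elim z z']

theorem idempotentGenerated_graphAlg_dyadicOp (n : I → ℕ) :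
    IdempotentGenerated (graphAlg (dyadicOp 𝕜 n)) := by
  obtain ⟨X, Z, e, hX, hZ⟩ := exists_equiv_copies_sum_injective n
  exact idempotentGenerated_graphAlg_of_sumEquiv e
    (idempotentGenerated_graphAlg_of_copies (.refl _) hX)
    (idempotentGenerated_graphAlg_of_injective hZ)

end DyadicModel

section TrivialPair

variable {𝕜 K : Type*} [NontriviallyNormedField 𝕜] [NormedAddCommGroup K] [NormedSpace 𝕜 K]

theorem pairAlg_top_bot : pairAlg (⊤ : Submodule 𝕜 K) ⊥ = ⊤ :=
  eq_top_iff.2 fun T _ => ⟨fun _ _ => trivial, fun _ hx => hx ▸ map_zero T⟩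

theorem pairAlg_bot_top : pairAlg (⊥ : Submodule 𝕜 K) ⊤ = ⊤ :=
  eq_top_iff.2 fun T _ => ⟨fun _ hx => hx ▸ map_zero T, fun _ _ => trivial⟩

end TrivialPair

section FullAlgebra

variable {𝕜 K : Type*} [RCLike 𝕜] [NormedAddCommGroup K] [InnerProductSpace 𝕜 K] [CompleteSpace K]

-- `B(K)` is the quotient of the graph algebra of the identity by the operators vanishing on the
-- graph.
theorem idempotentGenerated_top :
    IdempotentGenerated (⊤ : Subalgebra 𝕜 (K →L[𝕜] K)) := by
  intro X _
  obtain ⟨I, b, -⟩ := exists_hilbertBasis 𝕜 K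
  let e : K ≃L[𝕜] ℓ²(I, 𝕜) := b.repr.toContinuousLinearEquiv
  let w : ℓ²(I, 𝕜) →L[𝕜] ℓ²(I, 𝕜) := dyadicOp 𝕜 fun _ => 0
  have hw (x : ℓ²(I, 𝕜)) : w x = x := by
    ext i
    simp [w, dyadicOp_apply]
  let Φ : ℓ²(I, 𝕜) × ℓ²(I, 𝕜) →L[𝕜] K := (e.symm : ℓ²(I, 𝕜) →L[𝕜] K) ∘L .snd 𝕜 _ _
  let Ψ : K →L[𝕜] ℓ²(I, 𝕜) × ℓ²(I, 𝕜) := (e : K →L[𝕜] ℓ²(I, 𝕜)).prod e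
  have hΨ {T} (hT : T ∈ graphAlg w) (x : K) : T (Ψ x) = Ψ (Φ (T (Ψ x))) := by
    have h : (T (Ψ x)).2 = (T (Ψ x)).1 := (hT.1 (e x, e x) (hw (e x)).symm).trans (hw _)
    refine Prod.ext (h.symm.trans ?_) ?_ <;> exact (e.apply_symm_apply _).symm
  let Y : ℓ²(I, 𝕜) →L[𝕜] ℓ²(I, 𝕜) := (e : K →L[𝕜] ℓ²(I, 𝕜)) ∘L X ∘L (e.symm : ℓ²(I, 𝕜) →L[𝕜] K)
  have hY : Y.prodMap Y ∈ graphAlg w := prodMap_mem_graphAlg (by ext1 x; simp [hw])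
  have h := (idempotentGenerated_graphAlg_dyadicOp fun _ => 0).map_mem_idempotentClosure
    (S := ⊤) (sandwich Φ Ψ) (fun _ _ => trivial)
    (fun T _ T' hT' => by ext x; exact congrArg (fun y => Φ (T y)) (hΨ hT' x)) hY
  convert h
  ext x
  simp [sandwich_apply, Φ, Ψ, Y]

end FullAlgebra

section OrthogonalLevels

universe u

variable {𝕜 E F G : Type*} {K : Type u} [RCLike 𝕜] [NormedAddCommGroup E] [InnerProductSpace 𝕜 E]
  [NormedAddCommGroup F] [InnerProductSpace 𝕜 F] [NormedAddCommGroup G] [InnerProductSpace 𝕜 G]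
  [NormedAddCommGroup K] [InnerProductSpace 𝕜 K]

theorem norm_sum_sq_of_pairwise_inner_eq_zero {ι : Type*} {s : Finset ι} {v : ι → E}
    (hv : Pairwise fun i j => ⟪v i, v j⟫_𝕜 = 0) : ‖∑ i ∈ s, v i‖ ^ 2 = ∑ i ∈ s, ‖v i‖ ^ 2 := by
  classical
  induction s using Finset.induction_on with
  | empty => simp
  | insert i s hi ih =>
    have h : ⟪v i, ∑ j ∈ s, v j⟫_𝕜 = 0 := by
      rw [inner_sum]
      exact Finset.sum_eq_zero fun j hj => hv (ne_of_mem_of_not_mem hj hi).symm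
    rw [Finset.sum_insert hi, Finset.sum_insert hi, ← ih, sq, sq, sq,
      norm_add_sq_eq_norm_sq_add_norm_sq_of_inner_eq_zero _ _ h]

theorem norm_apply_le_of_pairwise_inner_eq_zero {ι : Type*} {V : ι → Submodule 𝕜 E}
    (hV : (⨆ i, V i).topologicalClosure = ⊤) {A : E →L[𝕜] F} {B : E →L[𝕜] G}
    (hA : Pairwise fun i j => ∀ x ∈ V i, ∀ y ∈ V j, ⟪A x, A y⟫_𝕜 = 0)
    (hB : Pairwise fun i j => ∀ x ∈ V i, ∀ y ∈ V j, ⟪B x, B y⟫_𝕜 = 0)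
    (hAB : ∀ i, ∀ x ∈ V i, ‖A x‖ ≤ ‖B x‖) (x : E) : ‖A x‖ ≤ ‖B x‖ := by
  have hdense : Dense ((⨆ i, V i : Submodule 𝕜 E) : Set E) :=
    Submodule.dense_iff_topologicalClosure_eq_top.2 hV
  refine hdense.induction ?_ (isClosed_le (by fun_prop) (by fun_prop)) x
  intro y hy
  obtain ⟨f, hf, rfl⟩ := (Submodule.mem_iSup_iff_exists_finsupp V y).1 hy
  refine le_of_sq_le_sq ?_ (norm_nonneg _)
  rw [Finsupp.sum, map_sum, map_sum,
    norm_sum_sq_of_pairwise_inner_eq_zero (𝕜 := 𝕜) fun i j hij => hA hij _ (hf i) _ (hf j),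
    norm_sum_sq_of_pairwise_inner_eq_zero (𝕜 := 𝕜) fun i j hij => hB hij _ (hf i) _ (hf j)]
  gcongr with i
  exact hAB i _ (hf i)

theorem exists_hilbertBasis_mem_of_orthogonalFamily [CompleteSpace K] {ι : Type}
    {V : ι → Submodule 𝕜 K}
    (hV : OrthogonalFamily 𝕜 (fun i => V i) fun i => (V i).subtypeₗᵢ)
    (hcl : ∀ i, IsClosed (V i : Set K)) (hdense : (⨆ i, V i).topologicalClosure = ⊤) :
    ∃ (I : Type u) (n : I → ι) (b : HilbertBasis I 𝕜 K), ∀ i, b i ∈ V (n i) := by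
  have (i : ι) : CompleteSpace (V i) := (hcl i).completeSpace_coe
  choose X b _ using fun i => exists_hilbertBasis 𝕜 (V i)
  let v (i : Σ k, X k) : K := (b i.1 i.2 : V i.1)
  have hv : Orthonormal 𝕜 v := hV.orthonormal_sigma_orthonormal fun k => (b k).orthonormal
  have hspan (k : ι) : V k ≤ (Submodule.span 𝕜 (Set.range v)).topologicalClosure := by
    intro x hx
    refine (Submodule.isClosed_topologicalClosure _).mem_of_tendsto
      (((b k).hasSum_repr ⟨x, hx⟩).mapL (V k).subtypeL) (.of_forall fun s => ?_)
    refine Submodule.sum_mem _ fun j _ => Submodule.le_topologicalClosure _ ?_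
    exact Submodule.smul_mem _ _ (Submodule.subset_span ⟨⟨k, j⟩, rfl⟩)
  refine ⟨Σ k, X k, Sigma.fst, .mk hv ?_, fun i => ?_⟩
  · rw [← hdense]
    exact Submodule.topologicalClosure_minimal _ (iSup_le hspan)
      (Submodule.isClosed_topologicalClosure _)
  · rw [HilbertBasis.coe_mk]
    exact (b i.1 i.2).2

/-- The `k`-th step `W k ⊖ W (k + 1)` of a decreasing filtration by subspaces. -/
def filtrationStep (W : ℕ → Submodule 𝕜 K) (k : ℕ) : Submodule 𝕜 K :=
  W k ⊓ (W (k + 1))ᗮ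

variable {W : ℕ → Submodule 𝕜 K}

theorem filtrationStep_le_orthogonal (hW : Antitone W) {k l : ℕ} (hkl : k < l) :
    filtrationStep W k ≤ (W l)ᗮ :=
  inf_le_right.trans (Submodule.orthogonal_le (hW hkl))

theorem orthogonalFamily_filtrationStep (hW : Antitone W) :
    OrthogonalFamily 𝕜 (fun k => filtrationStep W k) fun k => (filtrationStep W k).subtypeₗᵢ := by
  refine OrthogonalFamily.of_pairwise fun k l hkl => ?_
  rcases hkl.lt_or_gt with h | h
  · exact (filtrationStep_le_orthogonal hW h).trans (Submodule.orthogonal_le inf_le_left)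
  · exact Submodule.isOrtho_comm.1 <|
      (filtrationStep_le_orthogonal hW h).trans (Submodule.orthogonal_le inf_le_left)

theorem topologicalClosure_iSup_filtrationStep [CompleteSpace K] (hW : Antitone W)
    (hcl : ∀ k, IsClosed (W k : Set K)) (htop : W 0 = ⊤) (hbot : ⨅ k, W k = ⊥) :
    (⨆ k, filtrationStep W k).topologicalClosure = ⊤ := by
  rw [Submodule.topologicalClosure_eq_top_iff, Submodule.eq_bot_iff]
  intro x hx
  suffices ∀ k, x ∈ W k by simpa [hbot] using (Submodule.mem_iInf W).2 this
  intro k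
  induction k with
  | zero => simp [htop]
  | succ k ih =>
    have : CompleteSpace (W (k + 1)) := (hcl (k + 1)).completeSpace_coe
    obtain ⟨u, hu, t, ht, rfl⟩ := (W (k + 1)).exists_add_mem_mem_orthogonal x
    have htk : t ∈ filtrationStep W k :=
      ⟨by simpa using (W k).sub_mem ih (hW k.le_succ hu), ht⟩
    have htx : ⟪t, u + t⟫_𝕜 = 0 := hx t (Submodule.mem_iSup_of_mem k htk)
    rw [inner_add_right, Submodule.inner_left_of_mem_orthogonal hu ht, zero_add,
      inner_self_eq_zero] at htx
    simpa [htx] using hu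

end OrthogonalLevels

section Spectral

variable {K : Type*} [NormedAddCommGroup K] [InnerProductSpace ℂ K] [CompleteSpace K]

/-- The spectral subspace of the self-adjoint operator `b` for the interval `(-∞, r]`,
encoded as the kernel of the positive part of `b - r`. -/
noncomputable def spectralSubspace (b : K →L[ℂ] K) (r : ℝ) : Submodule ℂ K :=
  (b - algebraMap ℝ (K →L[ℂ] K) r)⁺.ker

variable {b : K →L[ℂ] K} {r s : ℝ} {x : K}

theorem mem_spectralSubspace :
    x ∈ spectralSubspace b r ↔ (b - algebraMap ℝ (K →L[ℂ] K) r)⁺ x = 0 := Iff.rfl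

theorem isClosed_spectralSubspace : IsClosed (spectralSubspace b r : Set K) :=
  ContinuousLinearMap.isClosed_ker _

theorem apply_mem_spectralSubspace {T : K →L[ℂ] K} (hT : Commute b T)
    (hx : x ∈ spectralSubspace b r) : T x ∈ spectralSubspace b r := by
  have h : Commute (b - algebraMap ℝ (K →L[ℂ] K) r)⁺ T :=
    (hT.sub_left (Algebra.commutes r T)).cfcₙ_real _
  rw [mem_spectralSubspace] at hx ⊢
  rw [← mul_apply_eq_comp, h.eq, mul_apply_eq_comp, hx, map_zero]

theorem re_inner_eq_add_posPart_sub_negPart (hb : IsSelfAdjoint b) (r : ℝ) (x : K) :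
    RCLike.re ⟪b x, x⟫_ℂ = r * ‖x‖ ^ 2 +
      RCLike.re ⟪(b - algebraMap ℝ (K →L[ℂ] K) r)⁺ x, x⟫_ℂ -
      RCLike.re ⟪(b - algebraMap ℝ (K →L[ℂ] K) r)⁻ x, x⟫_ℂ := by
  have hsub : (b - algebraMap ℝ (K →L[ℂ] K) r)⁺ - (b - algebraMap ℝ (K →L[ℂ] K) r)⁻ =
      b - algebraMap ℝ (K →L[ℂ] K) r :=
    CFC.posPart_sub_negPart _ (hb.sub (.algebraMap _ (.all r)))
  have hx : b x = (r : ℂ) • x + (b - algebraMap ℝ (K →L[ℂ] K) r)⁺ x -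
      (b - algebraMap ℝ (K →L[ℂ] K) r)⁻ x := by
    rw [add_sub_assoc, ← sub_apply, hsub, Algebra.algebraMap_eq_smul_one]
    exact (add_sub_cancel (r • x) (b x)).symm
  rw [hx, inner_sub_left, inner_add_left, inner_smul_left, inner_self_eq_norm_sq_to_K]
  simp [← Complex.ofReal_pow]

theorem re_inner_posPart_nonneg (a : K →L[ℂ] K) (x : K) : 0 ≤ RCLike.re ⟪a⁺ x, x⟫_ℂ :=
  ((ContinuousLinearMap.nonneg_iff_isPositive _).1 (CFC.posPart_nonneg a)).re_inner_nonneg_left x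

theorem re_inner_negPart_nonneg (a : K →L[ℂ] K) (x : K) : 0 ≤ RCLike.re ⟪a⁻ x, x⟫_ℂ :=
  ((ContinuousLinearMap.nonneg_iff_isPositive _).1 (CFC.negPart_nonneg a)).re_inner_nonneg_left x

theorem re_inner_le_of_mem_spectralSubspace (hb : IsSelfAdjoint b)
    (hx : x ∈ spectralSubspace b r) : RCLike.re ⟪b x, x⟫_ℂ ≤ r * ‖x‖ ^ 2 := by
  rw [re_inner_eq_add_posPart_sub_negPart hb r x, mem_spectralSubspace.1 hx, inner_zero_left,
    map_zero, add_zero]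
  exact sub_le_self _ (re_inner_negPart_nonneg _ x)

theorem negPart_apply_mem_spectralSubspace (x : K) :
    (b - algebraMap ℝ (K →L[ℂ] K) r)⁻ x ∈ spectralSubspace b r := by
  rw [mem_spectralSubspace, ← mul_apply_eq_comp, CFC.posPart_mul_negPart]
  rfl

theorem negPart_posPart_apply (x : K) :
    (b - algebraMap ℝ (K →L[ℂ] K) r)⁻ ((b - algebraMap ℝ (K →L[ℂ] K) r)⁺ x) = 0 := by
  rw [← mul_apply_eq_comp, CFC.negPart_mul_posPart]
  rfl

theorem le_re_inner_of_mem_orthogonal_spectralSubspace (hb : IsSelfAdjoint b)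
    (hx : x ∈ (spectralSubspace b r)ᗮ) : r * ‖x‖ ^ 2 ≤ RCLike.re ⟪b x, x⟫_ℂ := by
  rw [re_inner_eq_add_posPart_sub_negPart hb r x, hx _ (negPart_apply_mem_spectralSubspace x),
    map_zero, sub_zero]
  exact le_add_of_nonneg_right (re_inner_posPart_nonneg _ x)

theorem spectralSubspace_mono (hb : IsSelfAdjoint b) : Monotone (spectralSubspace b) := by
  refine monotone_iff_forall_lt.2 fun s r hsr x hx => ?_
  set y := (b - algebraMap ℝ (K →L[ℂ] K) r)⁺ x with hy
  have hy_mem : y ∈ spectralSubspace b s :=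
    apply_mem_spectralSubspace
      (((Commute.refl b).sub_left (Algebra.commutes r b)).cfcₙ_real _).symm hx
  have hle : r * ‖y‖ ^ 2 ≤ s * ‖y‖ ^ 2 := by
    refine le_trans ?_ (re_inner_le_of_mem_spectralSubspace hb hy_mem)
    rw [re_inner_eq_add_posPart_sub_negPart hb r y, hy, negPart_posPart_apply, inner_zero_left,
      map_zero, sub_zero]
    exact le_add_of_nonneg_right (re_inner_posPart_nonneg _ _)
  by_contra hne
  exact hsr.not_ge (le_of_mul_le_mul_right hle (pow_pos (norm_pos_iff.2 hne) 2))

theorem spectralSubspace_eq_top (hb : IsSelfAdjoint b) (hr : ‖b‖ ≤ r) :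
    spectralSubspace b r = ⊤ := by
  have hle : b ≤ algebraMap ℝ (K →L[ℂ] K) r :=
    hb.le_algebraMap_norm_self.trans (algebraMap_mono (K →L[ℂ] K) hr)
  have hzero : (b - algebraMap ℝ (K →L[ℂ] K) r)⁺ = 0 :=
    (CFC.posPart_eq_zero_iff _ (hb.sub (.algebraMap _ (.all r)))).2 (sub_nonpos.2 hle)
  exact eq_top_iff.2 fun x _ => by rw [mem_spectralSubspace, hzero]; rfl

end Spectral

section DyadicFiltration

universe u

variable {K : Type u} {F : Type*} [NormedAddCommGroup K] [InnerProductSpace ℂ K] [CompleteSpace K]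
  [NormedAddCommGroup F] [InnerProductSpace ℂ F] [CompleteSpace F] {R : K →L[ℂ] F}

/-- The spectral subspaces of `|R|` for the intervals `[0, 2⁻ᵏ]`, written in terms of
`|R|² = R†R`. -/
noncomputable def dyadicFiltration (R : K →L[ℂ] F) (k : ℕ) : Submodule ℂ K :=
  spectralSubspace (R.adjoint ∘L R) ((1 / 4) ^ k)

theorem isSelfAdjoint_adjoint_comp (R : K →L[ℂ] F) : IsSelfAdjoint (R.adjoint ∘L R) :=
  R.isPositive_adjoint_comp_self.isSelfAdjoint

theorem re_inner_adjoint_comp_apply (R : K →L[ℂ] F) (x : K) :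
    RCLike.re ⟪(R.adjoint ∘L R) x, x⟫_ℂ = ‖R x‖ ^ 2 := by
  rw [ContinuousLinearMap.comp_apply, ContinuousLinearMap.adjoint_inner_left,
    inner_self_eq_norm_sq]

theorem antitone_dyadicFiltration : Antitone (dyadicFiltration R) := fun _ _ h =>
  spectralSubspace_mono (isSelfAdjoint_adjoint_comp R)
    (pow_le_pow_of_le_one (by norm_num) (by norm_num) h)

theorem dyadicFiltration_zero (hR : ‖R‖ ≤ 1) : dyadicFiltration R 0 = ⊤ :=
  spectralSubspace_eq_top (isSelfAdjoint_adjoint_comp R) <| by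
    rw [R.norm_adjoint_comp_self, pow_zero]
    exact mul_le_one₀ hR (norm_nonneg R) hR

theorem norm_apply_le_of_mem_dyadicFiltration {k : ℕ} {x : K} (hx : x ∈ dyadicFiltration R k) :
    ‖R x‖ ≤ (1 / 2) ^ k * ‖x‖ := by
  have h := re_inner_le_of_mem_spectralSubspace (isSelfAdjoint_adjoint_comp R) hx
  rw [re_inner_adjoint_comp_apply] at h
  refine le_of_sq_le_sq (h.trans_eq ?_) (by positivity)
  rw [mul_pow, ← pow_mul, mul_comm k, pow_mul]
  norm_num

theorem le_norm_apply_of_mem_orthogonal_dyadicFiltration {k : ℕ} {x : K}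
    (hx : x ∈ (dyadicFiltration R k)ᗮ) : (1 / 2) ^ k * ‖x‖ ≤ ‖R x‖ := by
  have h := le_re_inner_of_mem_orthogonal_spectralSubspace (isSelfAdjoint_adjoint_comp R) hx
  rw [re_inner_adjoint_comp_apply] at h
  refine le_of_sq_le_sq (h.trans_eq' ?_) (norm_nonneg _)
  rw [mul_pow, ← pow_mul, mul_comm k, pow_mul]
  norm_num

theorem iInf_dyadicFiltration (hR : Function.Injective R) : ⨅ k, dyadicFiltration R k = ⊥ := by
  rw [Submodule.eq_bot_iff]
  intro x hx
  have hle (k : ℕ) : ‖R x‖ ≤ (1 / 2) ^ k * ‖x‖ :=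
    norm_apply_le_of_mem_dyadicFiltration ((Submodule.mem_iInf _).1 hx k)
  have hlim : Filter.Tendsto (fun k : ℕ => (1 / 2 : ℝ) ^ k * ‖x‖) Filter.atTop (nhds 0) := by
    simpa using (tendsto_pow_atTop_nhds_zero_of_lt_one (r := (1 / 2 : ℝ)) (by norm_num)
      (by norm_num)).mul_const ‖x‖
  have hRx : R x = 0 := norm_le_zero_iff.1 (ge_of_tendsto' hlim hle)
  exact hR (hRx.trans (map_zero R).symm)

theorem inner_apply_eq_zero_of_mem_dyadicFiltration {k : ℕ} {x y : K}
    (hx : x ∈ (dyadicFiltration R k)ᗮ) (hy : y ∈ dyadicFiltration R k) : ⟪R x, R y⟫_ℂ = 0 := by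
  rw [← ContinuousLinearMap.adjoint_inner_right]
  exact Submodule.inner_left_of_mem_orthogonal
    (apply_mem_spectralSubspace (Commute.refl (R.adjoint ∘L R)) hy) hx

theorem inner_apply_eq_zero_of_mem_filtrationStep {k l : ℕ} (hkl : k ≠ l) {x y : K}
    (hx : x ∈ filtrationStep (dyadicFiltration R) k)
    (hy : y ∈ filtrationStep (dyadicFiltration R) l) : ⟪R x, R y⟫_ℂ = 0 := by
  rcases hkl.lt_or_gt with h | h
  · exact inner_apply_eq_zero_of_mem_dyadicFiltration
      (filtrationStep_le_orthogonal antitone_dyadicFiltration h hx) hy.1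
  · exact inner_eq_zero_symm.1 <| inner_apply_eq_zero_of_mem_dyadicFiltration
      (filtrationStep_le_orthogonal antitone_dyadicFiltration h hy) hx.1

end DyadicFiltration

section DyadicBasis

variable {𝕜 I K : Type*} [RCLike 𝕜] [NormedAddCommGroup K] [InnerProductSpace 𝕜 K]

theorem dyadicOp_repr_of_mem {V : ℕ → Submodule 𝕜 K}
    (hV : OrthogonalFamily 𝕜 (fun k => V k) fun k => (V k).subtypeₗᵢ) {n : I → ℕ}
    {b : HilbertBasis I 𝕜 K} (hb : ∀ i, b i ∈ V (n i)) {k : ℕ} {x : K} (hx : x ∈ V k) :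
    dyadicOp 𝕜 n (b.repr x) = (1 / 2 : 𝕜) ^ k • b.repr x := by
  ext i
  rw [dyadicOp_apply, lp.coeFn_smul, Pi.smul_apply, smul_eq_mul]
  by_cases hik : n i = k
  · rw [hik]
  · have hzero : b.repr x i = 0 :=
      (b.repr_apply_apply x i).trans (hV hik ⟨b i, hb i⟩ ⟨x, hx⟩)
    rw [hzero, mul_zero, mul_zero]

end DyadicBasis

section DyadicBounds

universe u

variable {K : Type u} {F : Type*} [NormedAddCommGroup K] [InnerProductSpace ℂ K] [CompleteSpace K]
  [NormedAddCommGroup F] [InnerProductSpace ℂ F] [CompleteSpace F] {R : K →L[ℂ] F}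

theorem exists_hilbertBasis_dyadicOp_bounds (hR : ‖R‖ ≤ 1) (hinj : Function.Injective R) :
    ∃ (I : Type u) (n : I → ℕ) (b : HilbertBasis I ℂ K), ∀ x,
      ‖dyadicOp ℂ n (b.repr x)‖ ≤ 2 * ‖R x‖ ∧ ‖R x‖ ≤ ‖dyadicOp ℂ n (b.repr x)‖ := by
  let V : ℕ → Submodule ℂ K := filtrationStep (dyadicFiltration R)
  have hV : OrthogonalFamily ℂ (fun k => V k) fun k => (V k).subtypeₗᵢ :=
    orthogonalFamily_filtrationStep antitone_dyadicFiltration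
  have hdense : (⨆ k, V k).topologicalClosure = ⊤ :=
    topologicalClosure_iSup_filtrationStep antitone_dyadicFiltration
      (fun _ => isClosed_spectralSubspace) (dyadicFiltration_zero hR) (iInf_dyadicFiltration hinj)
  obtain ⟨I, n, b, hb⟩ := exists_hilbertBasis_mem_of_orthogonalFamily hV
    (fun _ => isClosed_spectralSubspace.inter (Submodule.isClosed_orthogonal _)) hdense
  let D : K →L[ℂ] ℓ²(I, ℂ) := dyadicOp ℂ n ∘L b.repr.toContinuousLinearEquiv
  have hD {k : ℕ} {x : K} (hx : x ∈ V k) : D x = (1 / 2 : ℂ) ^ k • b.repr x :=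
    dyadicOp_repr_of_mem hV hb hx
  have hDnorm {k : ℕ} {x : K} (hx : x ∈ V k) : ‖D x‖ = (1 / 2) ^ k * ‖x‖ := by
    simp [hD hx, norm_smul]
  have hDorth : Pairwise fun k l => ∀ x ∈ V k, ∀ y ∈ V l, ⟪D x, D y⟫_ℂ = 0 := by
    intro k l hkl x hx y hy
    have hxy : ⟪x, y⟫_ℂ = 0 := hV hkl ⟨x, hx⟩ ⟨y, hy⟩
    rw [hD hx, hD hy, inner_smul_left, inner_smul_right, LinearIsometryEquiv.inner_map_map, hxy,
      mul_zero, mul_zero]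
  have hRorth : Pairwise fun k l => ∀ x ∈ V k, ∀ y ∈ V l, ⟪R x, R y⟫_ℂ = 0 :=
    fun k l hkl x hx y hy => inner_apply_eq_zero_of_mem_filtrationStep hkl hx hy
  refine ⟨I, n, b, fun x => ⟨?_, ?_⟩⟩
  · have h2R (y : K) : ‖((2 : ℂ) • R) y‖ = 2 * ‖R y‖ := by simp [norm_smul]
    rw [← h2R]
    refine norm_apply_le_of_pairwise_inner_eq_zero hdense hDorth
      (fun k l hkl x hx y hy => ?_) (fun k y hy => ?_) x
    · simp [inner_smul_left, inner_smul_right, hRorth hkl x hx y hy]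
    · have h := le_norm_apply_of_mem_orthogonal_dyadicFiltration hy.2
      rw [hDnorm hy, h2R]
      rw [pow_succ] at h
      linarith
  · refine norm_apply_le_of_pairwise_inner_eq_zero hdense hRorth hDorth (fun k y hy => ?_) x
    rw [hDnorm hy]
    exact norm_apply_le_of_mem_dyadicFiltration hy.1

end DyadicBounds

section Splitting

variable {𝕜 A X : Type*} [RCLike 𝕜] [NormedAddCommGroup A] [NormedSpace 𝕜 A] [CompleteSpace A]
  [NormedAddCommGroup X] [InnerProductSpace 𝕜 X] [CompleteSpace X]

theorem exists_equiv_prod_orthogonal_range {T : A →L[𝕜] X} {c : NNReal}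
    (hT : AntilipschitzWith c T) :
    ∃ S : (A × (T.range)ᗮ) ≃L[𝕜] X, ∀ p, S p = T p.1 + p.2 := by
  have hclosed : IsClosed (T.range : Set X) := hT.isClosed_range T.uniformContinuous
  have : CompleteSpace T.range := hclosed.completeSpace_coe
  exact ⟨T.coprodSubtypeLEquivOfIsCompl (Submodule.isCompl_orthogonal _)
    (LinearMap.ker_eq_bot.2 hT.injective), fun _ => rfl⟩

variable {C : Type*} [NormedAddCommGroup C] [InnerProductSpace 𝕜 C] [CompleteSpace C]

theorem idempotentGenerated_pairAlg_range_prod_prodMap_id {w : A →L[𝕜] A}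
    (hw : IdempotentGenerated (graphAlg w)) {U : A × C →L[𝕜] X} {c : NNReal}
    (hU : AntilipschitzWith c (U ∘L .inl 𝕜 A C)) :
    IdempotentGenerated (pairAlg
      (U.prod (w.prodMap (ContinuousLinearMap.id 𝕜 C))).range (Submodule.prod ⊤ ⊥)) := by
  let T : A →L[𝕜] X := U ∘L .inl 𝕜 A C
  let V : C →L[𝕜] X := U ∘L .inr 𝕜 A C
  have hTV (p : A × C) : U p = T p.1 + V p.2 := DFunLike.congr_fun U.coprod_comp_inl_inr.symm p
  obtain ⟨S, hS⟩ : ∃ S : (A × (T.range)ᗮ) ≃L[𝕜] X, ∀ p, S p = T p.1 + p.2 :=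
    exists_equiv_prod_orthogonal_range hU
  have h : IdempotentGenerated (pairAlg
      ((LinearMap.graph (w : A →ₗ[𝕜] A)).prod
        (Submodule.prod (⊥ : Submodule 𝕜 (T.range)ᗮ) (⊤ : Submodule 𝕜 C)))
      ((Submodule.prod ⊤ ⊥).prod (Submodule.prod ⊤ ⊥))) :=
    hw.prod (.prod (by rw [pairAlg_bot_top]; exact idempotentGenerated_top)
      (by rw [pairAlg_top_bot]; exact idempotentGenerated_top))
  let shear : (X × (A × C)) ≃L[𝕜] X × (A × C) :=
    (ContinuousLinearEquiv.prodComm 𝕜 _ _).trans <|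
      ((ContinuousLinearEquiv.refl 𝕜 (A × C)).skewProd (.refl 𝕜 X) (V ∘L .snd 𝕜 A C)).trans <|
        .prodComm 𝕜 _ _
  refine h.of_equiv (((ContinuousLinearEquiv.prodProdProdComm 𝕜 A A _ C).trans
    (S.prodCongr (.refl 𝕜 (A × C)))).trans shear) ?_ ?_
  · rintro ⟨⟨a, a'⟩, y, c⟩
    change (∃ p : A × C, (U p, (w p.1, p.2)) = (S (a, y) + V c, (a', c))) ↔
      a' = w a ∧ y = 0 ∧ True
    simp only [hTV]
    constructor
    · rintro ⟨⟨a₂, c₂⟩, hp⟩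
      obtain ⟨h₁, rfl, rfl⟩ : T a₂ + V c₂ = S (a, y) + V c ∧ w a₂ = a' ∧ c₂ = c := by
        simpa using hp
      have hSeq : S (a₂, 0) = S (a, y) := by
        simpa [hS (a₂, 0)] using h₁
      obtain ⟨rfl, rfl⟩ := Prod.ext_iff.1 (S.injective hSeq)
      exact ⟨rfl, rfl, trivial⟩
    · rintro ⟨rfl, rfl, -⟩
      exact ⟨(a, c), by simp [hS]⟩
  · rintro ⟨⟨a, a'⟩, y, c⟩
    change True ∧ (a', c) = 0 ↔ (True ∧ a' = 0) ∧ True ∧ c = 0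
    simp [Prod.ext_iff]

end Splitting

section Dyadic

variable {𝕜 A I X : Type*} [RCLike 𝕜] [NormedAddCommGroup A] [NormedSpace 𝕜 A]
  [NormedAddCommGroup X] {n : I → ℕ}

theorem norm_dyadicOp_apply_le_of_forall_eq_zero {x : ℓ²(I, 𝕜)} (hx : ∀ i, n i = 0 → x i = 0) :
    ‖dyadicOp 𝕜 n x‖ ≤ 1 / 2 * ‖x‖ := by
  have h : dyadicOp 𝕜 n x = (1 / 2 : 𝕜) • dyadicOp 𝕜 (fun i => n i - 1) x := by
    ext i
    rw [lp.coeFn_smul, Pi.smul_apply, dyadicOp_apply, dyadicOp_apply, smul_eq_mul, ← mul_assoc,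
      ← pow_succ']
    rcases Nat.eq_zero_or_pos (n i) with hi | hi
    · rw [hx i hi, mul_zero, mul_zero]
    · rw [Nat.sub_add_cancel hi]
  rw [h, norm_smul]
  simpa using (dyadicOp 𝕜 fun i => n i - 1).le_of_opNorm_le (norm_dyadicOp_le _) x

theorem antilipschitzWith_comp_of_forall_eq_zero [NormedSpace 𝕜 X] {U : ℓ²(I, 𝕜) →L[𝕜] X}
    (hU : ∀ x, ‖x‖ ≤ ‖U x‖ + ‖dyadicOp 𝕜 n x‖) {ι : A →L[𝕜] ℓ²(I, 𝕜)} {c : NNReal}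
    (hι : AntilipschitzWith c ι) (hzero : ∀ a i, n i = 0 → ι a i = 0) :
    AntilipschitzWith (c * 2) (U ∘L ι) := by
  refine (U ∘L ι).antilipschitz_of_bound fun a => ?_
  have h : ‖ι a‖ ≤ 2 * ‖U (ι a)‖ := by
    linarith [hU (ι a), norm_dyadicOp_apply_le_of_forall_eq_zero (hzero a)]
  calc ‖a‖ ≤ c * ‖ι a‖ := hι.le_mul_norm (map_zero ι) a
    _ ≤ c * (2 * ‖U (ι a)‖) := by gcongr
    _ = ↑(c * 2) * ‖U (ι a)‖ := by push_cast; ring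

theorem idempotentGenerated_pairAlg_range_dyadicOp [InnerProductSpace 𝕜 X] [CompleteSpace X]
    {U : ℓ²(I, 𝕜) →L[𝕜] X}
    (hU : ∀ x, ‖x‖ ≤ ‖U x‖ + ‖dyadicOp 𝕜 n x‖) :
    IdempotentGenerated (pairAlg (U.prod (dyadicOp 𝕜 n)).range (Submodule.prod ⊤ ⊥)) := by
  classical
  let L := lpSumEquiv 𝕜 (Equiv.sumCompl fun i => n i ≠ 0)
  let w := dyadicOp 𝕜 fun i : {i // n i ≠ 0} => n i
  let U' := U ∘L L.symm.toContinuousLinearMap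
  have hinl : AntilipschitzWith 1 (ContinuousLinearMap.inl 𝕜 ℓ²({i // n i ≠ 0}, 𝕜)
      ℓ²({i // ¬n i ≠ 0}, 𝕜)) :=
    ContinuousLinearMap.antilipschitz_of_bound _ fun a => by simp
  have hT : AntilipschitzWith _ (U' ∘L .inl 𝕜 _ _) :=
    antilipschitzWith_comp_of_forall_eq_zero hU
      (ι := L.symm.toContinuousLinearMap ∘L .inl 𝕜 _ _) (L.symm.antilipschitz.comp hinl)
      fun a i hi => congrFun (congrArg (fun p => (p.2 : {i // ¬n i ≠ 0} → 𝕜))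
        (L.apply_symm_apply (a, 0))) ⟨i, not_not.2 hi⟩
  have hLD (x : ℓ²(I, 𝕜)) :
      L (dyadicOp 𝕜 n x) = (w.prodMap (.id 𝕜 _)) (L x) := by
    refine (lpSumEquiv_dyadicOp _ n x).trans (Prod.ext rfl ?_)
    ext j
    simp [dyadicOp_apply, not_not.1 j.2, L]
  refine (idempotentGenerated_pairAlg_range_prod_prodMap_id (idempotentGenerated_graphAlg_dyadicOp
    fun i : {i // n i ≠ 0} => n i) hT).of_equiv
    ((ContinuousLinearEquiv.refl 𝕜 X).prodCongr L.symm) ?_ ?_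
  · rintro ⟨x, p⟩
    change (∃ y, (U y, dyadicOp 𝕜 n y) = (x, L.symm p)) ↔
      ∃ q, (U (L.symm q), (w.prodMap (.id 𝕜 _)) q) = (x, p)
    rw [L.surjective.exists]
    refine exists_congr fun y => ?_
    rw [L.symm_apply_apply, ← hLD, Prod.mk.injEq, Prod.mk.injEq, L.eq_symm_apply]
  · rintro ⟨x, p⟩
    change True ∧ L.symm p = 0 ↔ True ∧ p = 0
    rw [L.symm.map_eq_zero_iff]

end Dyadic

section Douglas

variable {𝕜 K E₁ E₂ : Type*} [NontriviallyNormedField 𝕜] [NormedAddCommGroup K] [NormedSpace 𝕜 K]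
  [NormedAddCommGroup E₁] [NormedSpace 𝕜 E₁] [CompleteSpace E₁]
  [NormedAddCommGroup E₂] [NormedSpace 𝕜 E₂] [CompleteSpace E₂]

theorem exists_equiv_apply_eq_of_norm_le {D : K →L[𝕜] E₁} {R : K →L[𝕜] E₂} (hD : DenseRange D)
    (hR : DenseRange R) {c c' : ℝ} (hDR : ∀ x, ‖D x‖ ≤ c * ‖R x‖)
    (hRD : ∀ x, ‖R x‖ ≤ c' * ‖D x‖) : ∃ e : E₁ ≃L[𝕜] E₂, ∀ x, e (D x) = R x :=
  ⟨(LinearEquiv.refl 𝕜 K).extend D R hD ⟨c', hRD⟩ hR ⟨c, hDR⟩,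
    LinearEquiv.extend_eq (f := .refl 𝕜 K) (e₁ := (D : K →ₗ[𝕜] E₁)) (e₂ := (R : K →ₗ[𝕜] E₂))
      hD ⟨c', hRD⟩ hR ⟨c, hDR⟩⟩

end Douglas

section TwoSubspaces

variable {𝕜 H : Type*} [RCLike 𝕜] [NormedAddCommGroup H] [InnerProductSpace 𝕜 H]

theorem add_mem_iff_orthogonal_eq_zero {N : Submodule 𝕜 H} {y : N} {z : Nᗮ} :
    (y + z : H) ∈ N ↔ z = 0 := by
  rw [N.add_mem_iff_right y.2]
  refine ⟨fun hz => Subtype.ext ?_, fun hz => hz ▸ N.zero_mem⟩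
  exact inner_self_eq_zero.1 (z.2 z hz)

/-- The component orthogonal to `N` of the vectors of `M`. -/
noncomputable def orthogonalComponent (M N : Submodule 𝕜 H) [Nᗮ.HasOrthogonalProjection] :
    M →L[𝕜] Nᗮ :=
  Nᗮ.orthogonalProjectionOnto ∘L M.subtypeL

variable {M N : Submodule 𝕜 H} [N.HasOrthogonalProjection]

theorem norm_orthogonalComponent_le : ‖orthogonalComponent M N‖ ≤ 1 :=
  ContinuousLinearMap.opNorm_le_bound _ zero_le_one fun x =>
    Nᗮ.orthogonalProjectionOnto.le_of_opNorm_le Nᗮ.orthogonalProjectionOnto_norm_le x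

theorem injective_orthogonalComponent (hMN : M ⊓ N = ⊥) :
    Function.Injective (orthogonalComponent M N) := by
  refine (injective_iff_map_eq_zero _).2 fun x hx => ?_
  have hxN : (x : H) ∈ Nᗮᗮ := Submodule.orthogonalProjectionOnto_eq_zero_iff.1 hx
  rw [Submodule.orthogonal_orthogonal] at hxN
  exact Subtype.ext (Submodule.disjoint_def.1 (disjoint_iff.2 hMN) x x.2 hxN)

theorem denseRange_orthogonalComponent (hspan : (M ⊔ N).topologicalClosure = ⊤) :
    DenseRange (orthogonalComponent M N) := by
  have hsurj : Function.Surjective Nᗮ.orthogonalProjectionOnto := fun y =>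
    ⟨y, Submodule.orthogonalProjectionOnto_mem_subspace_eq_self y⟩
  refine (hsurj.denseRange.dense_image Nᗮ.orthogonalProjectionOnto.continuous
    (Submodule.dense_iff_topologicalClosure_eq_top.2 hspan)).mono ?_
  rintro _ ⟨x, hx, rfl⟩
  obtain ⟨m, hm, y, hy, rfl⟩ := Submodule.mem_sup.1 hx
  refine ⟨⟨m, hm⟩, ?_⟩
  rw [map_add, Submodule.orthogonalProjectionOnto_eq_zero_iff.2 (N.le_orthogonal_orthogonal hy),
    add_zero]
  rfl

theorem add_mem_left_iff_exists_orthogonalProjectionOnto {y : N} {z : Nᗮ} :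
    (y + z : H) ∈ M ↔
      ∃ x : M, N.orthogonalProjectionOnto x = y ∧ orthogonalComponent M N x = z := by
  constructor
  · intro h
    refine ⟨⟨y + z, h⟩, ?_, ?_⟩
    · simp
    · simp [orthogonalComponent]
  · rintro ⟨x, rfl, rfl⟩
    change N.starProjection (x : H) + Nᗮ.starProjection (x : H) ∈ M
    rw [N.starProjection_add_starProjection_orthogonal]
    exact x.2

end TwoSubspaces

section TwoAtoms

variable {H : Type*} [NormedAddCommGroup H] [InnerProductSpace ℂ H] [CompleteSpace H]
  {M N : Submodule ℂ H}

theorem idempotentGenerated_pairAlg (hM : IsClosed (M : Set H)) (hN : IsClosed (N : Set H))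
    (hMN : M ⊓ N = ⊥) (hspan : (M ⊔ N).topologicalClosure = ⊤) :
    IdempotentGenerated (pairAlg M N) := by
  have := hM.completeSpace_coe
  have := hN.completeSpace_coe
  let R : M →L[ℂ] Nᗮ := orthogonalComponent M N
  obtain ⟨I, n, b, hb⟩ := exists_hilbertBasis_dyadicOp_bounds (R := R)
    norm_orthogonalComponent_le (injective_orthogonalComponent hMN)
  let f : M ≃L[ℂ] ℓ²(I, ℂ) := b.repr.toContinuousLinearEquiv
  let D : M →L[ℂ] ℓ²(I, ℂ) := dyadicOp ℂ n ∘L f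
  have hD : DenseRange D :=
    (denseRange_dyadicOp n).comp f.surjective.denseRange (dyadicOp ℂ n).continuous
  obtain ⟨e, he⟩ : ∃ e : ℓ²(I, ℂ) ≃L[ℂ] Nᗮ, ∀ x, e (D x) = R x :=
    exists_equiv_apply_eq_of_norm_le hD (denseRange_orthogonalComponent hspan) (c' := 1)
      (fun x => (hb x).1) fun x => (hb x).2.trans_eq (one_mul _).symm
  let P : M →L[ℂ] N := N.orthogonalProjectionOnto ∘L M.subtypeL
  have hU (x : ℓ²(I, ℂ)) : ‖x‖ ≤ ‖(P ∘L f.symm.toContinuousLinearMap) x‖ + ‖dyadicOp ℂ n x‖ := by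
    obtain ⟨x, rfl⟩ := f.surjective x
    calc ‖f x‖ = ‖N.starProjection x + Nᗮ.starProjection x‖ := by
          rw [N.starProjection_add_starProjection_orthogonal]
          exact b.repr.norm_map x
      _ ≤ ‖P x‖ + ‖R x‖ := norm_add_le _ _
      _ ≤ ‖P (f.symm (f x))‖ + ‖D x‖ := by
        rw [f.symm_apply_apply]
        exact add_le_add_right (hb x).2 _
  refine (idempotentGenerated_pairAlg_range_dyadicOp hU).of_equiv
    (((ContinuousLinearEquiv.refl ℂ N).prodCongr e).trans
      (N.prodEquivOfIsTopCompl Nᗮ N.isTopCompl_orthogonal)) ?_ ?_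
  · rintro ⟨y, z⟩
    change (y + e z : H) ∈ M ↔ ∃ q, (P (f.symm q), dyadicOp ℂ n q) = (y, z)
    rw [add_mem_left_iff_exists_orthogonalProjectionOnto, f.surjective.exists]
    refine exists_congr fun x => ?_
    rw [f.symm_apply_apply, Prod.mk.injEq, ← e.injective.eq_iff]
    exact and_congr_right' (he x ▸ Iff.rfl)
  · rintro ⟨y, z⟩
    change (y + e z : H) ∈ N ↔ True ∧ z = 0
    rw [add_mem_iff_orthogonal_eq_zero, e.map_eq_zero_iff, true_and]

end TwoAtoms

section ZeroProduct

theorem injective_mul_left_of_surjective {B : Type*} [NonUnitalRing B]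
    (hB : ∀ b : B, (∀ x, b * x = 0) → (∀ x, x * b = 0) → b = 0) {e : B}
    (he : ∀ b, e * b = b * e) (hsurj : Function.Surjective (e * ·)) :
    Function.Injective (e * ·) := by
  refine (injective_iff_map_eq_zero (AddMonoidHom.mulLeft e)).2 fun b (hb : e * b = 0) => ?_
  refine hB b ?_ ?_ <;> refine hsurj.forall.2 fun c => ?_
  · rw [← mul_assoc, ← he, hb, zero_mul]
  · rw [he, mul_assoc, hb, mul_zero]

variable {R A B : Type*} [CommRing R] [Ring A] [Algebra R A] [NonUnitalRing B] [Module R B]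
  {φ : A →ₗ[R] B}

theorem map_mul_mul_map_of_isIdempotentElem (hφ : ∀ x y, x * y = 0 → φ x * φ y = 0) {e : A}
    (he : IsIdempotentElem e) (x y : A) : φ (x * e) * φ y = φ x * φ (e * y) := by
  have h₁ : φ (x * e) * φ (y - e * y) = 0 := hφ _ _ <| by
    rw [mul_sub, ← mul_assoc, mul_assoc x e e, he.eq, sub_self]
  have h₂ : φ (x - x * e) * φ (e * y) = 0 := hφ _ _ <| by
    rw [sub_mul, ← mul_assoc (x * e), mul_assoc x e e, he.eq, mul_assoc, sub_self]
  rw [map_sub, mul_sub, sub_eq_zero] at h₁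
  rw [map_sub, sub_mul, sub_eq_zero] at h₂
  rw [h₁, h₂]

variable [SMulCommClass R B B]

theorem exists_linearMap_map_mul_of_bijective_mul_left {e : B} (he : ∀ b, e * b = b * e)
    (hbij : Function.Bijective (e * ·)) (hφ : ∀ x y, φ x * φ y = e * φ (x * y)) :
    ∃ ψ : A →ₗ[R] B, (∀ x y, ψ (x * y) = ψ x * ψ y) ∧ ∀ x, φ x = e * ψ x := by
  let W : B ≃ₗ[R] B := .ofBijective (LinearMap.mulLeft R e) hbij
  let ψ : A →ₗ[R] B := W.symm ∘ₗ φ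
  have hψ (x : A) : φ x = e * ψ x := (W.apply_symm_apply (φ x)).symm
  refine ⟨ψ, fun x y => hbij.1 (hbij.1 ?_), hψ⟩
  calc e * (e * ψ (x * y)) = φ x * φ y := by rw [← hψ, hφ]
    _ = e * ψ x * (e * ψ y) := by rw [hψ, hψ]
    _ = e * (e * (ψ x * ψ y)) := by rw [mul_assoc, ← mul_assoc (ψ x), ← he, mul_assoc]

variable [IsScalarTower R B B]

/-- The subalgebra of those `t` that can be moved across a product of two values of `φ`. -/
def balancingSubalgebra (φ : A →ₗ[R] B) : Subalgebra R A where
  carrier := {t | ∀ x y, φ (x * t) * φ y = φ x * φ (t * y)}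
  mul_mem' {s t} hs ht x y := by rw [← mul_assoc, ht, hs, mul_assoc]
  add_mem' {s t} hs ht x y := by simp only [mul_add, add_mul, map_add, hs x y, ht x y]
  algebraMap_mem' c x y := by
    rw [← Algebra.commutes, ← Algebra.smul_def, ← Algebra.smul_def, map_smul, map_smul,
      smul_mul_assoc, mul_smul_comm]

theorem isClosed_balancingSubalgebra [TopologicalSpace A] [ContinuousMul A] [TopologicalSpace B]
    [T2Space B] [ContinuousMul B] (hφ : Continuous φ) :
    IsClosed (balancingSubalgebra φ : Set A) := by
  simp only [balancingSubalgebra, Subalgebra.coe_mk, Set.ofPred_forall]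
  exact isClosed_iInter fun x => isClosed_iInter fun y =>
    isClosed_eq (by fun_prop) (by fun_prop)

theorem IdempotentGenerated.balancingSubalgebra_eq_top [TopologicalSpace A] [IsTopologicalRing A]
    [TopologicalSpace B] [T2Space B] [ContinuousMul B] {S : Subalgebra R A}
    (hS : IdempotentGenerated S) {φ : S →ₗ[R] B} (hφ : Continuous φ)
    (hφzp : ∀ x y, x * y = 0 → φ x * φ y = 0) : balancingSubalgebra φ = ⊤ := by
  have hle : Algebra.adjoin R {e | e ∈ S ∧ IsIdempotentElem e}
      ≤ (balancingSubalgebra φ).map S.val :=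
    Algebra.adjoin_le fun e he => ⟨⟨e, he.1⟩,
      map_mul_mul_map_of_isIdempotentElem hφzp (Subtype.ext he.2), rfl⟩
  refine eq_top_iff.2 fun t _ => ?_
  rw [← SetLike.mem_coe, ← (isClosed_balancingSubalgebra hφ).closure_eq, closure_subtype]
  exact closure_mono hle (hS t.2)

theorem map_mul_map_eq_map_one_mul (hφ : balancingSubalgebra φ = ⊤) (x y : A) :
    φ x * φ y = φ 1 * φ (x * y) := by
  have h : x ∈ balancingSubalgebra φ := hφ ▸ trivial
  simpa using h 1 y

theorem map_one_mul_comm (hφ : balancingSubalgebra φ = ⊤) (hsurj : Function.Surjective φ)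
    (b : B) : φ 1 * b = b * φ 1 := by
  obtain ⟨x, rfl⟩ := hsurj b
  simpa using (map_mul_map_eq_map_one_mul hφ x 1).symm

theorem surjective_map_one_mul (hφ : balancingSubalgebra φ = ⊤) (hsurj : Function.Surjective φ)
    (hB : Submodule.span R {x : B | ∃ b₁ b₂, x = b₁ * b₂} = ⊤) :
    Function.Surjective (φ 1 * ·) := by
  change Function.Surjective (LinearMap.mulLeft R (φ 1))
  rw [← LinearMap.range_eq_top, eq_top_iff, ← hB, Submodule.span_le]
  rintro _ ⟨b₁, b₂, rfl⟩
  obtain ⟨x, rfl⟩ := hsurj b₁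
  obtain ⟨y, rfl⟩ := hsurj b₂
  exact ⟨φ (x * y), (map_mul_map_eq_map_one_mul hφ x y).symm⟩

end ZeroProduct

section WeightedHom

variable {𝕜 A B : Type*} [NontriviallyNormedField 𝕜] [Ring A] [Algebra 𝕜 A]
  [NonUnitalNormedRing B] [NormedSpace 𝕜 B] [IsScalarTower 𝕜 B B] [SMulCommClass 𝕜 B B]

theorem exists_centralizer_comp_of_balancingSubalgebra_eq_top {φ : A →ₗ[𝕜] B}
    (hφ : balancingSubalgebra φ = ⊤) (hsurj : Function.Surjective φ)
    (hfaithful : ∀ b : B, (∀ x, b * x = 0) → (∀ x, x * b = 0) → b = 0)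
    (hB : Submodule.span 𝕜 {x : B | ∃ b₁ b₂, x = b₁ * b₂} = ⊤) :
    ∃ (W : B →L[𝕜] B) (ψ : A →ₗ[𝕜] B), Function.Bijective W ∧ (∀ a b, W (a * b) = W a * b) ∧
      (∀ a b, W (a * b) = a * W b) ∧ (∀ x y, ψ (x * y) = ψ x * ψ y) ∧ ∀ x, φ x = W (ψ x) := by
  have hcomm := map_one_mul_comm hφ hsurj
  have hW := surjective_map_one_mul hφ hsurj hB
  have hbij : Function.Bijective (φ 1 * ·) :=
    ⟨injective_mul_left_of_surjective hfaithful hcomm hW, hW⟩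
  obtain ⟨ψ, hψ, hφψ⟩ :=
    exists_linearMap_map_mul_of_bijective_mul_left hcomm hbij (map_mul_map_eq_map_one_mul hφ)
  refine ⟨ContinuousLinearMap.mul 𝕜 B (φ 1), ψ, hbij, fun a b => (mul_assoc _ _ _).symm,
    fun a b => ?_, hψ, hφψ⟩
  simp only [ContinuousLinearMap.mul_apply']
  rw [← mul_assoc, hcomm, mul_assoc]

end WeightedHom

theorem two_atom_lattice_zero_product_preservers_general (H : Type*) [NormedAddCommGroup H]
    [InnerProductSpace ℂ H] [CompleteSpace H]
    (M N : Submodule ℂ H) (hMc : IsClosed (M : Set H)) (hNc : IsClosed (N : Set H))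
    (hMN : M ⊓ N = ⊥) (hspan : (M ⊔ N).topologicalClosure = ⊤)
    (S : Subalgebra ℂ (H →L[ℂ] H))
    (hS : ∀ T : H →L[ℂ] H, T ∈ S ↔ (∀ x ∈ M, T x ∈ M) ∧ (∀ x ∈ N, T x ∈ N))
    (B : Type*) [NonUnitalNormedRing B] [NormedSpace ℂ B] [IsScalarTower ℂ B B]
    [SMulCommClass ℂ B B]
    (hfaithful : ∀ b : B, (∀ x : B, b * x = 0) → (∀ x : B, x * b = 0) → b = 0)
    (hB2 : Submodule.span ℂ {x : B | ∃ b₁ b₂ : B, x = b₁ * b₂} = ⊤)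
    (φ : ↥S →ₗ[ℂ] B) (hφcont : Continuous φ) (hφsurj : Function.Surjective φ)
    (hφzp : ∀ x y : ↥S, x * y = 0 → φ x * φ y = 0) :
    ∃ (W : B →L[ℂ] B) (ψ : ↥S →ₗ[ℂ] B),
      Function.Bijective W ∧
      (∀ a b : B, W (a * b) = W a * b) ∧
      (∀ a b : B, W (a * b) = a * W b) ∧
      (∀ x y : ↥S, ψ (x * y) = ψ x * ψ y) ∧
      ∀ x : ↥S, φ x = W (ψ x) := by
  obtain rfl : S = pairAlg M N := SetLike.ext hS
  have hgen := idempotentGenerated_pairAlg hMc hNc hMN hspan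
  exact exists_centralizer_comp_of_balancingSubalgebra_eq_top
    (hgen.balancingSubalgebra_eq_top hφcont hφzp) hφsurj hfaithful hB2

set_option synthInstance.maxHeartbeats 1000000 in
/-- Let `H` be a complex separable Hilbert space, `ℒ = {0, M, N, H}` a subspace
lattice with two atoms on `H` (with `Alg ℒ` realized as the subalgebra `S ≤ B(H)`),
and `ℬ` a faithful complex Banach algebra with `ℬ² = ℬ`.  Then every surjective
continuous linear map `φ : Alg ℒ → ℬ` preserving zero products is a weighted
homomorphism: `φ = W ∘ ψ` for some invertible centralizer `W` on `ℬ` and some algebra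
homomorphism `ψ : Alg ℒ → ℬ`. -/
theorem two_atom_lattice_zero_product_preservers (H : Type*) [NormedAddCommGroup H]
    [InnerProductSpace ℂ H] [CompleteSpace H] [TopologicalSpace.SeparableSpace H]
    (M N : Submodule ℂ H) (hMc : IsClosed (M : Set H)) (hNc : IsClosed (N : Set H))
    (hMN : M ⊓ N = ⊥) (hspan : (M ⊔ N).topologicalClosure = ⊤)
    (S : Subalgebra ℂ (H →L[ℂ] H))
    (hS : ∀ T : H →L[ℂ] H, T ∈ S ↔ (∀ x ∈ M, T x ∈ M) ∧ (∀ x ∈ N, T x ∈ N))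
    (B : Type*) [NonUnitalNormedRing B] [NormedSpace ℂ B] [IsScalarTower ℂ B B]
    [SMulCommClass ℂ B B] [CompleteSpace B]
    (hfaithful : ∀ b : B, (∀ x : B, b * x = 0) → (∀ x : B, x * b = 0) → b = 0)
    (hB2 : Submodule.span ℂ {x : B | ∃ b₁ b₂ : B, x = b₁ * b₂} = ⊤)
    (φ : ↥S →ₗ[ℂ] B) (hφcont : Continuous φ) (hφsurj : Function.Surjective φ)
    (hφzp : ∀ x y : ↥S, x * y = 0 → φ x * φ y = 0) :
    ∃ (W : B →L[ℂ] B) (ψ : ↥S →ₗ[ℂ] B),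
      Function.Bijective W ∧
      (∀ a b : B, W (a * b) = W a * b) ∧
      (∀ a b : B, W (a * b) = a * W b) ∧
      (∀ x y : ↥S, ψ (x * y) = ψ x * ψ y) ∧
      ∀ x : ↥S, φ x = W (ψ x) := by
  exact two_atom_lattice_zero_product_preservers_general H M N hMc hNc hMN hspan S hS B hfaithful
    hB2 φ hφcont hφsurj hφzp
end

section
/- Every finite nest algebra on a complex Hilbert space is two-sided zero product determined. -/
open scoped Topology

/-- A complex Banach algebra `A` is *two-sided zero product determined* if every
continuous bilinear functional `φ` on `A` with `φ x y = 0` whenever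
`x * y = y * x = 0` is of the form `φ x y = τ₁ (x * y) + τ₂ (y * x)` for some
continuous linear functionals `τ₁`, `τ₂` on `A`. -/
def TwoSidedZeroProductDetermined (A : Type*) [NonUnitalNonAssocRing A] [Module ℂ A]
    [TopologicalSpace A] : Prop :=
  ∀ φ : A →ₗ[ℂ] A →ₗ[ℂ] ℂ, Continuous (fun p : A × A => φ p.1 p.2) →
    (∀ x y : A, x * y = 0 → y * x = 0 → φ x y = 0) →
    ∃ τ₁ τ₂ : A →L[ℂ] ℂ, ∀ x y : A, φ x y = τ₁ (x * y) + τ₂ (y * x)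


/-!
If `A` is generated by idempotents and `φ` is as in the definition above, then
`φ (b * c) d - φ c (d * b) = φ (b * (c * d)) 1 - φ (c * d) b`, so `a ↦ φ(·, a) - φ(· * a, 1)` is a
derivation from `A` to `A*`. Writing it as the inner derivation of a functional `τ` yields
`φ x y = φ (x * y) 1 + τ (x * y) - τ (y * x)`. It remains to see that a finite nest algebra is
generated by idempotents and has only inner derivations into its dual (weak amenability).

A finite nest algebra is block upper triangular with diagonal blocks `B(K)`, `K` a Hilbert space,
and both properties pass from the diagonal blocks to the whole algebra: a derivation vanishing on
the block projections pairs the `(i, j)` block with the `(j, i)` block, so it lives on the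
diagonal. For `B(K)` with `K` of finite dimension both properties come from rank one operators;
for `K` of infinite dimension they come from the self-similarity `K ≃ K ⊕ K ⊕ ⋯`, which makes it
possible to telescope `D (d ⊕ d ⊕ ⋯) (c ⊕ c ⊕ ⋯)` for any derivation `D`.
-/

section GeneratedByIdempotents

/-- The algebra `A` is generated, as a unital `R`-algebra, by its idempotents. -/
def GeneratedByIdempotents (R A : Type*) [CommSemiring R] [Semiring A] [Algebra R A] : Prop :=
  Algebra.adjoin R {e : A | IsIdempotentElem e} = ⊤

theorem map_mem_adjoin_idempotents {R A B : Type*} [CommSemiring R] [Semiring A] [Algebra R A]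
    [Semiring B] [Algebra R B] (σ : B →ₙₐ[R] A) {x : B}
    (hx : x ∈ Algebra.adjoin R {e : B | IsIdempotentElem e}) :
    σ x ∈ Algebra.adjoin R {e : A | IsIdempotentElem e} := by
  have hmem {e : B} (he : IsIdempotentElem e) :
      σ e ∈ Algebra.adjoin R {e : A | IsIdempotentElem e} :=
    Algebra.subset_adjoin (he.map σ)
  induction hx using Algebra.adjoin_induction with
  | mem e he => exact hmem he
  | algebraMap r =>
    rw [Algebra.algebraMap_eq_smul_one, map_smul]
    exact Subalgebra.smul_mem _ (hmem .one) r
  | add x y _ _ hx hy => rw [map_add]; exact add_mem hx hy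
  | mul x y _ _ hx hy => rw [map_mul]; exact mul_mem hx hy

variable {R A : Type*} [CommRing R] [Ring A] [Algebra R A]

theorem mul_mul_mem_adjoin_idempotents {e f : A} (he : IsIdempotentElem e) (hfe : f * e = 0)
    (x : A) : e * x * f ∈ Algebra.adjoin R {e : A | IsIdempotentElem e} := by
  have hsum : IsIdempotentElem (e + e * x * f) := by
    have hee : e * e = e := he
    calc (e + e * x * f) * (e + e * x * f)
        = e * e + e * e * x * f + e * x * (f * e) + e * x * (f * e) * x * f := by noncomm_ring
      _ = e + e * x * f := by rw [hee, hfe]; simp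
  have hsub := sub_mem (Algebra.subset_adjoin (R := R) (s := {e : A | IsIdempotentElem e}) hsum)
    (Algebra.subset_adjoin he)
  rwa [add_sub_cancel_left] at hsub

theorem mul_mul_mem_adjoin_idempotents_of_leftInverse {s s' v v' : A} (hs : s' * s = 1)
    (hv : v' * v = 1) (hvs : v' * s = 0) (x : A) :
    s * x * v' ∈ Algebra.adjoin R {e : A | IsIdempotentElem e} := by
  have he : IsIdempotentElem (s * s') := by
    rw [IsIdempotentElem, mul_assoc, ← mul_assoc s', hs, one_mul]
  have horth : v * v' * (s * s') = 0 := by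
    rw [mul_assoc, ← mul_assoc v', hvs, zero_mul, mul_zero]
  have hx : s * s' * (s * x * v') * (v * v') = s * x * v' := by grind
  exact hx ▸ mul_mul_mem_adjoin_idempotents he horth (s * x * v')

variable {M : Type*} [AddCommGroup M] [Module R M]

theorem GeneratedByIdempotents.apply_mul_left_eq (hA : GeneratedByIdempotents R A)
    {Φ : A →ₗ[R] A →ₗ[R] M} (hΦ : ∀ a b, a * b = 0 → Φ a b = 0) (a z b : A) :
    Φ (a * z) b = Φ a (z * b) := by
  have hz : z ∈ Algebra.adjoin R {e : A | IsIdempotentElem e} := hA ▸ Algebra.mem_top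
  induction hz using Algebra.adjoin_induction generalizing a b with
  | mem e he =>
    have h₁ : Φ (a * e) ((1 - e) * b) = 0 := hΦ _ _ <| by
      rw [mul_assoc, ← mul_assoc e, he.mul_one_sub_self, zero_mul, mul_zero]
    have h₂ : Φ (a * (1 - e)) (e * b) = 0 := hΦ _ _ <| by
      rw [mul_assoc, ← mul_assoc _ e, he.one_sub_mul_self, zero_mul, mul_zero]
    simp only [sub_mul, mul_sub, one_mul, mul_one, map_sub, LinearMap.sub_apply,
      sub_eq_zero] at h₁ h₂
    rw [h₁, h₂]
  | algebraMap r => simp [Algebra.algebraMap_eq_smul_one]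
  | add x y _ _ hx hy => simp [mul_add, add_mul, hx, hy]
  | mul x y _ _ hx hy => rw [← mul_assoc, hy, hx, mul_assoc]

theorem GeneratedByIdempotents.apply_eq_apply_mul_one (hA : GeneratedByIdempotents R A)
    {Φ : A →ₗ[R] A →ₗ[R] M} (hΦ : ∀ a b, a * b = 0 → Φ a b = 0) (a b : A) :
    Φ a b = Φ (a * b) 1 := by
  rw [hA.apply_mul_left_eq hΦ, mul_one]

theorem GeneratedByIdempotents.apply_mul_sub_apply_mul (hA : GeneratedByIdempotents R A)
    {φ : A →ₗ[R] A →ₗ[R] M} (hφ : ∀ x y, x * y = 0 → y * x = 0 → φ x y = 0) (b c d : A) :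
    φ (b * c) d - φ c (d * b) = φ (b * (c * d)) 1 - φ (c * d) b := by
  have h_of_mul_eq_zero (c d : A) (hcd : c * d = 0) : φ (b * c) d = φ c (d * b) := by
    let Φ : A →ₗ[R] A →ₗ[R] M :=
      (φ.compl₁₂ (LinearMap.mulRight R c) (LinearMap.mulLeft R d)).flip
    have hΦ (a a' : A) (h : a * a' = 0) : Φ a a' = 0 := by
      refine hφ _ _ (?_ : a' * c * (d * a) = 0) (?_ : d * a * (a' * c) = 0)
      · rw [mul_assoc, ← mul_assoc c, hcd, zero_mul, mul_zero]
      · rw [mul_assoc, ← mul_assoc a, h, zero_mul, mul_zero]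
    simpa [Φ] using hA.apply_eq_apply_mul_one hΦ 1 b
  let Ψ : A →ₗ[R] A →ₗ[R] M :=
    φ.comp (LinearMap.mulLeft R b) - φ.compl₁₂ LinearMap.id (LinearMap.mulRight R b)
  have hΨ (c d : A) (hcd : c * d = 0) : Ψ c d = 0 :=
    sub_eq_zero.2 (h_of_mul_eq_zero c d hcd)
  simpa [Ψ] using hA.apply_eq_apply_mul_one hΨ c d

end GeneratedByIdempotents

section WeakAmenability

variable {𝕜 A : Type*} [NontriviallyNormedField 𝕜] [NormedRing A] [NormedAlgebra 𝕜 A]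

/-- `D` is a derivation from `A` to its dual bimodule `A*`, whose actions are
`(a • τ) c = τ (c * a)` and `(τ • a) c = τ (a * c)`. -/
def IsDualDerivation (D : A →L[𝕜] A →L[𝕜] 𝕜) : Prop :=
  ∀ a b c, D (a * b) c = D a (b * c) + D b (c * a)

/-- The inner derivation `a ↦ a • τ - τ • a` from `A` to its dual bimodule. -/
noncomputable def dualAd (τ : A →L[𝕜] 𝕜) : A →L[𝕜] A →L[𝕜] 𝕜 :=
  ContinuousLinearMap.compL 𝕜 A A 𝕜 τ ∘L
    ((ContinuousLinearMap.mul 𝕜 A).flip - ContinuousLinearMap.mul 𝕜 A)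

@[simp]
theorem dualAd_apply (τ : A →L[𝕜] 𝕜) (a c : A) : dualAd τ a c = τ (c * a) - τ (a * c) := by
  simp [dualAd]

theorem isDualDerivation_dualAd (τ : A →L[𝕜] 𝕜) : IsDualDerivation (dualAd τ) := fun a b c => by
  simp only [dualAd_apply, mul_assoc]
  abel

variable (𝕜 A) in
/-- Every continuous derivation from `A` to its dual bimodule is inner. -/
def WeaklyAmenable : Prop :=
  ∀ D : A →L[𝕜] A →L[𝕜] 𝕜, IsDualDerivation D → ∃ τ : A →L[𝕜] 𝕜, D = dualAd τ

namespace IsDualDerivation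

variable {D : A →L[𝕜] A →L[𝕜] 𝕜}

theorem sub {D' : A →L[𝕜] A →L[𝕜] 𝕜} (hD : IsDualDerivation D) (hD' : IsDualDerivation D') :
    IsDualDerivation (D - D') := fun a b c => by
  simp only [sub_apply, hD a b c, hD' a b c]
  abel

theorem map_one_apply (hD : IsDualDerivation D) (c : A) : D 1 c = 0 := by
  simpa using hD 1 1 c

theorem exists_eq_dualAd_of_apply_eq_add (hD : IsDualDerivation D) {τ₁ τ₂ : A →L[𝕜] 𝕜}
    (h : ∀ a c, D a c = τ₁ (c * a) + τ₂ (a * c)) : ∃ τ : A →L[𝕜] 𝕜, D = dualAd τ := by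
  have hτ (c : A) : τ₂ c = -τ₁ c := by
    have h₁ := h 1 c
    rw [hD.map_one_apply, mul_one, one_mul] at h₁
    exact (neg_eq_of_add_eq_zero_right h₁.symm).symm
  refine ⟨τ₁, ?_⟩
  ext a c
  rw [h, hτ, dualAd_apply, sub_eq_add_neg]

-- A diagonal `∑ E i ⊗ F i` averages `D` to the functional implementing it, on every element
-- that the diagonal commutes with.
open scoped TensorProduct in
theorem exists_apply_eq_dualAd_of_diagonal (hD : IsDualDerivation D) {ι : Type*} [Fintype ι]
    {E F : ι → A} (hEF : ∑ i, E i * F i = 1) :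
    ∃ τ : A →L[𝕜] 𝕜, ∀ d, ∑ i, (d * E i) ⊗ₜ[𝕜] F i = ∑ i, E i ⊗ₜ[𝕜] (F i * d) →
      D d = dualAd τ d := by
  let L := ContinuousLinearMap.mul 𝕜 A
  refine ⟨-∑ i, D (E i) ∘L L (F i), fun d hd => ?_⟩
  ext c
  let Φ : A ⊗[𝕜] A →ₗ[𝕜] 𝕜 := TensorProduct.lift
    ((ContinuousLinearMap.toLinearMap₁₂ D).compl₂ (LinearMap.mulRight 𝕜 c))
  have hΦ : ∑ i, D (d * E i) (F i * c) = ∑ i, D (E i) (F i * d * c) := by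
    simpa [Φ] using congrArg Φ hd
  have hone : ∑ i, D d (E i * (F i * c)) = D d c := by
    simp only [← mul_assoc, ← map_sum, ← Finset.sum_mul, hEF, one_mul]
  have hexpand : D d c + ∑ i, D (E i) (F i * c * d) = ∑ i, D (E i) (F i * d * c) := by
    simpa only [hD d, Finset.sum_add_distrib, hone] using hΦ
  simp only [dualAd_apply, neg_apply, sum_apply, ContinuousLinearMap.comp_apply, L,
    ContinuousLinearMap.mul_apply']
  simp only [mul_assoc] at hexpand ⊢
  linear_combination hexpand

end IsDualDerivation

theorem WeaklyAmenable.exists_apply_eq_add (hW : WeaklyAmenable 𝕜 A)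
    (hA : GeneratedByIdempotents 𝕜 A) {φ : A →L[𝕜] A →L[𝕜] 𝕜}
    (hφ : ∀ x y, x * y = 0 → y * x = 0 → φ x y = 0) :
    ∃ τ₁ τ₂ : A →L[𝕜] 𝕜, ∀ x y, φ x y = τ₁ (x * y) + τ₂ (y * x) := by
  let L := ContinuousLinearMap.mul 𝕜 A
  let D : A →L[𝕜] A →L[𝕜] 𝕜 :=
    φ.flip - ContinuousLinearMap.compL 𝕜 A A 𝕜 (φ.flip 1) ∘L L.flip
  have hD_apply (a c : A) : D a c = φ c a - φ (c * a) 1 := by simp [D, L]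
  have hD : IsDualDerivation D := fun a b c => by
    have h : φ (b * c) a - φ c (a * b) = φ (b * (c * a)) 1 - φ (c * a) b :=
      hA.apply_mul_sub_apply_mul (φ := ContinuousLinearMap.toLinearMap₁₂ φ) hφ b c a
    simp only [hD_apply, ← mul_assoc] at h ⊢
    linear_combination -h
  obtain ⟨τ, hτ⟩ := hW D hD
  refine ⟨φ.flip 1 + τ, -τ, fun x y => ?_⟩
  have h := hD_apply y x
  rw [hτ, dualAd_apply] at h
  simp only [add_apply, neg_apply, ContinuousLinearMap.flip_apply]
  linear_combination -h

theorem WeaklyAmenable.twoSidedZeroProductDetermined {A : Type*} [NormedRing A]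
    [NormedAlgebra ℂ A] (hW : WeaklyAmenable ℂ A) (hA : GeneratedByIdempotents ℂ A) :
    TwoSidedZeroProductDetermined A := fun φ hφ_cont hφ =>
  let φ₁ : A →ₗ[ℂ] A →L[ℂ] ℂ :=
    { toFun x := ⟨φ x, hφ_cont.comp (Continuous.prodMk_right x)⟩
      map_add' x y := by ext; simp
      map_smul' r x := by ext; simp }
  hW.exists_apply_eq_add hA
    (φ := ⟨φ₁, ContinuousLinearMap.continuous_of_continuous_uncurry φ₁ hφ_cont⟩) hφ

end WeakAmenability

section InfiniteAmpliation

/-- The algebraic trace of an isomorphism `K ≃ K ⊕ K ⊕ ⋯` on an algebra `B` of operators on `K`: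
`head` and `tail` embed `K` as the first summand and as the remaining ones, `headInv` and `tailInv`
are their left inverses, and `ampl d` acts as `d` on every summand. -/
structure InfiniteAmpliation (𝕜 B : Type*) [CommSemiring 𝕜] [Semiring B] [TopologicalSpace B]
    [Algebra 𝕜 B] where
  head : B
  headInv : B
  tail : B
  tailInv : B
  ampl : B →A[𝕜] B
  headInv_mul_head : headInv * head = 1
  tailInv_mul_tail : tailInv * tail = 1
  headInv_mul_tail : headInv * tail = 0
  tailInv_mul_head : tailInv * head = 0
  ampl_eq (d : B) : ampl d = head * d * headInv + tail * ampl d * tailInv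

namespace InfiniteAmpliation

section Semiring

variable {𝕜 B : Type*} [CommSemiring 𝕜] [Semiring B] [TopologicalSpace B] [Algebra 𝕜 B]
  (P : InfiniteAmpliation 𝕜 B)

theorem headInv_mul_ampl (d : B) : P.headInv * P.ampl d = d * P.headInv := by
  rw [P.ampl_eq]
  simp only [mul_add, ← mul_assoc, P.headInv_mul_head, P.headInv_mul_tail]
  simp

theorem ampl_mul_head (d : B) : P.ampl d * P.head = P.head * d := by
  rw [P.ampl_eq]
  simp only [add_mul, mul_assoc, P.headInv_mul_head, P.tailInv_mul_head]
  simp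

theorem tailInv_mul_ampl (d : B) : P.tailInv * P.ampl d = P.ampl d * P.tailInv := by
  conv_lhs => rw [P.ampl_eq]
  simp only [mul_add, ← mul_assoc, P.tailInv_mul_head, P.tailInv_mul_tail]
  simp

theorem ampl_mul_tail (d : B) : P.ampl d * P.tail = P.tail * P.ampl d := by
  conv_lhs => rw [P.ampl_eq]
  simp only [add_mul, mul_assoc, P.headInv_mul_tail, P.tailInv_mul_tail]
  simp

theorem head_mul_headInv_add_tail_mul_tailInv :
    P.head * P.headInv + P.tail * P.tailInv = 1 := by
  simpa using (P.ampl_eq 1).symm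

end Semiring

theorem generatedByIdempotents {𝕜 B : Type*} [CommRing 𝕜] [Ring B] [TopologicalSpace B]
    [Algebra 𝕜 B] (P : InfiniteAmpliation 𝕜 B) : GeneratedByIdempotents 𝕜 B := by
  have hsum := P.head_mul_headInv_add_tail_mul_tailInv
  obtain ⟨s, s', v, v', _, hs, hv, hsv, hvs, _⟩ := P
  dsimp only at hsum
  let S := Algebra.adjoin 𝕜 {e : B | IsIdempotentElem e}
  have head_tailInv (x : B) : s * x * v' ∈ S :=
    mul_mul_mem_adjoin_idempotents_of_leftInverse hs hv hvs x
  have tail_headInv (x : B) : v * x * s' ∈ S :=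
    mul_mul_mem_adjoin_idempotents_of_leftInverse hv hs hsv x
  have head_headInv (x : B) : s * x * s' ∈ S := by
    have h : (s * x * v') * (v * 1 * s') = s * x * s' := by grind
    exact h ▸ mul_mem (head_tailInv x) (tail_headInv 1)
  have tail_tailInv (x : B) : v * x * v' ∈ S := by
    have h : (v * x * s') * (s * 1 * v') = v * x * v' := by grind
    exact h ▸ mul_mem (tail_headInv x) (head_tailInv 1)
  refine Algebra.eq_top_iff.2 fun x => ?_
  have hx : x = s * (s' * x * s) * s' + s * (s' * x * v) * v' +
      (v * (v' * x * s) * s' + v * (v' * x * v) * v') := by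
    calc x = (s * s' + v * v') * x * (s * s' + v * v') := by rw [hsum, one_mul, mul_one]
      _ = _ := by noncomm_ring
  rw [hx]
  exact add_mem (add_mem (head_headInv _) (head_tailInv _))
    (add_mem (tail_headInv _) (tail_tailInv _))

-- Expanding `D (ampl d) (ampl c)` along `ampl d = head * d * headInv + tail * ampl d * tailInv`
-- reproduces it on the right-hand side; what is left expresses `D d c`.
theorem weaklyAmenable {𝕜 B : Type*} [NontriviallyNormedField 𝕜] [NormedRing B]
    [NormedAlgebra 𝕜 B] (P : InfiniteAmpliation 𝕜 B) : WeaklyAmenable 𝕜 B := fun D hD => by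
  let L := ContinuousLinearMap.mul 𝕜 B
  let β : B →L[𝕜] B := P.ampl.toContinuousLinearMap
  refine hD.exists_eq_dualAd_of_apply_eq_add
    (τ₁ := -(D P.headInv ∘L L P.head + D P.tailInv ∘L L P.tail ∘L β))
    (τ₂ := -(D P.head ∘L L.flip P.headInv + D P.tail ∘L L.flip P.tailInv ∘L β)) fun d c => ?_
  have hhead : D (P.head * d * P.headInv) (P.ampl c) =
      D P.head (d * c * P.headInv) + D d c + D P.headInv (P.head * (c * d)) := by
    rw [hD, hD, P.headInv_mul_ampl, mul_assoc c, P.headInv_mul_head, mul_one,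
      ← mul_assoc (P.ampl c), P.ampl_mul_head, ← mul_assoc, mul_assoc P.head]
  have htail : D (P.tail * P.ampl d * P.tailInv) (P.ampl c) =
      D P.tail (P.ampl (d * c) * P.tailInv) + D (P.ampl d) (P.ampl c) +
        D P.tailInv (P.tail * P.ampl (c * d)) := by
    rw [hD, hD, P.tailInv_mul_ampl, mul_assoc (P.ampl c), P.tailInv_mul_tail, mul_one, ← mul_assoc,
      ← mul_assoc, P.ampl_mul_tail, mul_assoc P.tail, ← map_mul, ← map_mul]
  have hsum := congrArg (D · (P.ampl c)) (P.ampl_eq d)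
  simp only [map_add, add_apply, hhead, htail] at hsum
  simp only [L, β, neg_apply, add_apply, ContinuousLinearMap.comp_apply,
    ContinuousLinearMap.flip_apply, ContinuousLinearMap.mul_apply',
    ContinuousAlgHom.coe_toContinuousLinearMap]
  linear_combination -hsum

end InfiniteAmpliation

end InfiniteAmpliation

section SequenceSpaces

open scoped ENNReal

section Comparison

variable {α β : Type*} {E : α → Type*} {F : β → Type*} [∀ i, NormedAddCommGroup (E i)]
  [∀ j, NormedAddCommGroup (F j)] {p : ℝ≥0∞} {g : α → β}

theorem sum_norm_rpow_le_of_injOn {x : ∀ i, E i} {y : ∀ j, F j} (hp : 0 < p.toReal)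
    (hg : Set.InjOn g {i | x i ≠ 0}) (hxy : ∀ i, ‖x i‖ ≤ ‖y (g i)‖) {C : ℝ}
    (hC : ∀ t : Finset β, ∑ j ∈ t, ‖y j‖ ^ p.toReal ≤ C) (s : Finset α) :
    ∑ i ∈ s, ‖x i‖ ^ p.toReal ≤ C := by
  classical
  calc ∑ i ∈ s, ‖x i‖ ^ p.toReal
      = ∑ i ∈ s with x i ≠ 0, ‖x i‖ ^ p.toReal := by
        refine (Finset.sum_filter_of_ne fun i _ hi => ?_).symm
        intro hxi
        simp [hxi, hp.ne'] at hi
    _ ≤ ∑ i ∈ s with x i ≠ 0, ‖y (g i)‖ ^ p.toReal := by gcongr with i; exact hxy i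
    _ = ∑ j ∈ (s.filter (x · ≠ 0)).image g, ‖y j‖ ^ p.toReal :=
        (Finset.sum_image (f := fun j => ‖y j‖ ^ p.toReal)
          (hg.mono fun i hi => (Finset.mem_filter.1 hi).2)).symm
    _ ≤ C := hC _

theorem memℓp_of_norm_le_comp {x : ∀ i, E i} {y : ∀ j, F j} (hy : Memℓp y p) (hp : p ≠ 0)
    (hg : Set.InjOn g {i | x i ≠ 0}) (hxy : ∀ i, ‖x i‖ ≤ ‖y (g i)‖) : Memℓp x p := by
  obtain rfl | rfl | hp' := p.trichotomy
  · exact absurd rfl hp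
  · obtain ⟨C, hC⟩ := hy.bddAbove
    exact memℓp_infty ⟨C, by rintro _ ⟨i, rfl⟩; exact (hxy i).trans (hC ⟨g i, rfl⟩)⟩
  · exact memℓp_gen' (sum_norm_rpow_le_of_injOn hp' hg hxy fun t =>
      lp.sum_rpow_le_norm_rpow hp' ⟨y, hy⟩ t)

theorem lp_norm_le_of_norm_le_comp {x : lp E p} {y : lp F p} (hp : p ≠ 0)
    (hg : Set.InjOn g {i | x i ≠ 0}) (hxy : ∀ i, ‖x i‖ ≤ ‖y (g i)‖) : ‖x‖ ≤ ‖y‖ := by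
  obtain rfl | rfl | hp' := p.trichotomy
  · exact absurd rfl hp
  · exact lp.norm_le_of_forall_le (lp.norm_nonneg' y) fun i =>
      (hxy i).trans (lp.norm_apply_le_norm ENNReal.top_ne_zero y _)
  · exact lp.norm_le_of_forall_sum_le hp' (lp.norm_nonneg' y)
      (sum_norm_rpow_le_of_injOn hp' hg hxy (lp.sum_rpow_le_norm_rpow hp' y))

end Comparison

section Shift

variable {𝕜 E : Type*} [NontriviallyNormedField 𝕜] [NormedAddCommGroup E] [NormedSpace 𝕜 E]
  {p : ℝ≥0∞} [Fact (1 ≤ p)]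

/-- The operator `lp(β) → lp(α)` induced by a linear map `G` of sequences such that `‖G f i‖` is
bounded by `‖c‖ * ‖f (g i)‖`, with `g` injective on the support of `G f`. -/
noncomputable def lpMapOfNormLE {α β : Type*} (G : (β → E) →ₗ[𝕜] (α → E)) (c : 𝕜) (g : α → β)
    (hg : ∀ f, Set.InjOn g {i | G f i ≠ 0}) (hG : ∀ f i, ‖G f i‖ ≤ ‖c‖ * ‖f (g i)‖) :
    lp (fun _ : β => E) p →L[𝕜] lp (fun _ : α => E) p :=
  have hp : p ≠ 0 := (zero_lt_one.trans_le Fact.out).ne'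
  have hG' (f : lp (fun _ : β => E) p) (i : α) : ‖G ⇑f i‖ ≤ ‖(c • f) (g i)‖ :=
    (hG f i).trans_eq (norm_smul _ _).symm
  LinearMap.mkContinuous
    { toFun f := ⟨G ⇑f, memℓp_of_norm_le_comp (lp.memℓp (c • f)) hp (hg f) (hG' f)⟩
      map_add' f₁ f₂ := lp.ext (map_add G ⇑f₁ ⇑f₂)
      map_smul' r f := lp.ext (map_smul G r ⇑f) }
    ‖c‖ fun f => (lp_norm_le_of_norm_le_comp hp (hg f) (hG' f)).trans_eq (norm_smul c f)

theorem norm_lpMapOfNormLE_le {α β : Type*} (G : (β → E) →ₗ[𝕜] (α → E)) (c : 𝕜) (g : α → β)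
    (hg : ∀ f, Set.InjOn g {i | G f i ≠ 0}) (hG : ∀ f i, ‖G f i‖ ≤ ‖c‖ * ‖f (g i)‖) :
    ‖lpMapOfNormLE (p := p) G c g hg hG‖ ≤ ‖c‖ := by
  unfold lpMapOfNormLE
  exact LinearMap.mkContinuous_norm_le _ (norm_nonneg c) _

variable (𝕜) in
/-- The right shift `(f₀, f₁, …) ↦ (0, f₀, f₁, …)` on a space of sequences. -/
noncomputable def lpShift : lp (fun _ : ℕ => E) p →L[𝕜] lp (fun _ : ℕ => E) p :=
  lpMapOfNormLE
    { toFun f n := Nat.casesOn n 0 f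
      map_add' f₁ f₂ := by ext (_ | n) <;> simp
      map_smul' r f := by ext (_ | n) <;> simp }
    1 Nat.pred
    (fun f => by
      rintro (_ | m) hm (_ | n) hn h <;> simp_all)
    (fun f n => by cases n <;> simp)

variable (𝕜) in
/-- The left shift `(f₀, f₁, …) ↦ (f₁, f₂, …)` on a space of sequences. -/
noncomputable def lpUnshift : lp (fun _ : ℕ => E) p →L[𝕜] lp (fun _ : ℕ => E) p :=
  lpMapOfNormLE (LinearMap.funLeft 𝕜 E Nat.succ) 1 Nat.succ
    (fun _ => Nat.succ_injective.injOn) (fun f n => by simp [LinearMap.funLeft_apply])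

theorem lpShift_apply_zero (f : lp (fun _ : ℕ => E) p) : lpShift 𝕜 f 0 = 0 :=
  rfl

theorem lpUnshift_single_zero (x : E) :
    lpUnshift 𝕜 (lp.single p 0 x : lp (fun _ : ℕ => E) p) = 0 := by
  ext n
  exact lp.single_apply_ne (E := fun _ => E) p 0 x n.succ_ne_zero

theorem single_zero_add_lpShift_lpUnshift (f : lp (fun _ : ℕ => E) p) :
    lp.single p 0 (f 0) + lpShift 𝕜 (lpUnshift 𝕜 f) = f := by
  ext (_ | n)
  · have h := lp.single_apply_self (E := fun _ => E) p 0 (f 0)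
    exact (congrArg (· + 0) h).trans (add_zero _)
  · have h := lp.single_apply_ne (E := fun _ => E) p 0 (f 0) n.succ_ne_zero
    exact (congrArg (· + f (n + 1)) h).trans (zero_add _)

end Shift

theorem lp_evalCLM_apply {𝕜 α : Type*} [NormedRing 𝕜] {E : α → Type*}
    [∀ i, NormedAddCommGroup (E i)] [∀ i, Module 𝕜 (E i)] [∀ i, IsBoundedSMul 𝕜 (E i)] {p : ℝ≥0∞}
    [Fact (1 ≤ p)] (i : α) (f : lp E p) : lp.evalCLM 𝕜 E p i f = f i :=
  rfl

section Ampliation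

variable {𝕜 E : Type*} [RCLike 𝕜] [NormedAddCommGroup E] [NormedSpace 𝕜 E] {p : ℝ≥0∞}
  [Fact (1 ≤ p)]

/-- The operator acting as `d` on every coordinate of a space of sequences. -/
noncomputable def lpAmplOp (d : E →L[𝕜] E) :
    lp (fun _ : ℕ => E) p →L[𝕜] lp (fun _ : ℕ => E) p :=
  lpMapOfNormLE (d.toLinearMap.compLeft ℕ) (‖d‖ : 𝕜) id (fun _ => Set.injOn_id _)
    (fun f n => by simpa using d.le_opNorm (f n))

theorem norm_lpAmplOp_le (d : E →L[𝕜] E) : ‖lpAmplOp (p := p) d‖ ≤ ‖d‖ := by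
  simpa only [lpAmplOp, RCLike.norm_ofReal, abs_norm] using
    norm_lpMapOfNormLE_le (d.toLinearMap.compLeft ℕ) (‖d‖ : 𝕜) id
      (fun _ => Set.injOn_id _) (fun f n => by simpa using d.le_opNorm (f n))

/-- The ampliation `d ↦ d ⊕ d ⊕ ⋯`, as a homomorphism of algebras. -/
noncomputable def lpAmpl :
    (E →L[𝕜] E) →A[𝕜] (lp (fun _ : ℕ => E) p →L[𝕜] lp (fun _ : ℕ => E) p) :=
  { toFun := lpAmplOp
    map_one' := rfl
    map_mul' _ _ := rfl
    map_zero' := rfl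
    map_add' _ _ := rfl
    commutes' _ := rfl
    cont := AddMonoidHomClass.continuous_of_bound
      ({ toFun := lpAmplOp (p := p), map_zero' := rfl, map_add' _ _ := rfl } : (E →L[𝕜] E) →+ _) 1
      fun d => (norm_lpAmplOp_le d).trans_eq (one_mul _).symm }

theorem lpAmpl_apply_eq (d : E →L[𝕜] E) (f : lp (fun _ : ℕ => E) p) :
    lpAmpl d f = lp.single p 0 (d (f 0)) + lpShift 𝕜 (lpAmpl d (lpUnshift 𝕜 f)) :=
  (single_zero_add_lpShift_lpUnshift (𝕜 := 𝕜) (lpAmpl d f)).symm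

/-- An isomorphism of `E` with a space of sequences in `E` makes the operators on `E` an algebra
with an infinite ampliation. -/
noncomputable def InfiniteAmpliation.ofLpEquiv (e : lp (fun _ : ℕ => E) p ≃L[𝕜] E) :
    InfiniteAmpliation 𝕜 (E →L[𝕜] E) where
  head := (e : _ →L[𝕜] E) ∘L lp.singleContinuousLinearMap 𝕜 (fun _ => E) p 0
  headInv := lp.evalCLM 𝕜 (fun _ => E) p 0 ∘L (e.symm : E →L[𝕜] _)
  tail := e.conjContinuousAlgEquiv (lpShift 𝕜)
  tailInv := e.conjContinuousAlgEquiv (lpUnshift 𝕜)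
  ampl := e.conjContinuousAlgEquiv.toContinuousAlgHom.comp lpAmpl
  headInv_mul_head := by
    ext x
    simp [lp_evalCLM_apply]
  tailInv_mul_tail := by
    rw [← map_mul]
    exact map_one e.conjContinuousAlgEquiv
  headInv_mul_tail := by
    ext x
    simpa [lp_evalCLM_apply] using lpShift_apply_zero (e.symm x)
  tailInv_mul_head := by
    ext x
    simpa using lpUnshift_single_zero x
  ampl_eq d := by
    ext x
    simpa [lp_evalCLM_apply, -EmbeddingLike.apply_eq_iff_eq] using
      congrArg e (lpAmpl_apply_eq d (e.symm x))

end Ampliation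

end SequenceSpaces

section HilbertSpaceOfSequences

variable {𝕜 K : Type*} [RCLike 𝕜] [NormedAddCommGroup K] [InnerProductSpace 𝕜 K]

theorem orthonormal_lp_single {ι : Type*} [DecidableEq ι] {G : ι → Type*}
    [∀ i, NormedAddCommGroup (G i)] [∀ i, InnerProductSpace 𝕜 (G i)] {w : ι → Type*}
    {b : ∀ i, w i → G i} (hb : ∀ i, Orthonormal 𝕜 (b i)) :
    Orthonormal 𝕜 fun x : Σ i, w i => (lp.single 2 x.1 (b x.1 x.2) : lp G 2) := by
  classical
  rw [orthonormal_iff_ite]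
  rintro ⟨i, x⟩ ⟨j, y⟩
  rw [lp.inner_single_left]
  obtain rfl | hij := eq_or_ne i j
  · rw [lp.single_apply_self, orthonormal_iff_ite.1 (hb i)]
    simp
  · rw [lp.single_apply_ne _ _ _ hij, inner_zero_right, if_neg fun h => hij (congrArg Sigma.fst h)]

theorem span_range_lp_single_orthogonal {ι : Type*} [DecidableEq ι] {G : ι → Type*}
    [∀ i, NormedAddCommGroup (G i)] [∀ i, InnerProductSpace 𝕜 (G i)] {w : ι → Type*}
    (b : ∀ i, HilbertBasis (w i) 𝕜 (G i)) :
    (Submodule.span 𝕜 (Set.range fun x : Σ i, w i =>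
      (lp.single 2 x.1 (b x.1 x.2) : lp G 2)))ᗮ = ⊥ := by
  refine (Submodule.eq_bot_iff _).2 fun f hf => ?_
  ext i
  refine (b i).repr.map_eq_zero_iff.1 ?_
  ext x
  have h := (Submodule.mem_orthogonal _ f).1 hf _ (Submodule.subset_span ⟨⟨i, x⟩, rfl⟩)
  rw [lp.inner_single_left] at h
  rwa [(b i).repr_apply_apply]

/-- The Hilbert basis of a Hilbert sum obtained from Hilbert bases of its summands. -/
noncomputable def lpHilbertBasis {ι : Type*} [DecidableEq ι] {G : ι → Type*}
    [∀ i, NormedAddCommGroup (G i)] [∀ i, InnerProductSpace 𝕜 (G i)] [∀ i, CompleteSpace (G i)]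
    {w : ι → Type*} (b : ∀ i, HilbertBasis (w i) 𝕜 (G i)) :
    HilbertBasis (Σ i, w i) 𝕜 (lp G 2) :=
  HilbertBasis.mkOfOrthogonalEqBot (orthonormal_lp_single fun i => (b i).orthonormal)
    (span_range_lp_single_orthogonal b)

theorem nonempty_linearIsometryEquiv_of_equiv {ι ι' L : Type*} [NormedAddCommGroup L]
    [InnerProductSpace 𝕜 L] [CompleteSpace L] (b : HilbertBasis ι 𝕜 K)
    (c : HilbertBasis ι' 𝕜 L) (e : ι ≃ ι') : Nonempty (K ≃ₗᵢ[𝕜] L) := by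
  have hc : Orthonormal 𝕜 (c ∘ e) := c.orthonormal.comp e e.injective
  have hspan : (Submodule.span 𝕜 (Set.range (c ∘ e)))ᗮ = ⊥ := by
    rw [Set.range_comp, e.range_eq_univ, Set.image_univ, ← Submodule.topologicalClosure_eq_top_iff,
      c.dense_span]
  exact ⟨b.repr.trans (HilbertBasis.mkOfOrthogonalEqBot hc hspan).repr.symm⟩

theorem nonempty_lp_two_nat_linearIsometryEquiv [CompleteSpace K] (hK : ¬FiniteDimensional 𝕜 K) :
    Nonempty (lp (fun _ : ℕ => K) 2 ≃ₗᵢ[𝕜] K) := by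
  obtain ⟨w, b, -⟩ := exists_hilbertBasis 𝕜 K
  have hw : Infinite w := by
    by_contra hfin
    rw [not_infinite_iff_finite] at hfin
    have := Fintype.ofFinite w
    exact hK (Module.Basis.finiteDimensional_of_finite b.toOrthonormalBasis.toBasis)
  obtain ⟨e⟩ : Nonempty ((Σ _ : ℕ, w) ≃ w) := by
    rw [← Cardinal.eq]
    simp
  exact nonempty_linearIsometryEquiv_of_equiv (lpHilbertBasis fun _ => b) b e

end HilbertSpaceOfSequences

section OperatorsOnHilbertSpace

open InnerProductSpace

variable {𝕜 K : Type*} [RCLike 𝕜] [NormedAddCommGroup K] [InnerProductSpace 𝕜 K]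

theorem rankOne_mem_adjoin_idempotents_of_inner_ne_zero {x y : K} (h : inner 𝕜 y x ≠ 0) :
    rankOne 𝕜 x y ∈ Algebra.adjoin 𝕜 {e : K →L[𝕜] K | IsIdempotentElem e} := by
  have he : IsIdempotentElem ((inner 𝕜 y x)⁻¹ • rankOne 𝕜 x y) := by
    have hmul : rankOne 𝕜 x y * rankOne 𝕜 x y = inner 𝕜 y x • rankOne 𝕜 x y :=
      rankOne_comp_rankOne _ _ _ _
    rw [IsIdempotentElem, smul_mul_smul_comm, hmul, smul_smul, mul_assoc, inv_mul_cancel₀ h,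
      mul_one]
  have hmem := Subalgebra.smul_mem _ (Algebra.subset_adjoin (R := 𝕜)
    (s := {e : K →L[𝕜] K | IsIdempotentElem e}) he) (inner 𝕜 y x)
  rwa [smul_inv_smul₀ h] at hmem

theorem rankOne_mem_adjoin_idempotents (x y : K) :
    rankOne 𝕜 x y ∈ Algebra.adjoin 𝕜 {e : K →L[𝕜] K | IsIdempotentElem e} := by
  by_cases hyx : inner 𝕜 y x = 0
  · obtain rfl | hy := eq_or_ne y 0
    · simp
    have hyy : inner 𝕜 y y ≠ 0 := inner_self_ne_zero.2 hy
    have hsub := sub_mem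
      (rankOne_mem_adjoin_idempotents_of_inner_ne_zero (x := x + y) (y := y) <| by
        rwa [inner_add_right, hyx, zero_add])
      (rankOne_mem_adjoin_idempotents_of_inner_ne_zero hyy)
    simpa using hsub
  · exact rankOne_mem_adjoin_idempotents_of_inner_ne_zero hyx

theorem generatedByIdempotents_continuousLinearMap_of_finiteDimensional [FiniteDimensional 𝕜 K] :
    GeneratedByIdempotents 𝕜 (K →L[𝕜] K) := by
  let b := stdOrthonormalBasis 𝕜 K
  refine Algebra.eq_top_iff.2 fun T => ?_
  have hT : T = ∑ i, rankOne 𝕜 (T (b i)) (b i) := by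
    simp only [← comp_rankOne, ← ContinuousLinearMap.comp_finsetSum,
      b.sum_rankOne_eq_id, ContinuousLinearMap.comp_id]
  rw [hT]
  exact sum_mem fun i _ => rankOne_mem_adjoin_idempotents _ _

open scoped TensorProduct in
theorem sum_mul_rankOne_tmul_rankOne {ι : Type*} [Fintype ι] (b : OrthonormalBasis ι 𝕜 K) (u : K)
    (d : K →L[𝕜] K) :
    ∑ i, (d * rankOne 𝕜 (b i) u) ⊗ₜ[𝕜] rankOne 𝕜 u (b i) =
      ∑ i, rankOne 𝕜 (b i) u ⊗ₜ[𝕜] (rankOne 𝕜 u (b i) * d) := by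
  have hleft (i : ι) :
      d * rankOne 𝕜 (b i) u = ∑ j, inner 𝕜 (b j) (d (b i)) • rankOne 𝕜 (b j) u := by
    calc d * rankOne 𝕜 (b i) u = rankOne 𝕜 (∑ j, inner 𝕜 (b j) (d (b i)) • b j) u := by
          rw [b.sum_repr']; exact comp_rankOne _ _ _
      _ = _ := by simp
  have hright (j : ι) :
      rankOne 𝕜 u (b j) * d = ∑ i, inner 𝕜 (b j) (d (b i)) • rankOne 𝕜 u (b i) := by
    ext x
    simp only [mul_apply_eq_comp, rankOne_apply, sum_apply, smul_apply, smul_smul,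
      ← Finset.sum_smul]
    conv_lhs => rw [← b.sum_repr' x]
    simp only [map_sum, map_smul, inner_sum, inner_smul_right, mul_comm]
  simp only [hleft, hright, TensorProduct.sum_tmul, TensorProduct.tmul_sum,
    TensorProduct.smul_tmul]
  exact Finset.sum_comm

theorem weaklyAmenable_continuousLinearMap_of_finiteDimensional [FiniteDimensional 𝕜 K] :
    WeaklyAmenable 𝕜 (K →L[𝕜] K) := fun D hD => by
  obtain _ | _ := subsingleton_or_nontrivial K
  · exact ⟨0, Subsingleton.elim _ _⟩
  let b := stdOrthonormalBasis 𝕜 K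
  obtain ⟨i₀⟩ := b.toBasis.index_nonempty
  have hdiag : ∑ i, rankOne 𝕜 (b i) (b i₀) * rankOne 𝕜 (b i₀) (b i) = 1 := by
    refine Eq.trans (Finset.sum_congr rfl fun i _ => ?_) b.sum_rankOne_eq_id
    exact (rankOne_comp_rankOne _ _ _ _).trans (by rw [b.inner_eq_one, one_smul])
  obtain ⟨τ, hτ⟩ := hD.exists_apply_eq_dualAd_of_diagonal hdiag
  exact ⟨τ, ContinuousLinearMap.ext fun d => hτ d (sum_mul_rankOne_tmul_rankOne b (b i₀) d)⟩

variable [CompleteSpace K]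

theorem nonempty_infiniteAmpliation_of_not_finiteDimensional
    (hK : ¬FiniteDimensional 𝕜 K) :
    Nonempty (InfiniteAmpliation 𝕜 (K →L[𝕜] K)) :=
  (nonempty_lp_two_nat_linearIsometryEquiv hK).map fun e =>
    .ofLpEquiv e.toContinuousLinearEquiv

variable (𝕜 K) in
theorem generatedByIdempotents_continuousLinearMap : GeneratedByIdempotents 𝕜 (K →L[𝕜] K) := by
  by_cases hK : FiniteDimensional 𝕜 K
  · exact generatedByIdempotents_continuousLinearMap_of_finiteDimensional
  · obtain ⟨P⟩ := nonempty_infiniteAmpliation_of_not_finiteDimensional hK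
    exact P.generatedByIdempotents

variable (𝕜 K) in
theorem weaklyAmenable_continuousLinearMap : WeaklyAmenable 𝕜 (K →L[𝕜] K) := by
  by_cases hK : FiniteDimensional 𝕜 K
  · exact weaklyAmenable_continuousLinearMap_of_finiteDimensional
  · obtain ⟨P⟩ := nonempty_infiniteAmpliation_of_not_finiteDimensional hK
    exact P.weaklyAmenable

end OperatorsOnHilbertSpace

section BlockTriangularization

theorem sum_sum_mul_mul {A ι : Type*} [Fintype ι] [Semiring A] {p : ι → A}
    (hp : CompleteOrthogonalIdempotents p) (a : A) : ∑ i, ∑ j, p i * a * p j = a := by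
  simp only [← Finset.mul_sum, ← Finset.sum_mul, hp.complete, one_mul, mul_one]

/-- A presentation of `A` as an algebra of block upper triangular matrices: `p` is the family of
block projections, and `incl i` identifies `B i` with the `i`-th diagonal corner `p i * A * p i`. -/
structure BlockTriangularization (𝕜 A : Type*) {ι : Type*} [Fintype ι] [LT ι] (B : ι → Type*)
    [CommSemiring 𝕜] [Semiring A] [TopologicalSpace A] [Algebra 𝕜 A] [∀ i, Semiring (B i)]
    [∀ i, TopologicalSpace (B i)] [∀ i, Algebra 𝕜 (B i)] where
  p : ι → A
  complete : CompleteOrthogonalIdempotents p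
  mul_mul_eq_zero {i j : ι} (hij : j < i) (a : A) : p i * a * p j = 0
  incl (i : ι) : B i →ₙₐ[𝕜] A
  continuous_incl (i : ι) : Continuous (incl i)
  compress (i : ι) : A →L[𝕜] B i
  compress_incl (i : ι) (x : B i) : compress i (incl i x) = x
  incl_compress (i : ι) (a : A) : incl i (compress i a) = p i * a * p i

namespace BlockTriangularization

variable {𝕜 A ι : Type*} [Fintype ι] [LinearOrder ι] {B : ι → Type*}

theorem compress_mul [CommSemiring 𝕜] [Semiring A] [TopologicalSpace A] [Algebra 𝕜 A]
    [∀ i, Semiring (B i)] [∀ i, TopologicalSpace (B i)] [∀ i, Algebra 𝕜 (B i)]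
    (P : BlockTriangularization 𝕜 A B) (i : ι) (a b : A) :
    P.compress i (a * b) = P.compress i a * P.compress i b := by
  have hcorner : P.p i * (a * b) * P.p i = P.p i * a * P.p i * (P.p i * b * P.p i) := by
    calc P.p i * (a * b) * P.p i
        = ∑ j, P.p i * a * P.p j * (P.p j * b * P.p i) := by
          simp only [mul_assoc, ← mul_assoc (P.p _) (P.p _), (P.complete.idem _).eq]
          simp only [← mul_assoc, ← Finset.sum_mul, ← Finset.mul_sum, P.complete.complete, mul_one]
      _ = P.p i * a * P.p i * (P.p i * b * P.p i) :=
          Finset.sum_eq_single_of_mem i (Finset.mem_univ i) fun j _ hji => by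
            obtain h | h := lt_or_gt_of_ne hji
            · rw [P.mul_mul_eq_zero h, zero_mul]
            · rw [P.mul_mul_eq_zero h, mul_zero]
  rw [← P.compress_incl i (P.compress i a * P.compress i b), map_mul (P.incl i), P.incl_compress,
    P.incl_compress, ← hcorner, ← P.incl_compress, P.compress_incl]

theorem generatedByIdempotents [CommRing 𝕜] [Ring A] [TopologicalSpace A] [Algebra 𝕜 A]
    [∀ i, Semiring (B i)] [∀ i, TopologicalSpace (B i)] [∀ i, Algebra 𝕜 (B i)]
    (P : BlockTriangularization 𝕜 A B) (hB : ∀ i, GeneratedByIdempotents 𝕜 (B i)) :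
    GeneratedByIdempotents 𝕜 A := by
  refine Algebra.eq_top_iff.2 fun a => ?_
  rw [← sum_sum_mul_mul P.complete a]
  refine sum_mem fun i _ => sum_mem fun j _ => ?_
  obtain hij | rfl := ne_or_eq i j
  · exact mul_mul_mem_adjoin_idempotents (P.complete.idem i) (P.complete.ortho hij.symm) a
  · rw [← P.incl_compress]
    exact map_mem_adjoin_idempotents (P.incl i) (hB i ▸ Algebra.mem_top)

section WeakAmenability

variable [NontriviallyNormedField 𝕜] [NormedRing A] [NormedAlgebra 𝕜 A] [∀ i, NormedRing (B i)]
  [∀ i, NormedAlgebra 𝕜 (B i)] {D : A →L[𝕜] A →L[𝕜] 𝕜}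

-- A derivation vanishing on the `p i` is a bimodule map over them; it pairs the `(i, j)` block
-- with the `(j, i)` block, and one of these is zero unless `i = j`.
theorem apply_eq_sum_of_apply_p_eq_zero (P : BlockTriangularization 𝕜 A B)
    (hD : IsDualDerivation D) (hp : ∀ i, D (P.p i) = 0) (a c : A) :
    D a c = ∑ i, D (P.p i * a * P.p i) (P.p i * c * P.p i) := by
  have hblock (i j : ι) (a : A) :
      D (P.p i * a * P.p j) c = D (P.p i * a * P.p j) (P.p j * c * P.p i) := by
    have hi : P.p i * a * P.p j = P.p i * (P.p i * a * P.p j) * P.p j := by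
      simp only [mul_assoc, (P.complete.idem j).eq]
      rw [← mul_assoc (P.p i) (P.p i), (P.complete.idem i).eq]
    conv_lhs => rw [hi]
    rw [hD (P.p i * _), hD (P.p i), hp, hp]
    simp
  conv_lhs => rw [← sum_sum_mul_mul P.complete a]
  simp only [map_sum, sum_apply]
  refine Finset.sum_congr rfl fun i _ => ?_
  rw [← hblock]
  refine Finset.sum_eq_single_of_mem i (Finset.mem_univ i) fun j _ hji => ?_
  obtain h | h := lt_or_gt_of_ne hji
  · rw [P.mul_mul_eq_zero h, map_zero, zero_apply]
  · rw [hblock, P.mul_mul_eq_zero h, map_zero]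

theorem exists_eq_dualAd_of_apply_p_eq_zero (P : BlockTriangularization 𝕜 A B)
    (hB : ∀ i, WeaklyAmenable 𝕜 (B i)) (hD : IsDualDerivation D) (hp : ∀ i, D (P.p i) = 0) :
    ∃ τ : A →L[𝕜] 𝕜, D = dualAd τ := by
  let σ (i : ι) : B i →L[𝕜] A := ⟨P.incl i, P.continuous_incl i⟩
  have hσ (i : ι) (x : B i) : σ i x = P.incl i x := rfl
  have hσD (i : ι) : IsDualDerivation (D.bilinearComp (σ i) (σ i)) := fun a b c => by
    simpa [hσ] using hD (P.incl i a) (P.incl i b) (P.incl i c)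
  choose τ hτ using fun i => hB i _ (hσD i)
  refine ⟨∑ i, τ i ∘L P.compress i, ?_⟩
  ext a c
  have hcorner (i : ι) : D (P.p i * a * P.p i) (P.p i * c * P.p i) =
      τ i (P.compress i (c * a)) - τ i (P.compress i (a * c)) := by
    simpa [hσ, P.incl_compress, P.compress_mul] using
      congrArg (fun D => D (P.compress i a) (P.compress i c)) (hτ i)
  simp only [P.apply_eq_sum_of_apply_p_eq_zero hD hp a c, hcorner, dualAd_apply, sum_apply,
    ContinuousLinearMap.comp_apply, Finset.sum_sub_distrib]

theorem weaklyAmenable (P : BlockTriangularization 𝕜 A B) (hB : ∀ i, WeaklyAmenable 𝕜 (B i)) :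
    WeaklyAmenable 𝕜 A := fun D hD => by
  have hone : ∑ i, P.p i * P.p i = 1 := by
    simp only [(P.complete.idem _).eq, P.complete.complete]
  obtain ⟨τ, hτ⟩ := hD.exists_apply_eq_dualAd_of_diagonal hone
  have hp (i : ι) : (D - dualAd τ) (P.p i) = 0 := sub_eq_zero.2 <| hτ _ <| by
    simp [P.complete.mul_eq, TensorProduct.ite_tmul, TensorProduct.tmul_ite]
  obtain ⟨τ', hτ'⟩ :=
    P.exists_eq_dualAd_of_apply_p_eq_zero hB (hD.sub (isDualDerivation_dualAd τ)) hp
  refine ⟨τ + τ', (sub_eq_iff_eq_add'.1 hτ').trans ?_⟩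
  ext a c
  simp only [dualAd_apply, add_apply]
  ring

end WeakAmenability

end BlockTriangularization

end BlockTriangularization

section NestAlgebra

variable {𝕜 H : Type*} [RCLike 𝕜] [NormedAddCommGroup H] [InnerProductSpace 𝕜 H]

instance completeSpace_inf_orthogonal {U V : Submodule 𝕜 H} [CompleteSpace V] :
    CompleteSpace ↥(V ⊓ Uᗮ) := by
  have hclosed : IsClosed ((↑) ⁻¹' (Uᗮ : Set H) : Set (V : Set H)) :=
    U.isClosed_orthogonal.preimage continuous_subtype_val
  have hcomplete : IsComplete ((V : Set H) ∩ Uᗮ) := by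
    rw [← Subtype.image_preimage_coe,
      isComplete_image_iff isUniformEmbedding_subtype_val.isUniformInducing]
    exact hclosed.isComplete
  exact hcomplete.completeSpace_coe

theorem starProjection_inf_orthogonal {U V : Submodule 𝕜 H} [U.HasOrthogonalProjection]
    [V.HasOrthogonalProjection] [(V ⊓ Uᗮ).HasOrthogonalProjection] (hUV : U ≤ V) :
    (V ⊓ Uᗮ).starProjection = V.starProjection - U.starProjection := by
  ext x
  refine Submodule.eq_starProjection_of_mem_orthogonal
    (Submodule.mem_inf.2 ⟨sub_mem (V.starProjection_apply_mem x)
      (hUV (U.starProjection_apply_mem x)), ?_⟩) ?_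
  · rw [sub_apply, ← sub_sub_sub_cancel_left _ _ x]
    exact sub_mem (U.sub_starProjection_mem_orthogonal x)
      (Submodule.orthogonal_le hUV (V.sub_starProjection_mem_orthogonal x))
  · rw [sub_apply, ← sub_add]
    exact add_mem (Submodule.orthogonal_le inf_le_left (V.sub_starProjection_mem_orthogonal x))
      (Submodule.orthogonal_le inf_le_right
        (U.le_orthogonal_orthogonal (U.starProjection_apply_mem x)))

/-- The algebra of operators leaving every subspace `N i` invariant. -/
def nestAlgebra {ι : Type*} (N : ι → Submodule 𝕜 H) : Subalgebra 𝕜 (H →L[𝕜] H) where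
  carrier := {T | ∀ i, ∀ x ∈ N i, T x ∈ N i}
  mul_mem' hS hT i x hx := hS i _ (hT i x hx)
  add_mem' hS hT i x hx := add_mem (hS i x hx) (hT i x hx)
  algebraMap_mem' r i _ hx := (N i).smul_mem r hx

theorem mem_nestAlgebra {ι : Type*} {N : ι → Submodule 𝕜 H} {T : H →L[𝕜] H} :
    T ∈ nestAlgebra N ↔ ∀ i, ∀ x ∈ N i, T x ∈ N i :=
  Iff.rfl

variable {k : ℕ}

/-- The `i`-th diagonal block of a nest `N`, the orthogonal difference of consecutive terms. -/
abbrev nestBlock (N : Fin (k + 1) → Submodule 𝕜 H) (i : Fin k) : Submodule 𝕜 H :=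
  N i.succ ⊓ (N i.castSucc)ᗮ

variable {N : Fin (k + 1) → Submodule 𝕜 H}

theorem isOrtho_nestBlock (hN : Monotone N) {i j : Fin k} (hij : i ≠ j) :
    nestBlock N i ⟂ nestBlock N j := by
  wlog h : i < j generalizing i j
  · exact (this hij.symm (hij.lt_or_gt.resolve_left h)).symm
  have hle : N i.succ ≤ N j.castSucc := hN (Fin.succ_le_castSucc_iff.2 h)
  exact Submodule.IsOrtho.mono (inf_le_left.trans hle) inf_le_right
    (Submodule.isOrtho_orthogonal_right _)

variable [∀ i, CompleteSpace (N i)]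

theorem sum_starProjection_nestBlock (hN : Monotone N) (hbot : N 0 = ⊥)
    (htop : N (Fin.last k) = ⊤) : ∑ i, (nestBlock N i).starProjection = 1 := by
  let P (i : Fin (k + 1)) : H →L[𝕜] H := (N i).starProjection
  calc ∑ i, (nestBlock N i).starProjection
      = ∑ i : Fin k, P i.succ - ∑ i : Fin k, P i.castSucc := by
        rw [← Finset.sum_sub_distrib]
        exact Finset.sum_congr rfl fun i _ =>
          starProjection_inf_orthogonal (hN (Fin.castSucc_le_succ i))
    _ = P (Fin.last k) - P 0 := by
        rw [sub_eq_sub_iff_add_eq_add, add_comm, ← Fin.sum_univ_succ, Fin.sum_univ_castSucc,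
          add_comm]
    _ = 1 := by
        ext x
        have hlast : P (Fin.last k) x = x :=
          Submodule.starProjection_eq_self_iff.2 (htop ▸ Submodule.mem_top)
        have hzero : P 0 x = 0 :=
          (Submodule.starProjection_apply_eq_zero_iff _).2 (by simp [hbot])
        rw [sub_apply, hlast, hzero, sub_zero, one_apply_eq_self]

theorem subtypeL_comp_comp_mem_nestAlgebra (hN : Monotone N) (i : Fin k)
    (T : nestBlock N i →L[𝕜] nestBlock N i) :
    (nestBlock N i).subtypeL ∘L T ∘L (nestBlock N i).orthogonalProjectionOnto ∈ nestAlgebra N := by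
  refine mem_nestAlgebra.2 fun j x hx => ?_
  obtain h | h := le_or_gt j i.castSucc
  · have hx0 : (nestBlock N i).orthogonalProjectionOnto x = 0 :=
      Submodule.orthogonalProjectionOnto_eq_zero_iff.2 <|
        Submodule.orthogonal_le inf_le_right ((N i.castSucc).le_orthogonal_orthogonal (hN h hx))
    simp [hx0]
  · exact hN (Fin.castSucc_lt_iff_succ_le.1 h) (T _).2.1

/-- The embedding of the operators on the `i`-th block into the nest algebra, as operators vanishing
on the orthogonal complement of the block. -/
noncomputable def nestIncl (hN : Monotone N) (i : Fin k) :
    (nestBlock N i →L[𝕜] nestBlock N i) →ₙₐ[𝕜] nestAlgebra N where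
  toFun T := ⟨_, subtypeL_comp_comp_mem_nestAlgebra hN i T⟩
  map_smul' r T := by ext; simp
  map_zero' := by ext; simp
  map_add' S T := by ext; simp
  map_mul' S T := by ext; simp

theorem coe_nestIncl (hN : Monotone N) (i : Fin k) (T : nestBlock N i →L[𝕜] nestBlock N i) :
    (nestIncl hN i T : H →L[𝕜] H) =
      (nestBlock N i).subtypeL ∘L T ∘L (nestBlock N i).orthogonalProjectionOnto :=
  rfl

theorem coe_nestIncl_one (hN : Monotone N) (i : Fin k) :
    (nestIncl hN i 1 : H →L[𝕜] H) = (nestBlock N i).starProjection :=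
  rfl

theorem completeOrthogonalIdempotents_nestIncl_one (hN : Monotone N) (hbot : N 0 = ⊥)
    (htop : N (Fin.last k) = ⊤) : CompleteOrthogonalIdempotents fun i => nestIncl hN i 1 := by
  refine CompleteOrthogonalIdempotents.iff_ortho_complete.2 ⟨fun i j hij => Subtype.ext ?_,
    Subtype.ext ?_⟩
  · exact (isOrtho_nestBlock hN hij).starProjection_comp_starProjection
  · simpa [coe_nestIncl_one] using sum_starProjection_nestBlock hN hbot htop

theorem nestIncl_one_mul_mul_nestIncl_one (hN : Monotone N) {i j : Fin k} (hji : j < i)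
    (T : nestAlgebra N) : nestIncl hN i 1 * T * nestIncl hN j 1 = 0 := by
  ext x
  have hx : (T : H →L[𝕜] H) ((nestBlock N j).starProjection x) ∈ N j.succ :=
    mem_nestAlgebra.1 T.2 _ _ ((nestBlock N j).starProjection_apply_mem x).1
  refine (Submodule.starProjection_apply_eq_zero_iff _).2 ?_
  exact Submodule.orthogonal_le inf_le_right <|
    (N i.castSucc).le_orthogonal_orthogonal (hN (Fin.succ_le_castSucc_iff.2 hji) hx)

noncomputable abbrev nestBlockTriangularization (hN : Monotone N) (hbot : N 0 = ⊥)
    (htop : N (Fin.last k) = ⊤) :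
    BlockTriangularization 𝕜 (nestAlgebra N) fun i => nestBlock N i →L[𝕜] nestBlock N i where
  p i := nestIncl hN i 1
  complete := completeOrthogonalIdempotents_nestIncl_one hN hbot htop
  mul_mul_eq_zero := nestIncl_one_mul_mul_nestIncl_one hN
  incl := nestIncl hN
  continuous_incl i := Continuous.subtype_mk
    (continuous_const.clm_comp (continuous_id.clm_comp continuous_const)) _
  compress i :=
    { toFun T := (nestBlock N i).orthogonalProjectionOnto ∘L (T : H →L[𝕜] H) ∘L
        (nestBlock N i).subtypeL
      map_add' S T := by ext; simp
      map_smul' r T := by ext; simp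
      cont := continuous_const.clm_comp (continuous_subtype_val.clm_comp continuous_const) }
  compress_incl i T := by ext; simp [coe_nestIncl]
  incl_compress i T := rfl

end NestAlgebra

set_option synthInstance.maxHeartbeats 1000000 in
/-- Every finite nest algebra on a complex Hilbert space is two-sided zero product
determined.  A finite nest is a finite chain `{0} = N₀ ⊊ N₁ ⊊ ⋯ ⊊ N_k = H` of closed
subspaces, and the nest algebra (realized as the subalgebra `S ≤ B(H)`) consists of
all operators leaving each `Nᵢ` invariant. -/
theorem finite_nest_algebra_two_sided_zpd (H : Type*) [NormedAddCommGroup H]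
    [InnerProductSpace ℂ H] [CompleteSpace H]
    (k : ℕ) (N : Fin (k + 1) → Submodule ℂ H)
    (hclosed : ∀ i, IsClosed ((N i : Submodule ℂ H) : Set H))
    (hmono : StrictMono N) (hbot : N 0 = ⊥) (htop : N (Fin.last k) = ⊤)
    (S : Subalgebra ℂ (H →L[ℂ] H))
    (hS : ∀ T : H →L[ℂ] H, T ∈ S ↔ ∀ i, ∀ x ∈ N i, T x ∈ N i) :
    TwoSidedZeroProductDetermined ↥S := by
  have hcomplete (i : Fin (k + 1)) : CompleteSpace (N i) := (hclosed i).completeSpace_coe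
  obtain rfl : S = nestAlgebra N := Subalgebra.ext hS
  have P := nestBlockTriangularization hmono.monotone hbot htop
  have hW : WeaklyAmenable ℂ (nestAlgebra N) :=
    P.weaklyAmenable fun i => weaklyAmenable_continuousLinearMap ℂ (nestBlock N i)
  have hI : GeneratedByIdempotents ℂ (nestAlgebra N) :=
    P.generatedByIdempotents fun i => generatedByIdempotents_continuousLinearMap ℂ (nestBlock N i)
  exact hW.twoSidedZeroProductDetermined hI
end
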